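/- arXiv:2205.07498 — 2 statements merged into one kernel-verified Lean document; each statement's English description precedes it below -/
import Mathlib

section
/- If H is a 4-critical graph, then 3|E(H)| ≥ 5|V(H)| − 2. Moreover, if H is additionally not a 4-Ore graph, then 3|E(H)| ≥ 5|V(H)| − 1. -/
/-!
For a vertex set `S` of a graph `K` let the potential `pot K S` be `5 |S|` minus three times the
number of edges inside `S`. The claim is that a 4-critical graph has potential at most `2`, and at
most `1` unless it is 4-Ore. Following the potential method of Kostochka and Yancey, this is proved
by induction on the number of vertices, in the strengthened form `Good`: a critical graph of
potential `2` is 4-Ore, and away from any of its vertices it contains either a set of potential at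
most `5` or a triangle of vertices of degree three (`Emerald`).

The basic operation is to colour a proper subset `R` of a critical graph and to replace `R` by a
triangle of its colour classes (`contr`). The result is not 3-colourable, so it contains a smaller
critical graph, to which induction applies. Undoing the replacement shows that a certain larger set
of the original graph has potential at most `pot R + 2 - 5` (`pot_contr`).

* If some proper subset with at least two vertices has potential at most `5`, take a smallest one,
  `R`, of least potential. The inequality above must be tight: for every colouring of `R` the
  larger set is the whole graph, and a single vertex of the triangle is used. Hence every colouring
  of `R` is constant on the boundary of `R`. By `no_three_forced` the boundary then consists of two
  vertices. Joining them turns `R` into a critical graph of potential `2`, and identifying them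
  turns the rest into another one, so the graph is an Ore sum of 4-Ore graphs
  (`good_of_small_subset`, `isOreSum_of_sep`).
* If all proper subsets with at least two vertices have potential at least `6`, those of size at
  least four and potential `6` miss only one vertex (`card_sdiff_eq_one`). It follows that no
  triangle contains two vertices of degree three (`no_triangle`), whereas for adjacent `x`, `y` of
  degree three the two other neighbours of `x` are adjacent (`other_nbrs_adj`). So a vertex of
  degree three has at most one neighbour of degree three, and counting edges between vertices of
  degree three and the others gives average degree at least `10 / 3` (`pot_le_one`).
-/

open scoped Classical

/-- `G` is 2-connected: at least 3 vertices, connected, and connected after deleting any vertex. -/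
def TwoConnected {V : Type} [Fintype V] (G : SimpleGraph V) : Prop :=
  3 ≤ Fintype.card V ∧ G.Connected ∧ ∀ v : V, (G.induce {u | u ≠ v}).Connected

/-- The Ore sum of `H₁` and `H₂`: the vertex `z` of `H₁` is split into two vertices, identified
with the ends `x₂`, `y₂` of a deleted edge of `H₂`; each edge `wz` of `H₁` is redirected to
`x₂` or `y₂` according to `s w` (`true` ↦ `x₂`, `false` ↦ `y₂`). -/
def oreSumGraph {V₁ V₂ : Type} (H₁ : SimpleGraph V₁) (H₂ : SimpleGraph V₂)
    (z : V₁) (x₂ y₂ : V₂) (s : V₁ → Bool) :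
    SimpleGraph ({v : V₁ // v ≠ z} ⊕ V₂) :=
  SimpleGraph.fromRel (fun a b =>
    match a, b with
    | Sum.inl a, Sum.inl b => H₁.Adj a.1 b.1
    | Sum.inr a, Sum.inr b => H₂.Adj a b ∧ ¬(a = x₂ ∧ b = y₂) ∧ ¬(a = y₂ ∧ b = x₂)
    | Sum.inl a, Sum.inr b =>
        H₁.Adj a.1 z ∧ ((s a.1 = true ∧ b = x₂) ∨ (s a.1 = false ∧ b = y₂))
    | Sum.inr _, Sum.inl _ => False)

/-- `H` is an Ore sum of the 2-connected graphs `H₁` and `H₂`: for some choice of the split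
vertex `z` of `H₁`, the deleted edge `x₂y₂` of `H₂` and the distribution `s` of the edges at `z`
(leaving neither of the two split vertices isolated), `H` is isomorphic to the resulting graph. -/
def IsOreSum {W V₁ V₂ : Type} [Fintype V₁] [Fintype V₂]
    (H : SimpleGraph W) (H₁ : SimpleGraph V₁) (H₂ : SimpleGraph V₂) : Prop :=
  TwoConnected H₁ ∧ TwoConnected H₂ ∧
  ∃ (z : V₁) (x₂ y₂ : V₂) (s : V₁ → Bool),
    H₂.Adj x₂ y₂ ∧
    (∃ w, H₁.Adj w z ∧ s w = true) ∧
    (∃ w, H₁.Adj w z ∧ s w = false) ∧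
    Nonempty (H ≃g oreSumGraph H₁ H₂ z x₂ y₂ s)

/-- A graph is `4`-Ore if it can be obtained from copies of `K₄` by repeated Ore sums. -/
inductive IsFourOre : ∀ (V : Type) [Fintype V] [DecidableEq V], SimpleGraph V → Prop
  | k4 (V : Type) [Fintype V] [DecidableEq V] (G : SimpleGraph V)
      (h : Nonempty (G ≃g (⊤ : SimpleGraph (Fin 4)))) : IsFourOre V G
  | ore (V₁ V₂ W : Type) [Fintype V₁] [DecidableEq V₁] [Fintype V₂] [DecidableEq V₂]
      [Fintype W] [DecidableEq W]
      (H₁ : SimpleGraph V₁) (H₂ : SimpleGraph V₂) (H : SimpleGraph W)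
      (h₁ : IsFourOre V₁ H₁) (h₂ : IsFourOre V₂ H₂)
      (h : IsOreSum H H₁ H₂) : IsFourOre W H

/-- `H` is 4-critical: its chromatic number is `4` and every proper subgraph is 3-colorable. -/
def FourCritical {V : Type} [Fintype V] (H : SimpleGraph V) : Prop :=
  H.chromaticNumber = 4 ∧ ∀ H' : H.Subgraph, H' ≠ ⊤ → H'.coe.Colorable 3

/-! ### Edge counts and potentials of vertex sets -/

/-- The number of ordered pairs in `A × B` that are adjacent in `K`. -/
noncomputable def bip {U : Type} (K : SimpleGraph U) (A B : Finset U) : ℤ :=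
  ∑ a ∈ A, ∑ b ∈ B, if K.Adj a b then 1 else 0

/-- The number of edges of `K` inside `S`, as half the number of ordered adjacent pairs. -/
noncomputable def ed {U : Type} (K : SimpleGraph U) (S : Finset U) : ℤ := bip K S S / 2

/-- The number of neighbours of `a` in `B`. -/
noncomputable def dg {U : Type} (K : SimpleGraph U) (a : U) (B : Finset U) : ℤ :=
  ∑ b ∈ B, if K.Adj a b then 1 else 0

/-- The potential `5|S| - 3|E(K[S])|` of a vertex set. -/
noncomputable def pot {U : Type} (K : SimpleGraph U) (S : Finset U) : ℤ :=
  5 * (S.card : ℤ) - 3 * ed K S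

section Counting

variable {U : Type} {K K' : SimpleGraph U} {A B C S : Finset U}

lemma bip_eq_sum_dg : bip K A B = ∑ a ∈ A, dg K a B := rfl

lemma bip_comm : bip K A B = bip K B A := by
  unfold bip
  rw [Finset.sum_comm]
  simp only [K.adj_comm]

lemma dg_eq_card (a : U) : dg K a B = ((B.filter (fun b => K.Adj a b)).card : ℤ) := by
  simp [dg]

lemma dg_nonneg (a : U) : 0 ≤ dg K a B := by
  rw [dg_eq_card]; positivity

lemma bip_union_left (h : Disjoint A B) : bip K (A ∪ B) C = bip K A C + bip K B C :=
  Finset.sum_union h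

lemma bip_union_right (h : Disjoint B C) : bip K A (B ∪ C) = bip K A B + bip K A C := by
  rw [bip_comm, bip_union_left h, bip_comm, bip_comm (A := C)]

lemma dg_union (a : U) (h : Disjoint B C) : dg K a (B ∪ C) = dg K a B + dg K a C :=
  Finset.sum_union h

lemma bip_singleton (a : U) : bip K {a} B = dg K a B := by simp [bip, dg]

lemma dg_insert (a b : U) (h : b ∉ B) :
    dg K a (insert b B) = (if K.Adj a b then 1 else 0) + dg K a B :=
  Finset.sum_insert h

lemma dg_mono (a : U) (hs : B ⊆ C) (h : ∀ b ∈ B, K.Adj a b → K'.Adj a b) :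
    dg K a B ≤ dg K' a C := by
  rw [dg_eq_card, dg_eq_card]
  norm_cast
  apply Finset.card_le_card
  intro b hb
  simp only [Finset.mem_filter] at hb ⊢
  exact ⟨hs hb.1, h b hb.1 hb.2⟩

lemma dg_congr (a : U) (h : ∀ b ∈ B, K.Adj a b ↔ K'.Adj a b) : dg K a B = dg K' a B :=
  le_antisymm (dg_mono a subset_rfl fun b hb => (h b hb).1)
    (dg_mono a subset_rfl fun b hb => (h b hb).2)

lemma dg_le_card (a : U) : dg K a B ≤ B.card := by
  rw [dg_eq_card]; exact_mod_cast Finset.card_filter_le _ _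

lemma bip_self_even (K : SimpleGraph U) (S : Finset U) : Even (bip K S S) := by
  induction S using Finset.induction_on with
  | empty => simp [bip]
  | insert a s ha ih =>
    have hd : Disjoint ({a} : Finset U) s := by simpa using ha
    rw [Finset.insert_eq, bip_union_left hd, bip_union_right hd, bip_union_right hd,
      bip_comm (A := s) (B := {a})]
    have : bip K {a} {a} = 0 := by simp [bip]
    rw [this]
    obtain ⟨k, hk⟩ := ih
    exact ⟨bip K {a} s + k, by rw [hk]; ring⟩

lemma bip_self (K : SimpleGraph U) (S : Finset U) : bip K S S = 2 * ed K S := by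
  obtain ⟨k, hk⟩ := bip_self_even K S
  unfold ed; omega

lemma pot_union (h : Disjoint A B) : pot K (A ∪ B) = pot K A + pot K B - 3 * bip K A B := by
  have h1 := bip_self K (A ∪ B)
  rw [bip_union_left h, bip_union_right h, bip_union_right h, bip_comm (A := B) (B := A),
    bip_self, bip_self] at h1
  unfold pot
  rw [Finset.card_union_of_disjoint h]
  push_cast
  linarith

lemma pot_singleton (a : U) : pot K {a} = 5 := by
  have : bip K {a} {a} = 0 := by simp [bip]
  simp [pot, ed, this]

lemma pot_insert (a : U) (h : a ∉ A) : pot K (insert a A) = pot K A + 5 - 3 * dg K a A := by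
  rw [Finset.insert_eq, pot_union (by simpa using h), pot_singleton, bip_singleton]; ring

lemma pot_erase (a : U) (h : a ∈ A) :
    pot K A = pot K (A.erase a) + 5 - 3 * dg K a (A.erase a) := by
  conv_lhs => rw [← Finset.insert_erase h]
  exact pot_insert a (Finset.notMem_erase a A)

lemma dg_erase_self (a : U) : dg K a (A.erase a) = dg K a A := by
  rw [dg_eq_card, dg_eq_card]
  congr 2
  ext b
  simp only [Finset.mem_filter, Finset.mem_erase]
  exact ⟨fun h => ⟨h.1.2, h.2⟩, fun h => ⟨⟨h.2.ne', h.1⟩, h.2⟩⟩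

lemma pot_mono (h : ∀ a ∈ S, ∀ b ∈ S, K'.Adj a b → K.Adj a b) : pot K S ≤ pot K' S := by
  have : bip K' S S ≤ bip K S S :=
    Finset.sum_le_sum fun a ha => dg_mono a subset_rfl (h a ha)
  rw [bip_self, bip_self] at this
  unfold pot; linarith

lemma pot_congr (h : ∀ a ∈ S, ∀ b ∈ S, K'.Adj a b ↔ K.Adj a b) : pot K S = pot K' S :=
  le_antisymm (pot_mono fun a ha b hb => (h a ha b hb).1)
    (pot_mono fun a ha b hb => (h a ha b hb).2)

lemma pot_strict (h : ∀ a ∈ S, ∀ b ∈ S, K'.Adj a b → K.Adj a b) {a b : U} (ha : a ∈ S)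
    (hb : b ∈ S) (hab : K.Adj a b) (hn : ¬ K'.Adj a b) : pot K S ≤ pot K' S - 3 := by
  have : bip K' S S < bip K S S := by
    apply Finset.sum_lt_sum (fun a ha => dg_mono a subset_rfl (h a ha))
    refine ⟨a, ha, Finset.sum_lt_sum (fun c hc => ?_) ⟨b, hb, by simp [hab, hn]⟩⟩
    have := h a ha c hc
    split_ifs <;> simp_all
  rw [bip_self, bip_self] at this
  unfold pot; omega

/-- A potential can be compared with that of the complete graph. -/
lemma pot_ge (K : SimpleGraph U) (S : Finset U) :
    10 * (S.card : ℤ) - 3 * (S.card * (S.card - 1)) ≤ 2 * pot K S := by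
  have : bip K S S ≤ ∑ a ∈ S, ((S.card : ℤ) - 1) := by
    apply Finset.sum_le_sum
    intro a ha
    change dg K a S ≤ _
    rw [← dg_erase_self]
    refine (dg_le_card a).trans ?_
    rw [Finset.card_erase_of_mem ha]
    have := Finset.card_pos.2 ⟨a, ha⟩
    omega
  rw [bip_self] at this
  simp at this
  unfold pot; linarith

lemma card_ge_four (h2 : 2 ≤ S.card) (h : pot K S ≤ 5) : 4 ≤ S.card := by
  have h1 := pot_ge K S
  by_contra hc
  have : S.card = 2 ∨ S.card = 3 := by omega
  rcases this with h3 | h3 <;> rw [h3] at h1 <;> norm_num at h1 <;> omega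

/-- Adding the edge `ab` (a no-op when `a = b`). -/
lemma addEdge_adj {a b c d : U} : (K ⊔ SimpleGraph.edge a b).Adj c d ↔
    K.Adj c d ∨ (a ≠ b ∧ ((c = a ∧ d = b) ∨ (c = b ∧ d = a))) := by
  simp only [SimpleGraph.sup_adj, SimpleGraph.edge_adj]
  constructor
  · rintro (h | h)
    · exact Or.inl h
    · right
      obtain ⟨h1, h2⟩ := h
      refine ⟨?_, by tauto⟩
      rcases h1 with ⟨rfl, rfl⟩ | ⟨rfl, rfl⟩
      · exact h2
      · exact h2.symm
  · rintro (h | ⟨h1, h⟩)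
    · exact Or.inl h
    · right
      refine ⟨by tauto, ?_⟩
      rcases h with ⟨rfl, rfl⟩ | ⟨rfl, rfl⟩
      · exact h1
      · exact h1.symm

lemma pot_addEdge_of_not {a b : U} (h : ¬ (a ∈ S ∧ b ∈ S)) :
    pot (K ⊔ SimpleGraph.edge a b) S = pot K S := by
  apply pot_congr
  intro c hc d hd
  rw [addEdge_adj]
  constructor
  · exact Or.inl
  · rintro (h1 | ⟨-, ⟨rfl, rfl⟩ | ⟨rfl, rfl⟩⟩)
    · exact h1
    · exact absurd ⟨hc, hd⟩ h
    · exact absurd ⟨hd, hc⟩ h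

lemma pot_addEdge {a b : U} (ha : a ∈ S) (hb : b ∈ S) (hne : a ≠ b) (h : ¬ K.Adj a b) :
    pot (K ⊔ SimpleGraph.edge a b) S = pot K S - 3 := by
  have e1 := pot_erase (K := K) a ha
  have e2 := pot_erase (K := K ⊔ SimpleGraph.edge a b) a ha
  rw [pot_addEdge_of_not (S := S.erase a) (by simp)] at e2
  have hb' : b ∈ S.erase a := Finset.mem_erase.2 ⟨hne.symm, hb⟩
  have hd : dg (K ⊔ SimpleGraph.edge a b) a (S.erase a) = dg K a (S.erase a) + 1 := by
    rw [← Finset.insert_erase hb', dg_insert _ _ (Finset.notMem_erase _ _),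
      dg_insert _ _ (Finset.notMem_erase _ _)]
    have : dg (K ⊔ SimpleGraph.edge a b) a ((S.erase a).erase b) =
        dg K a ((S.erase a).erase b) := by
      apply dg_congr
      intro c hc
      simp only [Finset.mem_erase] at hc
      rw [addEdge_adj]
      have := hc.1
      tauto
    rw [this]
    have h2 : (K ⊔ SimpleGraph.edge a b).Adj a b := addEdge_adj.2 (Or.inr ⟨hne, Or.inl ⟨rfl, rfl⟩⟩)
    rw [if_pos h2, if_neg h]
    ring
  rw [hd] at e2
  linarith

lemma pot_addEdge_ge (a b : U) : pot K S - 3 ≤ pot (K ⊔ SimpleGraph.edge a b) S := by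
  by_cases h : a ∈ S ∧ b ∈ S ∧ a ≠ b ∧ ¬ K.Adj a b
  · rw [pot_addEdge h.1 h.2.1 h.2.2.1 h.2.2.2]
  · have : pot (K ⊔ SimpleGraph.edge a b) S = pot K S := by
      apply pot_congr
      intro c hc d hd
      rw [addEdge_adj]
      constructor
      · exact Or.inl
      · rintro (h1 | ⟨h0, ⟨rfl, rfl⟩ | ⟨rfl, rfl⟩⟩)
        · exact h1
        · by_contra h2; exact h ⟨hc, hd, h0, h2⟩
        · by_contra h2; exact h ⟨hd, hc, h0, fun h3 => h2 h3.symm⟩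
    rw [this]; omega

end Counting

/-! ### Colourings of vertex sets and critical pairs -/

/-- `c` is a proper `3`-colouring of the subgraph of `K` induced on `S`. -/
def Proper {U : Type} (K : SimpleGraph U) (S : Finset U) (c : U → Fin 3) : Prop :=
  ∀ a ∈ S, ∀ b ∈ S, K.Adj a b → c a ≠ c b

/-- The subgraph of `K` induced on `S` is `3`-colourable. -/
def Col {U : Type} (K : SimpleGraph U) (S : Finset U) : Prop := ∃ c, Proper K S c

/-- The subgraph of `K` induced on `S` is 4-critical: it is not `3`-colourable, but becomes so
after the deletion of any vertex or any edge. -/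
def Crit {U : Type} (K : SimpleGraph U) (S : Finset U) : Prop :=
  ¬ Col K S ∧ (∀ v ∈ S, Col K (S.erase v)) ∧
    ∀ a ∈ S, ∀ b ∈ S, K.Adj a b → ∃ c, Proper (K.deleteEdges {s(a, b)}) S c

section Colouring

variable {U : Type} {K K' : SimpleGraph U} {A B C S : Finset U} {c c' : U → Fin 3}

lemma Proper.mono (h : Proper K S c) (hs : A ⊆ S)
    (hk : ∀ a ∈ A, ∀ b ∈ A, K'.Adj a b → K.Adj a b) : Proper K' A c :=
  fun a ha b hb hab => h a (hs ha) b (hs hb) (hk a ha b hb hab)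

lemma Proper.subset (h : Proper K S c) (hs : A ⊆ S) : Proper K A c :=
  h.mono hs fun _ _ _ _ h => h

lemma Proper.perm (h : Proper K S c) (σ : Equiv.Perm (Fin 3)) : Proper K S (fun v => σ (c v)) :=
  fun a ha b hb hab he => h a ha b hb hab (σ.injective he)

lemma Col.mono (h : Col K S) (hs : A ⊆ S)
    (hk : ∀ a ∈ A, ∀ b ∈ A, K'.Adj a b → K.Adj a b) : Col K' A :=
  h.imp fun _ hc => hc.mono hs hk

lemma Crit.col_of_ssubset (h : Crit K S) (hA : A ⊂ S) : Col K A := by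
  obtain ⟨v, hv, hvA⟩ := Finset.exists_of_ssubset hA
  exact (h.2.1 v hv).mono (fun x hx => Finset.mem_erase.2
    ⟨fun e => hvA (e ▸ hx), hA.1 hx⟩) fun _ _ _ _ h => h

/-- Two colourings that agree on the overlap, and have no other adjacency across, combine. -/
lemma Proper.glue (hA : Proper K A c) (hB : Proper K B c') (hag : ∀ v ∈ A, v ∈ B → c v = c' v)
    (hx : ∀ a ∈ A, a ∉ B → ∀ b ∈ B, b ∉ A → ¬ K.Adj a b) :
    Proper K (A ∪ B) (fun v => if v ∈ A then c v else c' v) := by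
  intro a ha b hb hab
  by_cases haA : a ∈ A <;> by_cases hbA : b ∈ A
  · simpa [haA, hbA] using hA a haA b hbA hab
  · have hbB : b ∈ B := (Finset.mem_union.1 hb).resolve_left hbA
    by_cases haB : a ∈ B
    · simpa [haA, hbA, hag a haA haB] using hB a haB b hbB hab
    · exact absurd hab (hx a haA haB b hbB hbA)
  · have haB : a ∈ B := (Finset.mem_union.1 ha).resolve_left haA
    by_cases hbB : b ∈ B
    · simpa [haA, hbA, hag b hbA hbB] using hB a haB b hbB hab
    · exact absurd hab.symm (hx b hbA hbB a haB haA)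
  · have haB : a ∈ B := (Finset.mem_union.1 ha).resolve_left haA
    have hbB : b ∈ B := (Finset.mem_union.1 hb).resolve_left hbA
    simpa [haA, hbA] using hB a haB b hbB hab

/-- Two `3`-colourable sets overlapping in at most one vertex have a colourable union. -/
lemma col_glue_vertex (v : U) (hA : Col K A) (hB : Col K B) (hv : ∀ u ∈ A, u ∈ B → u = v)
    (hx : ∀ a ∈ A, a ∉ B → ∀ b ∈ B, b ∉ A → ¬ K.Adj a b) : Col K (A ∪ B) := by
  obtain ⟨c, hc⟩ := hA
  obtain ⟨d, hd⟩ := hB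
  refine ⟨_, hc.glue (hd.perm (Equiv.swap (d v) (c v))) ?_ hx⟩
  intro u hu hu'
  rw [hv u hu hu']
  simp

lemma exists_perm_two : ∀ a b a' b' : Fin 3, (a = b ↔ a' = b') →
    ∃ σ : Equiv.Perm (Fin 3), σ a = a' ∧ σ b = b' := by decide

/-- Colourings overlapping in two vertices combine, if they give them the same pattern. -/
lemma glue_pair {x y : U} (hA : Proper K A c) (hB : Proper K B c')
    (hv : ∀ u ∈ A, u ∈ B → u = x ∨ u = y) (hpat : c x = c y ↔ c' x = c' y)
    (hx : ∀ a ∈ A, a ∉ B → ∀ b ∈ B, b ∉ A → ¬ K.Adj a b) :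
    ∃ σ : Equiv.Perm (Fin 3), σ (c' x) = c x ∧ σ (c' y) = c y ∧
      Proper K (A ∪ B) (fun v => if v ∈ A then c v else σ (c' v)) := by
  obtain ⟨σ, h1, h2⟩ := exists_perm_two _ _ _ _ hpat.symm
  refine ⟨σ, h1, h2, hA.glue (hB.perm σ) ?_ hx⟩
  intro u hu hu'
  rcases hv u hu hu' with rfl | rfl
  · exact h1.symm
  · exact h2.symm

lemma Proper.extend {v : U} (hc : Proper K A c) (hv : v ∉ A) (k : Fin 3)
    (hk : ∀ b ∈ A, K.Adj v b → c b ≠ k) : Proper K (insert v A) (Function.update c v k) := by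
  intro a ha b hb hab
  have aux : ∀ x ∈ A, Function.update c v k x = c x := fun x hx =>
    Function.update_of_ne (fun e : x = v => hv (e ▸ hx)) _ _
  rcases Finset.mem_insert.1 ha with rfl | ha' <;> rcases Finset.mem_insert.1 hb with rfl | hb'
  · exact absurd hab (K.irrefl)
  · rw [aux b hb', Function.update_self]; exact (hk b hb' hab).symm
  · rw [aux a ha', Function.update_self]; exact hk a ha' hab.symm
  · rw [aux a ha', aux b hb']; exact hc a ha' b hb' hab

/-- A vertex with at most two coloured neighbours can be coloured. -/
lemma Proper.exists_color {v : U} (c : U → Fin 3) (hd : dg K v A ≤ 2) :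
    ∃ k, ∀ b ∈ A, K.Adj v b → c b ≠ k := by
  by_contra hcon
  push Not at hcon
  choose f hf1 hf2 hf3 using hcon
  have hinj : Function.Injective f := fun i j hij => by rw [← hf3 i, ← hf3 j, hij]
  have : (Finset.univ.image f).card ≤ (A.filter (fun b => K.Adj v b)).card := by
    apply Finset.card_le_card
    intro b hb
    obtain ⟨i, -, rfl⟩ := Finset.mem_image.1 hb
    exact Finset.mem_filter.2 ⟨hf1 i, hf2 i⟩
  rw [Finset.card_image_of_injective _ hinj] at this
  rw [dg_eq_card] at hd
  simp at this
  omega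

lemma Crit.three_le_dg (h : Crit K S) {v : U} (hv : v ∈ S) : 3 ≤ dg K v S := by
  by_contra hc
  obtain ⟨c, hcc⟩ := h.2.1 v hv
  obtain ⟨k, hk⟩ := Proper.exists_color (K := K) (A := S.erase v) (v := v) c
    (by rw [dg_erase_self]; omega)
  have := hcc.extend (Finset.notMem_erase v S) k hk
  rw [Finset.insert_erase hv] at this
  exact h.1 ⟨_, this⟩

lemma Crit.nonempty (h : Crit K S) : S.Nonempty := by
  by_contra hc
  rw [Finset.not_nonempty_iff_eq_empty] at hc
  subst hc
  exact h.1 ⟨fun _ => 0, by simp [Proper]⟩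

lemma Crit.four_le_card (h : Crit K S) : 4 ≤ S.card := by
  obtain ⟨v, hv⟩ := h.nonempty
  have h1 := h.three_le_dg hv
  have h2 := dg_le_card (K := K) (B := S.erase v) v
  rw [dg_erase_self, Finset.card_erase_of_mem hv] at h2
  have := Finset.card_pos.2 ⟨v, hv⟩
  omega

/-- Every set that is not `3`-colourable contains a 4-critical subgraph. -/
lemma exists_crit [Finite U] (h : ¬ Col K S) : ∃ S' ⊆ S, ∃ K' ≤ K, Crit K' S' := by
  obtain ⟨S', hS'⟩ := Set.Finite.exists_minimal (s := {T : Finset U | T ⊆ S ∧ ¬ Col K T})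
    (Set.toFinite _) ⟨S, subset_rfl, h⟩
  obtain ⟨K', hK'⟩ := Set.Finite.exists_minimal
    (s := {L : SimpleGraph U | L ≤ K ∧ ¬ Col L S'}) (Set.toFinite _) ⟨K, le_rfl, hS'.1.2⟩
  refine ⟨S', hS'.1.1, K', hK'.1.1, hK'.1.2, ?_, ?_⟩
  · intro v hv
    by_contra hn
    have h1 : S'.erase v ∈ {T : Finset U | T ⊆ S ∧ ¬ Col K T} :=
      ⟨(Finset.erase_subset _ _).trans hS'.1.1, fun hcol => hn (hcol.mono subset_rfl
        fun a _ b _ hab => hK'.1.1 hab)⟩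
    have := hS'.2 h1 (Finset.erase_subset _ _)
    exact Finset.notMem_erase v S' (this hv)
  · intro a ha b hb hab
    by_contra hn
    have h1 : K'.deleteEdges {s(a, b)} ∈ {L : SimpleGraph U | L ≤ K ∧ ¬ Col L S'} :=
      ⟨(SimpleGraph.deleteEdges_le _).trans hK'.1.1, hn⟩
    have h2 := hK'.2 h1 (SimpleGraph.deleteEdges_le _) hab
    rw [SimpleGraph.deleteEdges_adj] at h2
    exact h2.2 rfl

/-- A 4-critical graph is not separated by fewer than two vertices. -/
lemma Crit.two_boundary (h : Crit K S) {R : Finset U} (hR : R ⊂ S) (hne : R.Nonempty)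
    (hR' : R.card ≠ 1) :
    ∃ u₁ ∈ R, ∃ u₂ ∈ R, u₁ ≠ u₂ ∧ (∃ a ∈ S \ R, K.Adj a u₁) ∧ (∃ a ∈ S \ R, K.Adj a u₂) := by
  by_contra hcon
  -- all boundary vertices of `R` coincide with a single vertex `v`
  obtain ⟨v, hvR, hv⟩ : ∃ v ∈ R, ∀ u ∈ R, (∃ a ∈ S \ R, K.Adj a u) → u = v := by
    by_cases hex : ∃ v ∈ R, ∃ a ∈ S \ R, K.Adj a v
    · obtain ⟨v, hvR, hv⟩ := hex
      refine ⟨v, hvR, fun u hu hu' => ?_⟩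
      by_contra hne
      exact hcon ⟨u, hu, v, hvR, hne, hu', hv⟩
    · obtain ⟨v, hvR⟩ := hne
      exact ⟨v, hvR, fun u hu hu' => absurd ⟨u, hu, hu'⟩ hex⟩
  have hB : insert v (S \ R) ⊂ S := by
    refine Finset.ssubset_iff_subset_ne.2 ⟨?_, ?_⟩
    · intro x hx
      rcases Finset.mem_insert.1 hx with rfl | hx
      · exact hR.1 hvR
      · exact (Finset.mem_sdiff.1 hx).1
    · intro he
      have : R = {v} := by
        ext x
        constructor
        · intro hx
          have h1 : x ∈ insert v (S \ R) := by rw [he]; exact hR.1 hx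
          rcases Finset.mem_insert.1 h1 with rfl | h1
          · simp
          · exact absurd hx (Finset.mem_sdiff.1 h1).2
        · intro hx
          rw [Finset.mem_singleton.1 hx]; exact hvR
      rw [this] at hR'
      simp at hR'
  have := col_glue_vertex (K := K) v (h.col_of_ssubset hR) (h.col_of_ssubset hB)
    (by
      intro u hu hu'
      rcases Finset.mem_insert.1 hu' with rfl | h1
      · rfl
      · exact absurd hu (Finset.mem_sdiff.1 h1).2)
    (by
      intro a ha haB b hb hbA hab
      have hb' : b ∈ S \ R := by
        rcases Finset.mem_insert.1 hb with rfl | h1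
        · exact absurd hvR hbA
        · exact h1
      have := hv a ha ⟨b, hb', hab.symm⟩
      exact haB (by rw [this]; simp))
  apply h.1
  refine this.mono ?_ fun _ _ _ _ h => h
  intro x hx
  by_cases hxR : x ∈ R
  · exact Finset.mem_union_left _ hxR
  · exact Finset.mem_union_right _ (Finset.mem_insert_of_mem (Finset.mem_sdiff.2 ⟨hx, hxR⟩))

end Colouring

/-! ### Replacing a coloured set by a triangle -/

/-- The graph obtained from `K` by replacing `R` with a triangle, whose vertex `i` is joined to
every vertex having a neighbour of colour `i` in `R`. The vertices of `R` are kept in the type,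
and are left out of the vertex sets considered. -/
def contr {U : Type} (K : SimpleGraph U) (R : Finset U) (φ : U → Fin 3) :
    SimpleGraph (U ⊕ Fin 3) where
  Adj p q := match p, q with
    | Sum.inl a, Sum.inl b => K.Adj a b
    | Sum.inl a, Sum.inr i => ∃ r ∈ R, φ r = i ∧ K.Adj a r
    | Sum.inr i, Sum.inl a => ∃ r ∈ R, φ r = i ∧ K.Adj a r
    | Sum.inr i, Sum.inr j => i ≠ j
  symm := ⟨by
    rintro (a | i) (b | j) h
    · exact K.adj_symm h
    · exact h
    · exact h
    · exact Ne.symm h⟩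
  loopless := ⟨by
    rintro (a | i) h
    · exact K.irrefl h
    · exact h rfl⟩

/-- The number of triangle vertices in `X` adjacent to `a`. -/
noncomputable def dX {U : Type} (L : SimpleGraph (U ⊕ Fin 3)) (a : U) (X : Finset (Fin 3)) : ℤ :=
  ∑ i ∈ X, if L.Adj (Sum.inl a) (Sum.inr i) then 1 else 0

section Contraction

variable {U : Type} {K : SimpleGraph U} {A B R S : Finset U} {φ : U → Fin 3}
  {L : SimpleGraph (U ⊕ Fin 3)} {X : Finset (Fin 3)}

lemma dg_disjSum (a : U) :
    dg L (Sum.inl a) (A.disjSum X) = dg (L.comap Sum.inl) a A + dX L a X := by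
  unfold dg dX
  rw [Finset.sum_disjSum]
  simp only [SimpleGraph.comap_adj]

lemma pot_disjSum : pot L (A.disjSum X) =
    pot (L.comap Sum.inl) A + pot (L.comap Sum.inr) X - 3 * ∑ a ∈ A, dX L a X := by
  have h1 := bip_self L (A.disjSum X)
  have h2 := bip_self (L.comap Sum.inl) A
  have h3 := bip_self (L.comap Sum.inr) X
  have h4 : bip L (A.disjSum X) (A.disjSum X) =
      bip (L.comap Sum.inl) A A + bip (L.comap Sum.inr) X X + 2 * ∑ a ∈ A, dX L a X := by
    have e : ∑ i ∈ X, ∑ a ∈ A, (if L.Adj (Sum.inr i) (Sum.inl a) then (1 : ℤ) else 0) =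
        ∑ a ∈ A, dX L a X := by
      rw [Finset.sum_comm]
      simp only [L.adj_comm (Sum.inr _) (Sum.inl _)]
      rfl
    unfold bip
    simp only [Finset.sum_disjSum, Finset.sum_add_distrib, SimpleGraph.comap_adj]
    rw [e]
    simp only [dX]
    ring
  unfold pot
  rw [Finset.card_disjSum]
  push_cast
  linarith

lemma dX_le (hL : L ≤ contr K R φ) (a : U) : dX L a X ≤ dg K a R := by
  rw [dg_eq_card]
  have : dX L a X = ((X.filter (fun i => L.Adj (Sum.inl a) (Sum.inr i))).card : ℤ) := by
    simp [dX]
  rw [this]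
  norm_cast
  refine (Finset.card_le_card (t := (R.filter (fun b => K.Adj a b)).image φ) ?_).trans
    Finset.card_image_le
  intro i hi
  obtain ⟨r, hr, h1, h2⟩ := hL (Finset.mem_filter.1 hi).2
  exact Finset.mem_image.2 ⟨r, Finset.mem_filter.2 ⟨hr, h2⟩, h1⟩

lemma pot_top (X : Finset (Fin 3)) : (X.card = 0 → pot (⊤ : SimpleGraph (Fin 3)) X = 0) ∧
    (X.card = 1 → pot (⊤ : SimpleGraph (Fin 3)) X = 5) ∧
    (X.card = 2 → pot (⊤ : SimpleGraph (Fin 3)) X = 7) ∧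
    (X.card = 3 → pot (⊤ : SimpleGraph (Fin 3)) X = 6) := by
  have h : bip (⊤ : SimpleGraph (Fin 3)) X X = X.card * (X.card - 1) := by
    have : ∀ a ∈ X, dg (⊤ : SimpleGraph (Fin 3)) a X = (X.card : ℤ) - 1 := by
      intro a ha
      unfold dg
      refine (Finset.sum_congr rfl (g := fun b => 1 - if a = b then (1 : ℤ) else 0)
        fun b _ => ?_).trans ?_
      · by_cases h : a = b <;> simp [h]
      · rw [Finset.sum_sub_distrib, Finset.sum_ite_eq, if_pos ha]
        simp
    rw [bip_eq_sum_dg, Finset.sum_congr rfl this, Finset.sum_const, nsmul_eq_mul]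
  rw [bip_self] at h
  unfold pot
  refine ⟨?_, ?_, ?_, ?_⟩ <;> intro hc <;> rw [hc] at h ⊢ <;> norm_num at h ⊢ <;> omega

/-- Undoing the replacement changes potentials by `pot R - pot X`, up to lost edges. -/
lemma pot_contr (hL : L ≤ contr K R φ) (hd : Disjoint A R) :
    pot K (A ∪ R) ≤ pot L (A.disjSum X) - pot (⊤ : SimpleGraph (Fin 3)) X + pot K R := by
  rw [pot_union hd, pot_disjSum]
  have h1 : pot K A ≤ pot (L.comap Sum.inl) A := pot_mono fun a _ b _ h => hL h
  have h2 : pot (⊤ : SimpleGraph (Fin 3)) X ≤ pot (L.comap Sum.inr) X :=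
    pot_mono fun a _ b _ h => h.ne
  have h3 : ∑ a ∈ A, dX L a X ≤ bip K A R := Finset.sum_le_sum fun a _ => dX_le hL a
  linarith

/-- If the inequality of `pot_contr` is tight, no edge was lost. -/
lemma pot_contr_tight (hL : L ≤ contr K R φ) (hd : Disjoint A R)
    (ht : pot L (A.disjSum X) - pot (⊤ : SimpleGraph (Fin 3)) X + pot K R - 3 < pot K (A ∪ R)) :
    (∀ a ∈ A, dX L a X = dg K a R) ∧
    (∀ a ∈ A, ∀ b ∈ A, L.Adj (Sum.inl a) (Sum.inl b) ↔ K.Adj a b) ∧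
    (∀ i ∈ X, ∀ j ∈ X, i ≠ j → L.Adj (Sum.inr i) (Sum.inr j)) := by
  rw [pot_union hd, pot_disjSum] at ht
  have m1 : ∀ a ∈ A, ∀ b ∈ A, (L.comap Sum.inl).Adj a b → K.Adj a b := fun a _ b _ h => hL h
  have m2 : ∀ a ∈ X, ∀ b ∈ X, (L.comap Sum.inr).Adj a b → (⊤ : SimpleGraph (Fin 3)).Adj a b :=
    fun a _ b _ h => h.ne
  have h1 := pot_mono m1
  have h2 := pot_mono m2
  have h3 : ∑ a ∈ A, dX L a X ≤ bip K A R := Finset.sum_le_sum fun a _ => dX_le hL a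
  refine ⟨?_, ?_, ?_⟩
  · intro a ha
    by_contra hne
    have : ∑ a ∈ A, dX L a X < bip K A R :=
      Finset.sum_lt_sum (fun a _ => dX_le hL a) ⟨a, ha, lt_of_le_of_ne (dX_le hL a) hne⟩
    omega
  · intro a ha b hb
    refine ⟨m1 a ha b hb, fun hk => ?_⟩
    by_contra hn
    have := pot_strict m1 ha hb hk hn
    omega
  · intro i hi j hj hij
    by_contra hn
    have := pot_strict m2 hi hj hij hn
    omega

lemma not_col_contr (hφ : Proper K R φ)
    (hno : ∀ c, Proper K S c → ¬ ∀ r ∈ R, c r = φ r) :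
    ¬ Col (contr K R φ) ((S \ R).disjSum Finset.univ) := by
  rintro ⟨c, hc⟩
  have hinj : Function.Injective (fun i => c (Sum.inr i)) := by
    intro i j hij
    by_contra hne
    exact hc _ (Finset.inr_mem_disjSum.2 (Finset.mem_univ i)) _
      (Finset.inr_mem_disjSum.2 (Finset.mem_univ j)) hne hij
  let σ : Equiv.Perm (Fin 3) := Equiv.ofBijective _ (Finite.injective_iff_bijective.1 hinj)
  have hσ : ∀ i, σ.symm (c (Sum.inr i)) = i := fun i => σ.symm_apply_apply i
  have key : ∀ a ∈ S, a ∉ R → ∀ r ∈ R, K.Adj a r → σ.symm (c (Sum.inl a)) ≠ φ r := by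
    intro a ha haR r hr har he
    rw [← hσ (φ r)] at he
    exact hc _ (Finset.inl_mem_disjSum.2 (Finset.mem_sdiff.2 ⟨ha, haR⟩)) _
      (Finset.inr_mem_disjSum.2 (Finset.mem_univ (φ r))) ⟨r, hr, rfl, har⟩ (σ.symm.injective he)
  refine hno (fun v => if v ∈ R then φ v else σ.symm (c (Sum.inl v))) ?_ (fun r hr => by simp [hr])
  intro a ha b hb hab
  by_cases haR : a ∈ R <;> by_cases hbR : b ∈ R
  · simpa [haR, hbR] using hφ a haR b hbR hab
  · simpa [haR, hbR] using (key b hb hbR a haR hab.symm).symm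
  · simpa [haR, hbR] using key a ha haR b hbR hab
  · have := hc _ (Finset.inl_mem_disjSum.2 (Finset.mem_sdiff.2 ⟨ha, haR⟩)) _
      (Finset.inl_mem_disjSum.2 (Finset.mem_sdiff.2 ⟨hb, hbR⟩)) hab
    simpa [haR, hbR] using this

/-- If a colouring of `R` does not extend to `S`, then a 4-critical graph arises from part of
`S \ R` and some vertices of the triangle replacing `R`. -/
lemma exists_crit_contr [Finite U] (hR : R ⊆ S) (hφ : Proper K R φ)
    (hno : ∀ c, Proper K S c → ¬ ∀ r ∈ R, c r = φ r) :
    ∃ A ⊆ S \ R, ∃ X : Finset (Fin 3), ∃ L ≤ contr K R φ, Crit L (A.disjSum X) ∧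
      (A.disjSum X).card + R.card ≤ S.card + 3 := by
  obtain ⟨S', hS', L, hL, hcrit⟩ := exists_crit (not_col_contr hφ hno)
  rw [← Finset.toLeft_disjSum_toRight (u := S')] at hcrit
  have hA : S'.toLeft ⊆ S \ R := by
    intro a ha
    exact Finset.inl_mem_disjSum.1 (hS' (Finset.mem_toLeft.1 ha))
  refine ⟨_, hA, _, L, hL, hcrit, ?_⟩
  rw [Finset.card_disjSum]
  have h1 := Finset.card_le_card hA
  have h2 := Finset.card_le_univ S'.toRight
  rw [Finset.card_sdiff_of_subset hR] at h1
  have h3 := Finset.card_le_card hR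
  simp at h2
  omega

lemma X_nonempty (hL : L ≤ contr K R φ) (hcrit : Crit L (A.disjSum X)) (hcol : Col K A) :
    X.Nonempty := by
  by_contra hne
  rw [Finset.not_nonempty_iff_eq_empty] at hne
  subst hne
  obtain ⟨c, hc⟩ := hcol
  apply hcrit.1
  refine ⟨Sum.elim c (fun _ => 0), ?_⟩
  rintro (a | i) ha (b | j) hb hab
  · exact hc a (Finset.inl_mem_disjSum.1 ha) b (Finset.inl_mem_disjSum.1 hb) (hL hab)
  · simp at hb
  · simp at ha
  · simp at ha

end Contraction

/-! ### The strengthened statement for critical graphs -/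

/-- A separation of `K[S]` at a nonadjacent pair `x, y` into a part `B` of potential `5` and a
part in which `x` and `y` never receive the same colour; this is the trace of an Ore sum. -/
def Decomp {U : Type} (K : SimpleGraph U) (S : Finset U) : Prop :=
  ∃ B ⊂ S, ∃ x ∈ B, ∃ y ∈ B, x ≠ y ∧ ¬ K.Adj x y ∧
    (∀ a ∈ B, ∀ b ∈ S \ B, K.Adj a b → a = x ∨ a = y) ∧ pot K B = 5 ∧
    ∀ c, Proper K (insert x (insert y (S \ B))) c → c x ≠ c y

/-- Away from every vertex of `S` there is a set of potential at most `5` (a generalised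
diamond), or a triangle all of whose vertices have degree `3` (an emerald). -/
def Emerald {U : Type} (K : SimpleGraph U) (S : Finset U) : Prop :=
  ∀ w ∈ S, ∃ T ⊆ S, w ∉ T ∧ ((2 ≤ T.card ∧ pot K T ≤ 5) ∨
    (T.card = 3 ∧ (∀ a ∈ T, ∀ b ∈ T, a ≠ b → K.Adj a b) ∧ ∀ a ∈ T, dg K a S = 3))

/-- The graph induced on `S`, as a graph on the subtype, is 4-Ore. -/
def OreOn {U : Type} (K : SimpleGraph U) (S : Finset U) : Prop :=
  IsFourOre S (K.comap (fun v : S => (v : U)))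

/-- What is proved about every critical `K[S]` by induction: either the potential is at most `1`,
or `K[S]` is a 4-Ore graph of potential `2`, with the structure that the induction needs. -/
def Good {U : Type} (K : SimpleGraph U) (S : Finset U) : Prop :=
  pot K S ≤ 1 ∨ (pot K S = 2 ∧ OreOn K S ∧ (S.card = 4 ∨ Decomp K S) ∧ Emerald K S)

/-- The induction hypothesis: critical graphs on fewer than `n` vertices are `Good`. -/
def SmallGood (n : ℕ) : Prop :=
  ∀ (U : Type) [Finite U] (K : SimpleGraph U) (S : Finset U), S.card < n → Crit K S → Good K S

section Forcing

variable {U : Type} {K F : SimpleGraph U} {S R T D : Finset U} {n : ℕ}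

lemma dg_le_of {a : U} (h : ∀ b ∈ R, K.Adj a b → b ∈ T) : dg K a R ≤ T.card := by
  rw [dg_eq_card]
  exact_mod_cast Finset.card_le_card fun b hb =>
    h b (Finset.mem_filter.1 hb).1 (Finset.mem_filter.1 hb).2

lemma mem_of_le_dg {a : U} (h : ∀ b ∈ R, K.Adj a b → b ∈ T) (hc : (T.card : ℤ) ≤ dg K a R) :
    ∀ b ∈ T, b ∈ R ∧ K.Adj a b := by
  rw [dg_eq_card] at hc
  have := Finset.eq_of_subset_of_card_le (s := R.filter (fun b => K.Adj a b)) (t := T)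
    (fun b hb => h b (Finset.mem_filter.1 hb).1 (Finset.mem_filter.1 hb).2) (by exact_mod_cast hc)
  intro b hb
  rw [← this] at hb
  exact Finset.mem_filter.1 hb

lemma Good.le_two (h : Good K S) : pot K S ≤ 2 := by
  rcases h with h | h
  · omega
  · exact h.1.le

/-- A set without small-potential subsets is `3`-colourable. -/
lemma col_of_pot [Finite U] (hn : SmallGood n) (hR : R.card < n)
    (h : ∀ T ⊆ R, 2 ≤ T.card → 3 ≤ pot K T) : Col K R := by
  by_contra hc
  obtain ⟨S', hS', K', hK', hcrit⟩ := exists_crit hc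
  have h1 := (hn U K' S' ((Finset.card_le_card hS').trans_lt hR) hcrit).le_two
  have h2 := h S' hS' (by have := hcrit.four_le_card; omega)
  have h3 : pot K S' ≤ pot K' S' := pot_mono fun a _ b _ hab => hK' hab
  omega

/-- If all subsets have potential at least `6`, two given vertices can be made to differ. -/
lemma col_addEdge [Finite U] (hn : SmallGood n) (hR : R.card < n)
    (h : ∀ T ⊆ R, 2 ≤ T.card → 6 ≤ pot K T) (a b : U) : Col (K ⊔ SimpleGraph.edge a b) R := by
  apply col_of_pot hn hR
  intro T hT h2
  have h1 := h T hT h2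
  have h3 := pot_addEdge_ge (K := K) (S := T) a b
  omega

lemma Proper.of_addEdge {a b : U} {c : U → Fin 3} (h : Proper (K ⊔ SimpleGraph.edge a b) R c) :
    Proper K R c := h.mono subset_rfl fun _ _ _ _ h => Or.inl h

lemma Proper.addEdge_ne {a b : U} {c : U → Fin 3} (h : Proper (K ⊔ SimpleGraph.edge a b) R c)
    (ha : a ∈ R) (hb : b ∈ R) (hab : a ≠ b) : c a ≠ c b :=
  h a ha b hb (addEdge_adj.2 (Or.inr ⟨hab, Or.inl ⟨rfl, rfl⟩⟩))

lemma pot_sep {x y : U} (hx : x ∈ T) (hy : y ∈ T) (hxy : x ≠ y) (hadj : ¬ K.Adj x y)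
    (hTD : Disjoint T D) (hcr : ∀ a ∈ T, ∀ b ∈ D, K.Adj a b → a = x ∨ a = y) :
    pot K (T ∪ D) = pot K T + pot K (insert x (insert y D)) - 10 := by
  have hxyT : ({x, y} : Finset U) ⊆ T := by
    intro z hz
    simp only [Finset.mem_insert, Finset.mem_singleton] at hz
    rcases hz with rfl | rfl <;> assumption
  have hd2 : Disjoint ({x, y} : Finset U) D := Finset.disjoint_of_subset_left hxyT hTD
  have e1 : insert x (insert y D) = {x, y} ∪ D := by
    ext z; simp
  have e2 : bip K {x, y} D = bip K T D := by
    apply Finset.sum_subset hxyT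
    intro a ha hna
    apply Finset.sum_eq_zero
    intro b hb
    rw [if_neg]
    intro hab
    rcases hcr a ha b hb hab with rfl | rfl <;> simp at hna
  have e3 : pot K {x, y} = 10 := by
    rw [pot_insert x (by simpa using hxy), pot_singleton]
    simp [dg, hadj]
  rw [e1, pot_union hTD, pot_union hd2, e2, e3]
  ring

/-- In a minimal set of potential `5`, no three vertices are forced to have the same colour.
The two forced vertices are linked by an added edge, which makes the graph 4-Ore; its
decomposition then shows that a third forced vertex leads to a set of too small potential. -/
lemma no_three_forced [Finite U] (hn : SmallGood n) : ∀ (m : ℕ) (F : SimpleGraph U) (R : Finset U),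
    R.card = m → m < n → pot F R = 5 → (∀ T ⊂ R, 2 ≤ T.card → 6 ≤ pot F T) →
    ∀ u₁ ∈ R, ∀ u₂ ∈ R, ∀ u₃ ∈ R, u₁ ≠ u₂ → u₁ ≠ u₃ → u₂ ≠ u₃ →
    ∃ c, Proper F R c ∧ ¬ (c u₁ = c u₂ ∧ c u₂ = c u₃) := by
  intro m
  induction m using Nat.strong_induction_on with
  | _ m ih =>
  intro F R hRm hmn hpot hsub u₁ h₁ u₂ h₂ u₃ h₃ h12 h13 h23
  by_contra hcon
  have hforce : ∀ c, Proper F R c → c u₁ = c u₂ ∧ c u₂ = c u₃ := by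
    intro c hc
    by_contra hne
    exact hcon ⟨c, hc, hne⟩
  have hsub5 : ∀ T ⊆ R, 2 ≤ T.card → 5 ≤ pot F T := by
    intro T hT h2
    rcases hT.eq_or_ssubset with rfl | hT
    · omega
    · have := hsub T hT h2; omega
  obtain ⟨c₀, hc₀⟩ : Col F R := col_of_pot hn (by omega) fun T hT h2 => by
    have := hsub5 T hT h2; omega
  -- adding the edge `u₁u₂` gives a critical graph
  have hnc : ¬ Col (F ⊔ SimpleGraph.edge u₁ u₂) R := by
    rintro ⟨c, hc⟩
    exact hc.addEdge_ne h₁ h₂ h12 (hforce c hc.of_addEdge).1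
  obtain ⟨S', hS', K', hK', hcrit⟩ := exists_crit hnc
  have hS4 := hcrit.four_le_card
  have hgood := hn U K' S' (by have := Finset.card_le_card hS'; omega) hcrit
  have hle2 := hgood.le_two
  have hKF : ∀ T : Finset U, pot F T - 3 ≤ pot K' T := fun T =>
    (pot_addEdge_ge u₁ u₂).trans (pot_mono fun a _ b _ hab => hK' hab)
  have hSR : S' = R := by
    by_contra hne
    have := hsub S' (Finset.ssubset_iff_subset_ne.2 ⟨hS', hne⟩) (by omega)
    have := hKF S'
    omega
  subst hSR
  have hp2 : pot K' S' = 2 := by have := hKF S'; omega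
  have hn12 : ¬ F.Adj u₁ u₂ := fun h => hc₀ u₁ h₁ u₂ h₂ h (hforce c₀ hc₀).1
  have hK'eq : ∀ a ∈ S', ∀ b ∈ S', K'.Adj a b ↔ (F ⊔ SimpleGraph.edge u₁ u₂).Adj a b := by
    intro a ha b hb
    refine ⟨fun h => hK' h, fun h => ?_⟩
    by_contra hna
    have := pot_strict (K := F ⊔ SimpleGraph.edge u₁ u₂) (K' := K')
      (fun a _ b _ hab => hK' hab) ha hb h hna
    rw [pot_addEdge h₁ h₂ h12 hn12] at this
    omega
  have hFK : ∀ a ∈ S', ∀ b ∈ S', F.Adj a b → K'.Adj a b := fun a ha b hb h =>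
    (hK'eq a ha b hb).2 (Or.inl h)
  have hKF' : ∀ a ∈ S', ∀ b ∈ S', K'.Adj a b → ¬ (a = u₁ ∧ b = u₂) → ¬ (a = u₂ ∧ b = u₁) →
      F.Adj a b := by
    intro a ha b hb h h1 h2
    rcases addEdge_adj.1 ((hK'eq a ha b hb).1 h) with h | ⟨-, h | h⟩
    · exact h
    · exact absurd h h1
    · exact absurd h h2
  rcases hgood with hgood | ⟨-, -, h4 | hdec, -⟩
  · omega
  · -- in `K₄` a third vertex is adjacent to `u₁`
    have h5 := dg_le_card (K := K') (B := S'.erase u₁) u₁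
    have h6 := hcrit.three_le_dg h₁
    rw [← dg_erase_self, dg_eq_card] at h6
    have h7 : (S'.erase u₁).filter (fun b => K'.Adj u₁ b) = S'.erase u₁ := by
      apply Finset.eq_of_subset_of_card_le (Finset.filter_subset _ _)
      rw [Finset.card_erase_of_mem h₁]; omega
    have h8 : u₃ ∈ (S'.erase u₁).filter (fun b => K'.Adj u₁ b) := by
      rw [h7]; exact Finset.mem_erase.2 ⟨h13.symm, h₃⟩
    have h9 := hKF' u₁ h₁ u₃ h₃ (Finset.mem_filter.1 h8).2 (fun h => h23 h.2.symm)
      (fun h => h12 h.1)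
    exact hc₀ u₁ h₁ u₃ h₃ h9 ((hforce c₀ hc₀).1.trans (hforce c₀ hc₀).2)
  obtain ⟨B, hB, x, hx, y, hy, hxy, hnxy, hcr, hpB, hAcol⟩ := hdec
  have hBS := hB.1
  have hxS := hBS hx
  have hyS := hBS hy
  have hnFxy : ¬ F.Adj x y := fun h => hnxy (hFK x hxS y hyS h)
  have hcrF : ∀ a ∈ B, ∀ b ∈ S' \ B, F.Adj a b → a = x ∨ a = y := fun a ha b hb h =>
    hcr a ha b hb (hFK a (hBS ha) b (Finset.mem_sdiff.1 hb).1 h)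
  have hB2 : 2 ≤ B.card := Finset.one_lt_card.2 ⟨x, hx, y, hy, hxy⟩
  have hu12 : u₁ ∈ B ∧ u₂ ∈ B := by
    by_contra hno
    have e : pot F B = pot K' B := by
      apply pot_congr
      intro a ha b hb
      refine ⟨fun h => hKF' a (hBS ha) b (hBS hb) h ?_ ?_, hFK a (hBS ha) b (hBS hb)⟩
      · rintro ⟨rfl, rfl⟩; exact hno ⟨ha, hb⟩
      · rintro ⟨rfl, rfl⟩; exact hno ⟨hb, ha⟩
    have := hsub B hB hB2
    omega
  have hadj12 : K'.Adj u₁ u₂ :=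
    (hK'eq u₁ h₁ u₂ h₂).2 (addEdge_adj.2 (Or.inr ⟨h12, Or.inl ⟨rfl, rfl⟩⟩))
  -- one of `u₁`, `u₂` is not in `{x, y}`
  obtain ⟨w, hwB, hwx, hwy⟩ : ∃ w ∈ B, w ≠ x ∧ w ≠ y := by
    by_contra hno
    push Not at hno
    have q1 := hno u₁ hu12.1
    have q2 := hno u₂ hu12.2
    by_cases e1 : u₁ = x
    · by_cases e2 : u₂ = x
      · exact h12 (e1.trans e2.symm)
      · exact hnxy (e1 ▸ q2 e2 ▸ hadj12)
    · have e1' := q1 e1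
      by_cases e2 : u₂ = x
      · exact hnxy (e1' ▸ e2 ▸ hadj12.symm)
      · exact h12 (e1'.trans (q2 e2).symm)
  set A₀ := insert x (insert y (S' \ B)) with hA₀
  have hA₀S : A₀ ⊆ S' := by
    intro z hz
    simp only [hA₀, Finset.mem_insert, Finset.mem_sdiff] at hz
    rcases hz with rfl | rfl | h
    · exact hxS
    · exact hyS
    · exact h.1
  have hA₀B : ∀ z ∈ A₀, z ∈ B → z = x ∨ z = y := by
    intro z hz hzB
    simp only [hA₀, Finset.mem_insert, Finset.mem_sdiff] at hz
    tauto
  have hxA : x ∈ A₀ := by simp [hA₀]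
  have hyA : y ∈ A₀ := by simp [hA₀]
  have hwA : w ∉ A₀ := fun h => by rcases hA₀B w h hwB with h | h <;> contradiction
  have hA₀ss : A₀ ⊂ S' := Finset.ssubset_iff_subset_ne.2 ⟨hA₀S, fun h => hwA (h ▸ hBS hwB)⟩
  have hA₀sub : ∀ T ⊆ A₀, 2 ≤ T.card → 6 ≤ pot F T := fun T hT =>
    hsub T (hT.trans_ssubset hA₀ss)
  have hdisj : Disjoint B (S' \ B) := Finset.disjoint_sdiff
  have hBun : B ∪ (S' \ B) = S' := Finset.union_sdiff_of_subset hBS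
  have hAxy : ∀ c, Proper F A₀ c → c x ≠ c y := by
    intro c hc
    apply hAcol
    refine hc.mono subset_rfl fun a ha b hb h => ?_
    apply hKF' a (hA₀S ha) b (hA₀S hb) h
    · rintro ⟨rfl, rfl⟩
      rcases hA₀B _ ha hu12.1 with e | e <;> rcases hA₀B _ hb hu12.2 with e' | e'
      · exact h12 (e.trans e'.symm)
      · exact hnxy (e ▸ e' ▸ h)
      · exact hnxy (e ▸ e' ▸ h.symm)
      · exact h12 (e.trans e'.symm)
    · rintro ⟨rfl, rfl⟩
      rcases hA₀B _ ha hu12.2 with e | e <;> rcases hA₀B _ hb hu12.1 with e' | e'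
      · exact h12 (e'.trans e.symm)
      · exact hnxy (e ▸ e' ▸ h)
      · exact hnxy (e ▸ e' ▸ h.symm)
      · exact h12 (e'.trans e.symm)
  have hpFB : pot F B = 8 := by
    have e : pot K' B = pot (F ⊔ SimpleGraph.edge u₁ u₂) B :=
      (pot_congr fun a ha b hb => hK'eq a (hBS ha) b (hBS hb)).symm
    rw [pot_addEdge hu12.1 hu12.2 h12 hn12] at e
    omega
  have hsep : ∀ T ⊆ B, x ∈ T → y ∈ T → pot F (T ∪ S' \ B) = pot F T + pot F A₀ - 10 :=
    fun T hT hxT hyT => pot_sep hxT hyT hxy hnFxy (Finset.disjoint_of_subset_left hT hdisj)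
      fun a ha b hb h => hcrF a (hT ha) b hb h
  have hpA : pot F A₀ = 7 := by
    have := hsep B subset_rfl hx hy
    rw [hBun] at this
    omega
  -- colourings of the two sides combine as soon as both separate `x` from `y`
  have hglue : ∀ c d, Proper F B c → Proper F A₀ d → c x ≠ c y →
      ∃ σ : Equiv.Perm (Fin 3), σ (d x) = c x ∧ σ (d y) = c y ∧
        Proper F S' (fun v => if v ∈ B then c v else σ (d v)) := by
    intro c d hc hd hcxy
    obtain ⟨σ, s1, s2, s3⟩ := glue_pair (K := F) (x := x) (y := y) hc hd
      (fun u hu hu' => hA₀B u hu' hu) (iff_of_false hcxy (hAxy d hd))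
      (fun a ha haA b hb hbB h => by
        have hb' : b ∈ S' \ B := Finset.mem_sdiff.2 ⟨hA₀S hb, hbB⟩
        rcases hcrF a ha b hb' h with rfl | rfl <;> contradiction)
    refine ⟨σ, s1, s2, s3.subset fun v hv => ?_⟩
    by_cases hvB : v ∈ B
    · exact Finset.mem_union_left _ hvB
    · exact Finset.mem_union_right _ (by simp [hA₀, hv, hvB])
  have hc₀xy : c₀ x ≠ c₀ y := hAxy c₀ (hc₀.subset hA₀S)
  by_cases h3B : u₃ ∈ B
  · -- all three vertices lie in `B`: replace the other side by the edge `xy`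
    obtain ⟨c, hc, hcne⟩ := ih B.card (by have := Finset.card_lt_card hB; omega)
      (F ⊔ SimpleGraph.edge x y) B rfl (by have := Finset.card_lt_card hB; omega)
      (by rw [pot_addEdge hx hy hxy hnFxy]; omega)
      (by
        intro T hT h2
        by_cases hTxy : x ∈ T ∧ y ∈ T
        · rw [pot_addEdge hTxy.1 hTxy.2 hxy hnFxy]
          have e := hsep T hT.1 hTxy.1 hTxy.2
          have := hsub (T ∪ S' \ B) (Finset.ssubset_iff_subset_ne.2
            ⟨Finset.union_subset (hT.1.trans hBS) Finset.sdiff_subset, by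
              intro he
              obtain ⟨z, hz, hzT⟩ := Finset.exists_of_ssubset hT
              have : z ∈ T ∪ S' \ B := by rw [he]; exact hBS hz
              rcases Finset.mem_union.1 this with h | h
              · exact hzT h
              · exact (Finset.mem_sdiff.1 h).2 hz⟩)
            (h2.trans (Finset.card_le_card Finset.subset_union_left))
          omega
        · rw [pot_addEdge_of_not hTxy]
          exact hsub T (hT.trans hB) h2)
      u₁ hu12.1 u₂ hu12.2 u₃ h3B h12 h13 h23
    obtain ⟨σ, -, -, s⟩ := hglue c c₀ hc.of_addEdge (hc₀.subset hA₀S) (hc.addEdge_ne hx hy hxy)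
    have := hforce _ s
    simp only [hu12.1, hu12.2, h3B, if_true] at this
    exact hcne this
  · have h3A : u₃ ∈ A₀ := by simp [hA₀, h₃, h3B]
    have h3x : u₃ ≠ x := fun h => h3B (h ▸ hx)
    have h3y : u₃ ≠ y := fun h => h3B (h ▸ hy)
    have hA₀n : A₀.card < n := by have := Finset.card_lt_card hA₀ss; omega
    -- a colouring of the `A₀` side is never compatible with `c₀` restricted to `B`
    have hfin : ∀ d, Proper F A₀ d → ∃ σ : Equiv.Perm (Fin 3), σ (d x) = c₀ x ∧
        σ (d y) = c₀ y ∧ c₀ u₁ = σ (d u₃) := by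
      intro d hd
      obtain ⟨σ, s1, s2, s⟩ := hglue c₀ d (hc₀.subset hBS) hd hc₀xy
      have := hforce _ s
      simp only [hu12.1, hu12.2, h3B, if_true, if_false] at this
      exact ⟨σ, s1, s2, this.1.trans this.2⟩
    by_cases e1 : c₀ u₁ = c₀ x
    · obtain ⟨d, hd⟩ := col_addEdge (K := F) hn hA₀n hA₀sub u₃ x
      obtain ⟨σ, s1, s2, s⟩ := hfin d hd.of_addEdge
      exact hd.addEdge_ne h3A hxA h3x (σ.injective (by rw [← s, s1, e1]))
    by_cases e2 : c₀ u₁ = c₀ y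
    · obtain ⟨d, hd⟩ := col_addEdge (K := F) hn hA₀n hA₀sub u₃ y
      obtain ⟨σ, s1, s2, s⟩ := hfin d hd.of_addEdge
      exact hd.addEdge_ne h3A hyA h3y (σ.injective (by rw [← s, s2, e2]))
    -- the remaining case: `u₃` avoids the colours of `x` and `y`; join `w` to all three
    let P : U → Prop := fun a => a = x ∨ a = y ∨ a = u₃
    have hPA : ∀ a, P a → a ∈ A₀ := by rintro a (rfl | rfl | rfl) <;> assumption
    let K₂ : SimpleGraph U :=
      { Adj := fun a b => (a ∈ A₀ ∧ b ∈ A₀ ∧ F.Adj a b) ∨ (a = w ∧ P b) ∨ (b = w ∧ P a)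
        symm := ⟨fun a b h => by
          rcases h with h | h | h
          · exact Or.inl ⟨h.2.1, h.1, h.2.2.symm⟩
          · exact Or.inr (Or.inr h)
          · exact Or.inr (Or.inl h)⟩
        loopless := ⟨fun a h => by
          rcases h with h | h | h
          · exact F.irrefl h.2.2
          · exact hwA (h.1 ▸ hPA _ h.2)
          · exact hwA (h.1 ▸ hPA _ h.2)⟩ }
    have hK₂A : ∀ a ∈ A₀, ∀ b ∈ A₀, K₂.Adj a b ↔ F.Adj a b := by
      intro a ha b hb
      refine ⟨?_, fun h => Or.inl ⟨ha, hb, h⟩⟩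
      rintro (h | h | h)
      · exact h.2.2
      · exact absurd (h.1 ▸ ha) hwA
      · exact absurd (h.1 ▸ hb) hwA
    have hcol₂ : Col K₂ (insert w A₀) := by
      apply col_of_pot hn
      · rw [Finset.card_insert_of_notMem hwA]
        have := Finset.card_lt_card hA₀ss
        omega
      intro T hT h2
      have hTA : T.erase w ⊆ A₀ := fun z hz => by
        obtain ⟨q1, q2⟩ := Finset.mem_erase.1 hz
        exact (Finset.mem_insert.1 (hT q2)).resolve_left q1
      have hpeq : pot K₂ (T.erase w) = pot F (T.erase w) :=
        pot_congr fun a ha b hb => (hK₂A a (hTA ha) b (hTA hb)).symm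
      by_cases hwT : w ∈ T
      · have hcard := Finset.card_erase_of_mem hwT
        by_contra hlt
        have e3 := pot_erase (K := K₂) w hwT
        rw [hpeq] at e3
        have hnb : ∀ b ∈ T.erase w, K₂.Adj w b → b ∈ ({x, y, u₃} : Finset U) := by
          intro b hb q2
          have : P b := by
            rcases q2 with h | h | h
            · exact absurd h.1 hwA
            · exact h.2
            · exact absurd (hPA w h.2) hwA
          simpa using this
        have hc3 : (({x, y, u₃} : Finset U)).card ≤ 3 := Finset.card_le_three
        have hdg : dg K₂ w (T.erase w) ≤ 3 := by
          have := dg_le_of hnb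
          omega
        by_cases h1c : (T.erase w).card = 1
        · obtain ⟨z, hz⟩ := Finset.card_eq_one.1 h1c
          rw [hz, pot_singleton] at e3
          have := dg_le_card (K := K₂) (B := {z}) w
          simp at this
          omega
        have h6 := hA₀sub (T.erase w) hTA (by omega)
        have hdg3 : dg K₂ w (T.erase w) = 3 := by omega
        have hall := mem_of_le_dg hnb (by omega)
        have hxT : x ∈ T.erase w := (hall x (by simp)).1
        have hyT : y ∈ T.erase w := (hall y (by simp)).1
        -- gluing `B` to this set of potential at most `6` gives potential at most `4`
        have hBeq : insert x (insert y (B \ {x, y})) = B := by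
          ext z
          simp only [Finset.mem_insert, Finset.mem_sdiff, Finset.mem_singleton]
          constructor
          · rintro (rfl | rfl | h)
            · exact hx
            · exact hy
            · exact h.1
          · intro h; tauto
        have e4 : pot F (T.erase w ∪ B \ {x, y}) = pot F (T.erase w) + pot F B - 10 := by
          have := pot_sep (K := F) (T := T.erase w) (D := B \ {x, y}) hxT hyT hxy hnFxy
            (by
              rw [Finset.disjoint_left]
              intro z hz hz'
              simp only [Finset.mem_sdiff, Finset.mem_insert, Finset.mem_singleton] at hz'
              exact hz'.2 (hA₀B z (hTA hz) hz'.1))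
            (by
              intro a ha b hb hab
              simp only [Finset.mem_sdiff, Finset.mem_insert, Finset.mem_singleton] at hb
              by_cases haB : a ∈ B
              · exact hA₀B a (hTA ha) haB
              · exact absurd (hcrF b hb.1 a
                  (Finset.mem_sdiff.2 ⟨hA₀S (hTA ha), haB⟩) hab.symm) hb.2)
          rw [hBeq] at this
          exact this
        have := hsub5 (T.erase w ∪ B \ {x, y})
          (Finset.union_subset (hTA.trans hA₀S) (Finset.sdiff_subset.trans hBS))
          (le_trans (by omega : 2 ≤ (T.erase w).card)
            (Finset.card_le_card Finset.subset_union_left))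
        omega
      · rw [Finset.erase_eq_of_notMem hwT] at hpeq hTA
        have := hA₀sub T hTA h2
        omega
    obtain ⟨d, hd⟩ := hcol₂
    have hdF : Proper F A₀ d :=
      hd.mono (Finset.subset_insert _ _) fun a ha b hb h => (hK₂A a ha b hb).2 h
    have hdw : ∀ a, P a → d w ≠ d a := fun a ha =>
      hd w (Finset.mem_insert_self _ _) a (Finset.mem_insert_of_mem (hPA a ha))
        (Or.inr (Or.inl ⟨rfl, ha⟩))
    have hx' := hdw x (Or.inl rfl)
    have hy' := hdw y (Or.inr (Or.inl rfl))
    have h3' := hdw u₃ (Or.inr (Or.inr rfl))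
    have hdxy := hAxy d hdF
    obtain ⟨σ, s1, s2, s⟩ := hfin d hdF
    have : d u₃ = d x ∨ d u₃ = d y := by
      generalize d u₃ = p at *
      generalize d x = q at *
      generalize d y = r at *
      generalize d w = t at *
      omega
    rcases this with h | h
    · exact e1 (by rw [s, h, s1])
    · exact e2 (by rw [s, h, s2])

end Forcing

/-! ### Ore sums of critical graphs -/

section Ore

lemma connected_of_cross {V : Type} {G : SimpleGraph V} [Nonempty V]
    (h : ∀ P : Set V, P.Nonempty → (∃ b, b ∉ P) → ∃ a ∈ P, ∃ b, b ∉ P ∧ G.Adj a b) :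
    G.Connected := by
  rw [SimpleGraph.connected_iff]
  refine ⟨fun a b => ?_, inferInstance⟩
  by_contra hab
  obtain ⟨x, hx, y, hy, hxy⟩ := h {x | G.Reachable a x} ⟨a, SimpleGraph.Reachable.refl a⟩ ⟨b, hab⟩
  exact hy (SimpleGraph.Reachable.trans hx hxy.reachable)

variable {U : Type} {K L' : SimpleGraph U} {S R A B : Finset U}

/-- A critical graph is not the union of two proper parts meeting in at most one vertex. -/
lemma Crit.exists_cross (h : Crit K S) (hA : A ⊂ S) (hB : B ⊂ S) (hAB : S ⊆ A ∪ B) (v : U)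
    (hv : ∀ u ∈ A, u ∈ B → u = v) : ∃ a ∈ A, a ∉ B ∧ ∃ b ∈ B, b ∉ A ∧ K.Adj a b := by
  by_contra hcon
  push Not at hcon
  exact h.1 ((col_glue_vertex v (h.col_of_ssubset hA) (h.col_of_ssubset hB) hv
    fun a ha haB b hb hbA => hcon a ha haB b hb hbA).mono hAB fun _ _ _ _ h => h)

lemma Crit.twoConnected (h : Crit K S) :
    TwoConnected (K.comap (fun v : S => (v : U))) := by
  have h4 := h.four_le_card
  refine ⟨by rw [Fintype.card_coe]; omega, ?_, ?_⟩
  · obtain ⟨s, hs⟩ := h.nonempty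
    have : Nonempty S := ⟨⟨s, hs⟩⟩
    apply connected_of_cross
    rintro P ⟨p, hp⟩ ⟨q, hq⟩
    obtain ⟨a, ha, -, b, hb, -, hab⟩ := h.exists_cross
      (A := S.filter fun u => ∃ hu : u ∈ S, (⟨u, hu⟩ : S) ∈ P)
      (B := S.filter fun u => ∃ hu : u ∈ S, (⟨u, hu⟩ : S) ∉ P)
      (Finset.filter_ssubset.2 ⟨q, q.2, fun ⟨_, e⟩ => hq e⟩)
      (Finset.filter_ssubset.2 ⟨p, p.2, fun ⟨_, e⟩ => e hp⟩)
      (fun u hu => by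
        by_cases hup : (⟨u, hu⟩ : S) ∈ P
        · exact Finset.mem_union_left _ (Finset.mem_filter.2 ⟨hu, hu, hup⟩)
        · exact Finset.mem_union_right _ (Finset.mem_filter.2 ⟨hu, hu, hup⟩)) s
      (fun u hu hu' => by
        obtain ⟨-, _, e⟩ := Finset.mem_filter.1 hu
        obtain ⟨-, _, e'⟩ := Finset.mem_filter.1 hu'
        exact absurd e e')
    obtain ⟨-, ha', e⟩ := Finset.mem_filter.1 ha
    obtain ⟨-, hb', e'⟩ := Finset.mem_filter.1 hb
    exact ⟨_, e, _, e', hab⟩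
  · rintro ⟨v, hv⟩
    have : Nonempty {u : S | u ≠ ⟨v, hv⟩} := by
      obtain ⟨w, hw, hne⟩ := Finset.exists_mem_ne (by omega : 1 < S.card) v
      exact ⟨⟨⟨w, hw⟩, fun e => hne (congrArg Subtype.val e)⟩⟩
    apply connected_of_cross
    rintro P ⟨p, hp⟩ ⟨q, hq⟩
    obtain ⟨a, ha, haB, b, hb, hbA, hab⟩ := h.exists_cross
      (A := S.filter fun u => u = v ∨ ∃ hu : u ∈ S, ∃ hu' : (⟨u, hu⟩ : S) ≠ ⟨v, hv⟩,
        (⟨⟨u, hu⟩, hu'⟩ : {u : S | u ≠ ⟨v, hv⟩}) ∈ P)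
      (B := S.filter fun u => u = v ∨ ∃ hu : u ∈ S, ∃ hu' : (⟨u, hu⟩ : S) ≠ ⟨v, hv⟩,
        (⟨⟨u, hu⟩, hu'⟩ : {u : S | u ≠ ⟨v, hv⟩}) ∉ P)
      (Finset.filter_ssubset.2 ⟨q.1, q.1.2, by
        rintro (e | ⟨_, _, e⟩)
        · exact q.2 (Subtype.ext e)
        · exact hq e⟩)
      (Finset.filter_ssubset.2 ⟨p.1, p.1.2, by
        rintro (e | ⟨_, _, e⟩)
        · exact p.2 (Subtype.ext e)
        · exact e hp⟩)
      (fun u hu => by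
        by_cases huv : u = v
        · exact Finset.mem_union_left _ (Finset.mem_filter.2 ⟨hu, Or.inl huv⟩)
        have hu' : (⟨u, hu⟩ : S) ≠ ⟨v, hv⟩ := fun e => huv (congrArg Subtype.val e)
        by_cases hup : (⟨⟨u, hu⟩, hu'⟩ : {u : S | u ≠ ⟨v, hv⟩}) ∈ P
        · exact Finset.mem_union_left _ (Finset.mem_filter.2 ⟨hu, Or.inr ⟨hu, hu', hup⟩⟩)
        · exact Finset.mem_union_right _ (Finset.mem_filter.2 ⟨hu, Or.inr ⟨hu, hu', hup⟩⟩)) v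
      (fun u hu hu' => by
        obtain ⟨-, e | ⟨_, _, e⟩⟩ := Finset.mem_filter.1 hu
        · exact e
        obtain ⟨-, e' | ⟨_, _, e'⟩⟩ := Finset.mem_filter.1 hu'
        · exact e'
        · exact absurd e e')
    obtain ⟨hav, e⟩ := Finset.mem_filter.1 ha
    obtain ⟨hbv, e'⟩ := Finset.mem_filter.1 hb
    have hav' : a ≠ v := fun e => haB (Finset.mem_filter.2 ⟨hav, Or.inl e⟩)
    have hbv' : b ≠ v := fun e => hbA (Finset.mem_filter.2 ⟨hbv, Or.inl e⟩)
    obtain ⟨_, _, e⟩ := e.resolve_left hav'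
    obtain ⟨_, _, e'⟩ := e'.resolve_left hbv'
    exact ⟨_, e, _, e', hab⟩

lemma IsFourOre.iso {V W : Type} [Fintype V] [DecidableEq V] [Fintype W] [DecidableEq W]
    {G : SimpleGraph V} {G' : SimpleGraph W} (h : IsFourOre V G) (e : G ≃g G') :
    IsFourOre W G' := by
  cases h with
  | k4 _ _ h => exact .k4 W G' (h.map e.symm.trans)
  | ore V₁ V₂ _ H₁ H₂ _ h₁ h₂ h =>
    obtain ⟨t₁, t₂, z, x, y, s, a1, a2, a3, a4⟩ := h
    exact .ore V₁ V₂ W H₁ H₂ G' h₁ h₂ ⟨t₁, t₂, z, x, y, s, a1, a2, a3, a4.map e.symm.trans⟩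

lemma OreOn.fourOre (h : OreOn K S) {W : Type} [Fintype W] [DecidableEq W] {G : SimpleGraph W}
    (e : K.comap (fun v : S => (v : U)) ≃g G) : IsFourOre W G :=
  IsFourOre.iso h e

lemma Crit.adj_of_card_four (h : Crit K S) (h4 : S.card = 4) :
    ∀ a ∈ S, ∀ b ∈ S, a ≠ b → K.Adj a b := by
  intro a ha b hb hab
  refine (mem_of_le_dg (K := K) (R := S.erase a) (T := S.erase a) (a := a) (fun b hb _ => hb) ?_ b
    (Finset.mem_erase.2 ⟨hab.symm, hb⟩)).2
  rw [dg_erase_self, Finset.card_erase_of_mem ha, h4]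
  exact h.three_le_dg ha

lemma Crit.good_of_card_four (h : Crit K S) (h4 : S.card = 4) : Good K S := by
  have hadj := h.adj_of_card_four h4
  have hdg : ∀ a ∈ S, dg K a S = 3 := by
    intro a ha
    have h1 := h.three_le_dg ha
    have h2 := dg_le_card (K := K) (B := S.erase a) a
    rw [dg_erase_self, Finset.card_erase_of_mem ha, h4] at h2
    push_cast at h2
    omega
  right
  refine ⟨?_, ?_, Or.inl h4, ?_⟩
  · have h1 := bip_self K S
    rw [bip_eq_sum_dg, Finset.sum_congr rfl hdg] at h1
    simp [h4] at h1
    unfold pot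
    omega
  · have e1 : K.comap (fun v : S => (v : U)) = ⊤ := by
      ext a b
      simp only [SimpleGraph.comap_adj, SimpleGraph.top_adj]
      constructor
      · rintro h rfl; exact K.irrefl h
      · intro hne; exact hadj a a.2 b b.2 fun e => hne (Subtype.ext e)
    refine .k4 _ _ ?_
    rw [e1]
    exact ⟨SimpleGraph.Iso.completeGraph (Finset.equivFinOfCardEq h4)⟩
  · intro w hw
    refine ⟨S.erase w, Finset.erase_subset _ _, Finset.notMem_erase _ _, Or.inr ⟨?_, ?_, ?_⟩⟩
    · rw [Finset.card_erase_of_mem hw, h4]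
    · exact fun a ha b hb hab =>
        hadj a (Finset.mem_of_mem_erase ha) b (Finset.mem_of_mem_erase hb) hab
    · exact fun a ha => hdg a (Finset.mem_of_mem_erase ha)

/-- If `R` meets the rest of `S` only in the nonadjacent vertices `u₁, u₂`, then `K[S]` is the
Ore sum of `L`, obtained by contracting `R` to one vertex, and of `K[R]` with the edge `u₁u₂`. -/
lemma isOreSum_of_sep {L : SimpleGraph (U ⊕ Fin 3)} {i : Fin 3} {u₁ u₂ : U}
    (hRS : R ⊆ S) (hL : Crit L ((S \ R).disjSum {i}))
    (hR : Crit (K ⊔ SimpleGraph.edge u₁ u₂) R) (h₁ : u₁ ∈ R) (h₂ : u₂ ∈ R) (hne : u₁ ≠ u₂)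
    (hnadj : ¬ K.Adj u₁ u₂)
    (hin : ∀ a ∈ S \ R, ∀ b ∈ S \ R, L.Adj (Sum.inl a) (Sum.inl b) ↔ K.Adj a b)
    (hbd : ∀ a ∈ S \ R, ∀ b ∈ R, K.Adj a b → b = u₁ ∨ b = u₂)
    (hone : ∀ a ∈ S \ R, ¬ (K.Adj a u₁ ∧ K.Adj a u₂))
    (hcr : ∀ a ∈ S \ R, L.Adj (Sum.inl a) (Sum.inr i) ↔ K.Adj a u₁ ∨ K.Adj a u₂)
    (hex₁ : ∃ a ∈ S \ R, K.Adj a u₁) (hex₂ : ∃ a ∈ S \ R, K.Adj a u₂) :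
    IsOreSum (K.comap (fun v : S => (v : U)))
      (L.comap (fun v : ((S \ R).disjSum ({i} : Finset (Fin 3))) => (v : U ⊕ Fin 3)))
      ((K ⊔ SimpleGraph.edge u₁ u₂).comap (fun v : R => (v : U))) := by
  have hmem : ∀ a, a ∈ S \ R → Sum.inl a ∈ (S \ R).disjSum ({i} : Finset (Fin 3)) :=
    fun a ha => Finset.inl_mem_disjSum.2 ha
  have hz : Sum.inr i ∈ (S \ R).disjSum ({i} : Finset (Fin 3)) := by simp
  refine ⟨hL.twoConnected, hR.twoConnected, ⟨Sum.inr i, hz⟩, ⟨u₁, h₁⟩, ⟨u₂, h₂⟩,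
    fun w => decide (∃ a, w.1 = Sum.inl a ∧ K.Adj a u₁), ?_, ?_, ?_, ?_⟩
  · exact addEdge_adj.2 (Or.inr ⟨hne, Or.inl ⟨rfl, rfl⟩⟩)
  · obtain ⟨a, ha, hau⟩ := hex₁
    exact ⟨⟨Sum.inl a, hmem a ha⟩, (hcr a ha).2 (Or.inl hau), decide_eq_true ⟨a, rfl, hau⟩⟩
  · obtain ⟨a, ha, hau⟩ := hex₂
    refine ⟨⟨Sum.inl a, hmem a ha⟩, (hcr a ha).2 (Or.inr hau), decide_eq_false ?_⟩
    rintro ⟨a', e, hau'⟩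
    obtain rfl := Sum.inl.inj e
    exact hone a ha ⟨hau', hau⟩
  · let f : S → {v : ((S \ R).disjSum ({i} : Finset (Fin 3))) // v ≠ ⟨Sum.inr i, hz⟩} ⊕ R :=
      fun v => if h : v.1 ∈ R then Sum.inr ⟨v.1, h⟩ else
        Sum.inl ⟨⟨Sum.inl v.1, hmem v.1 (Finset.mem_sdiff.2 ⟨v.2, h⟩)⟩,
          fun e => Sum.inl_ne_inr (congrArg Subtype.val e)⟩
    have f1 : ∀ v (h : v.1 ∈ R), f v = Sum.inr ⟨v.1, h⟩ := fun v h => dif_pos h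
    have f2 : ∀ v (h : v.1 ∉ R), f v =
        Sum.inl ⟨⟨Sum.inl v.1, hmem v.1 (Finset.mem_sdiff.2 ⟨v.2, h⟩)⟩,
          fun e => Sum.inl_ne_inr (congrArg Subtype.val e)⟩ := fun v h => dif_neg h
    have hf : Function.Bijective f := by
      constructor
      · intro a b hab
        by_cases ha : a.1 ∈ R <;> by_cases hb : b.1 ∈ R
        · rw [f1 a ha, f1 b hb] at hab
          have e := congrArg Subtype.val (Sum.inr.inj hab)
          exact Subtype.ext e
        · rw [f1 a ha, f2 b hb] at hab
          simp at hab
        · rw [f2 a ha, f1 b hb] at hab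
          simp at hab
        · rw [f2 a ha, f2 b hb] at hab
          have e := congrArg (fun q => q.1.1) (Sum.inl.inj hab)
          exact Subtype.ext (Sum.inl.inj e)
      · rintro (⟨⟨p | j, hp⟩, hne⟩ | ⟨r, hr⟩)
        · have hp' := Finset.mem_sdiff.1 (Finset.inl_mem_disjSum.1 hp)
          exact ⟨⟨p, hp'.1⟩, f2 _ hp'.2⟩
        · have : j = i := by simpa using hp
          subst this
          exact absurd rfl hne
        · exact ⟨⟨r, hRS hr⟩, f1 _ hr⟩
    refine ⟨⟨Equiv.ofBijective f hf, ?_⟩⟩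
    rintro ⟨a, haS⟩ ⟨b, hbS⟩
    change (oreSumGraph _ _ _ _ _ _).Adj (f _) (f _) ↔ K.Adj a b
    unfold oreSumGraph
    rw [SimpleGraph.fromRel_adj, hf.1.ne_iff]
    -- an edge between the two sides
    have key : ∀ a (_ : a ∈ S \ R) b (_ : b ∈ R), K.Adj a b ↔
        L.Adj (Sum.inl a) (Sum.inr i) ∧ ((K.Adj a u₁ ∧ b = u₁) ∨ (¬ K.Adj a u₁ ∧ b = u₂)) := by
      intro a ha b hb
      rw [hcr a ha]
      constructor
      · intro h
        rcases hbd a ha b hb h with rfl | rfl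
        · exact ⟨Or.inl h, Or.inl ⟨h, rfl⟩⟩
        · exact ⟨Or.inr h, Or.inr ⟨fun h' => hone a ha ⟨h', h⟩, rfl⟩⟩
      · rintro ⟨h, ⟨h', rfl⟩ | ⟨h', rfl⟩⟩
        · exact h'
        · exact h.resolve_left h'
    have hirr : K.Adj a b → a ≠ b := fun h => h.ne
    by_cases ha : a ∈ R <;> by_cases hb : b ∈ R
    · rw [f1 _ ha, f1 _ hb]
      simp only [SimpleGraph.comap_adj, addEdge_adj, Subtype.mk.injEq, ne_eq]
      constructor
      · rintro ⟨-, ⟨h | h, h1, h2⟩ | ⟨h | h, h1, h2⟩⟩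
        · exact h
        · rcases h.2 with h | h
          · exact absurd h h1
          · exact absurd h h2
        · exact h.symm
        · rcases h.2 with h | h
          · exact absurd h h1
          · exact absurd h h2
      · intro h
        refine ⟨hirr h, Or.inl ⟨Or.inl h, ?_, ?_⟩⟩
        · rintro ⟨rfl, rfl⟩; exact hnadj h
        · rintro ⟨rfl, rfl⟩; exact hnadj h.symm
    · rw [f1 _ ha, f2 _ hb, K.adj_comm, key b (Finset.mem_sdiff.2 ⟨hbS, hb⟩) a ha]
      have : a ≠ b := fun e => hb (e ▸ ha)
      simp [this]
    · rw [f2 _ ha, f1 _ hb, key a (Finset.mem_sdiff.2 ⟨haS, ha⟩) b hb]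
      have : a ≠ b := fun e => ha (e ▸ hb)
      simp [this]
    · rw [f2 _ ha, f2 _ hb]
      have ha' := Finset.mem_sdiff.2 ⟨haS, ha⟩
      have hb' := Finset.mem_sdiff.2 ⟨hbS, hb⟩
      simp only [SimpleGraph.comap_adj, hin a ha' b hb', hin b hb' a ha', Subtype.mk.injEq, ne_eq,
        K.adj_comm b a, or_self]
      exact ⟨fun h => h.2, fun h => ⟨hirr h, h⟩⟩

end Ore

/-! ### Critical graphs with a set of small potential -/

section CaseA

variable {U : Type} {K K' : SimpleGraph U} {L : SimpleGraph (U ⊕ Fin 3)} {S R A B T : Finset U}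
  {X : Finset (Fin 3)} {φ : U → Fin 3} {n : ℕ}

lemma one_le_dg {a r : U} (hr : r ∈ R) (h : K.Adj a r) : 1 ≤ dg K a R := by
  rw [dg_eq_card]
  exact_mod_cast Finset.card_pos.2 ⟨r, Finset.mem_filter.2 ⟨hr, h⟩⟩

lemma two_le_dg {a r s : U} (hr : r ∈ R) (hs : s ∈ R) (hrs : r ≠ s) (h : K.Adj a r)
    (h' : K.Adj a s) : 2 ≤ dg K a R := by
  rw [dg_eq_card]
  exact_mod_cast Finset.one_lt_card.2
    ⟨r, Finset.mem_filter.2 ⟨hr, h⟩, s, Finset.mem_filter.2 ⟨hs, h'⟩, hrs⟩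

lemma Crit.congr (h : Crit K S) (hK : ∀ a ∈ S, ∀ b ∈ S, K'.Adj a b ↔ K.Adj a b) : Crit K' S := by
  refine ⟨fun hc => h.1 (hc.mono subset_rfl fun a ha b hb hab => (hK a ha b hb).2 hab),
    fun v hv => (h.2.1 v hv).mono subset_rfl fun a ha b hb hab =>
      (hK a (Finset.mem_of_mem_erase ha) b (Finset.mem_of_mem_erase hb)).1 hab, ?_⟩
  intro a ha b hb hab
  obtain ⟨c, hc⟩ := h.2.2 a ha b hb ((hK a ha b hb).1 hab)
  refine ⟨c, hc.mono subset_rfl fun x hx y hy hxy => ?_⟩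
  rw [SimpleGraph.deleteEdges_adj] at hxy ⊢
  exact ⟨(hK x hx y hy).1 hxy.1, hxy.2⟩

lemma exists_disjSum {T : Finset (U ⊕ Fin 3)} (h : T ⊆ A.disjSum X) :
    ∃ A' ⊆ A, ∃ X' ⊆ X, T = A'.disjSum X' := by
  refine ⟨T.toLeft, fun a ha => ?_, T.toRight, fun i hi => ?_, T.toLeft_disjSum_toRight.symm⟩
  · exact Finset.inl_mem_disjSum.1 (h (Finset.mem_toLeft.1 ha))
  · exact Finset.inr_mem_disjSum.1 (h (Finset.mem_toRight.1 hi))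

lemma pot_disjSum_empty (hin : ∀ a ∈ T, ∀ b ∈ T, L.Adj (Sum.inl a) (Sum.inl b) ↔ K.Adj a b) :
    pot L (T.disjSum ∅) = pot K T := by
  rw [pot_disjSum, pot_congr (K := K) (K' := L.comap Sum.inl) hin]
  simp [pot, ed, bip, dX]

/-- The diamond or emerald of a contracted graph that avoids the contracted vertex survives in
the original graph. -/
lemma emerald_transfer {i : Fin 3} (hd : Disjoint A R) (hE : Emerald L (A.disjSum {i}))
    (hdx : ∀ a ∈ A, dX L a {i} = dg K a R)
    (hin : ∀ a ∈ A, ∀ b ∈ A, L.Adj (Sum.inl a) (Sum.inl b) ↔ K.Adj a b) :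
    ∃ T ⊆ A, ((2 ≤ T.card ∧ pot K T ≤ 5) ∨
      (T.card = 3 ∧ (∀ a ∈ T, ∀ b ∈ T, a ≠ b → K.Adj a b) ∧ ∀ a ∈ T, dg K a (A ∪ R) = 3)) := by
  obtain ⟨T₁, hT₁, hi, hT⟩ := hE (Sum.inr i) (by simp)
  obtain ⟨T, hTA, X', hX', rfl⟩ := exists_disjSum hT₁
  obtain rfl : X' = ∅ := by
    rcases Finset.subset_singleton_iff.1 hX' with h | h
    · exact h
    · subst h; simp at hi
  have hcard : (T.disjSum (∅ : Finset (Fin 3))).card = T.card := by simp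
  rw [hcard, pot_disjSum_empty fun a ha b hb => hin a (hTA ha) b (hTA hb)] at hT
  refine ⟨T, hTA, hT.imp id ?_⟩
  rintro ⟨h1, h2, h3⟩
  refine ⟨h1, fun a ha b hb hab => (hin a (hTA ha) b (hTA hb)).1
    (h2 _ (Finset.inl_mem_disjSum.2 ha) _ (Finset.inl_mem_disjSum.2 hb)
      fun e => hab (Sum.inl.inj e)), fun a ha => ?_⟩
  have h4 := h3 _ (Finset.inl_mem_disjSum.2 ha)
  rw [dg_disjSum, hdx a (hTA ha)] at h4
  rw [dg_union a hd, ← h4]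
  congr 1
  exact dg_congr a fun b hb => (hin a (hTA ha) b hb).symm

lemma five_le_pot_top (hX : X.Nonempty) : 5 ≤ pot (⊤ : SimpleGraph (Fin 3)) X := by
  have h := pot_top X
  have h1 := hX.card_pos
  have h2 := Finset.card_le_univ X
  simp at h2
  obtain h3 | h3 | h3 : X.card = 1 ∨ X.card = 2 ∨ X.card = 3 := by omega
  · exact (h.2.1 h3).ge
  · rw [h.2.2.1 h3]; norm_num
  · rw [h.2.2.2 h3]; norm_num

lemma card_one_of_pot_top (hX : X.Nonempty) (h5 : pot (⊤ : SimpleGraph (Fin 3)) X ≤ 5) :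
    X.card = 1 := by
  have h := pot_top X
  have h1 := hX.card_pos
  have h2 := Finset.card_le_univ X
  simp at h2
  obtain h3 | h3 | h3 : X.card = 1 ∨ X.card = 2 ∨ X.card = 3 := by omega
  · exact h3
  · rw [h.2.2.1 h3] at h5; omega
  · rw [h.2.2.2 h3] at h5; omega

/-- If the contraction is tight with one contracted vertex, the boundary of `R` is
monochromatic. -/
lemma const_of_tight {i : Fin 3} (hL : L ≤ contr K R φ)
    (hdx : ∀ a ∈ A, dX L a {i} = dg K a R) {a r : U} (ha : a ∈ A) (hr : r ∈ R)
    (h : K.Adj a r) : φ r = i ∧ L.Adj (Sum.inl a) (Sum.inr i) ∧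
      ∀ r' ∈ R, K.Adj a r' → r' = r := by
  have h1 := one_le_dg hr h
  have h2 := hdx a ha
  have h3 : dX L a {i} = if L.Adj (Sum.inl a) (Sum.inr i) then 1 else 0 := by
    simp only [dX, Finset.sum_singleton]
  rw [h3] at h2
  split_ifs at h2 with h4
  · have huniq : ∀ r' ∈ R, K.Adj a r' → r' = r := by
      intro r' hr' h'
      by_contra hne
      have := two_le_dg hr' hr hne h' h
      omega
    obtain ⟨r', hr', hφ, h'⟩ := hL h4
    rw [huniq r' hr' h'] at hφ
    exact ⟨hφ, h4, huniq⟩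
  · omega

/-- A critical graph of potential at least `2` that has a proper subset of potential at most `5` is
an Ore sum along the smallest such subset of least potential. -/
lemma good_of_small_subset [Finite U] (hn : SmallGood n) (hSn : S.card = n) (h : Crit K S)
    (hex : ∃ R ⊂ S, 2 ≤ R.card ∧ pot K R ≤ 5) (hp : 2 ≤ pot K S) : Good K S := by
  -- take such a set of least potential, and then of least size
  obtain ⟨R, ⟨hR, hR2, hR5⟩, hmin⟩ : ∃ R, (R ⊂ S ∧ 2 ≤ R.card ∧ pot K R ≤ 5) ∧
      ∀ T ⊂ S, 2 ≤ T.card → pot K R < pot K T ∨ (pot K R = pot K T ∧ R.card ≤ T.card) := by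
    obtain ⟨R, hR, hmin⟩ := Finset.exists_min_image
      (S.ssubsets.filter fun R => 2 ≤ R.card ∧ pot K R ≤ 5)
      (fun R => toLex (pot K R, R.card)) (by
        obtain ⟨R, h1, h2⟩ := hex
        exact ⟨R, Finset.mem_filter.2 ⟨Finset.mem_ssubsets.2 h1, h2⟩⟩)
    rw [Finset.mem_filter, Finset.mem_ssubsets] at hR
    refine ⟨R, hR, fun T hT h2 => ?_⟩
    by_cases h5 : pot K T ≤ 5
    · exact Prod.Lex.toLex_le_toLex.1
        (hmin T (Finset.mem_filter.2 ⟨Finset.mem_ssubsets.2 hT, h2, h5⟩))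
    · left; omega
  have hR4 := card_ge_four hR2 hR5
  have hRne : R.Nonempty := Finset.card_pos.1 (by omega)
  have hRn : R.card < n := hSn ▸ Finset.card_lt_card hR
  have hdisj : Disjoint (S \ R) R := Finset.sdiff_disjoint
  have hun : S \ R ∪ R = S := Finset.sdiff_union_of_subset hR.1
  -- every colouring of `R` leads to a tight contraction to one vertex
  have hcon : ∀ φ, Proper K R φ → ∃ i, ∃ L ≤ contr K R φ, Crit L ((S \ R).disjSum {i}) ∧
      Good L ((S \ R).disjSum {i}) ∧ pot L ((S \ R).disjSum {i}) = 2 ∧ pot K R = 5 ∧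
      pot K S = 2 ∧
      (∀ a ∈ S \ R, dX L a {i} = dg K a R) ∧
      (∀ a ∈ S \ R, ∀ b ∈ S \ R, L.Adj (Sum.inl a) (Sum.inl b) ↔ K.Adj a b) := by
    intro φ hφ
    obtain ⟨A, hA, X, L, hL, hcrit, hcard⟩ := exists_crit_contr hR.1 hφ
      (fun c hc _ => h.1 ⟨c, hc⟩)
    have hgood := hn _ L _ (by omega) hcrit
    have hle := hgood.le_two
    obtain ⟨r, hr⟩ := hRne
    have hAS : A ⊂ S := Finset.ssubset_iff_subset_ne.2 ⟨hA.trans Finset.sdiff_subset,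
      fun e => (Finset.mem_sdiff.1 (hA (e ▸ hR.1 hr))).2 hr⟩
    have hX := X_nonempty hL hcrit (h.col_of_ssubset hAS)
    have h5 := five_le_pot_top hX
    have hAR : Disjoint A R := Finset.disjoint_of_subset_left hA hdisj
    have hpc := pot_contr (X := X) hL hAR
    have hARS : A ∪ R = S := by
      by_contra hne
      have := hmin (A ∪ R) (Finset.ssubset_iff_subset_ne.2
        ⟨Finset.union_subset hAS.1 hR.1, hne⟩)
        (hR2.trans (Finset.card_le_card Finset.subset_union_right))
      omega
    obtain rfl : A = S \ R := by
      rw [← hARS, Finset.union_sdiff_cancel_right hAR]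
    have hX1 := card_one_of_pot_top hX (by rw [hARS] at hpc; omega)
    obtain ⟨i, rfl⟩ := Finset.card_eq_one.1 hX1
    rw [hARS] at hpc
    obtain ⟨t1, t2, -⟩ := pot_contr_tight (X := {i}) hL hAR (by rw [hARS]; omega)
    exact ⟨i, L, hL, hcrit, hgood, by omega, by omega, by omega, t1, t2⟩
  have hconst : ∀ φ, Proper K R φ → ∃ i, ∀ a ∈ S \ R, ∀ r ∈ R, K.Adj a r → φ r = i := by
    intro φ hφ
    obtain ⟨i, L, hL, -, -, -, -, -, t1, -⟩ := hcon φ hφ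
    exact ⟨i, fun a ha r hr har => (const_of_tight hL t1 ha hr har).1⟩
  obtain ⟨φ, hφ⟩ := h.col_of_ssubset hR
  obtain ⟨i, L, hL, hcrit, hgood, hpL, hpR, hpS, t1, t2⟩ := hcon φ hφ
  obtain ⟨u₁, h₁, u₂, h₂, hne, ⟨a₁, ha₁, hau₁⟩, a₂, ha₂, hau₂⟩ :=
    h.two_boundary hR hRne (by omega)
  have hsub : ∀ T ⊂ R, 2 ≤ T.card → 6 ≤ pot K T := by
    intro T hT h2
    have := Finset.card_lt_card hT
    have := hmin T (hT.trans hR) h2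
    omega
  have hsame : ∀ c, Proper K R c → c u₁ = c u₂ := by
    intro c hc
    obtain ⟨j, hj⟩ := hconst c hc
    exact (hj a₁ ha₁ u₁ h₁ hau₁).trans (hj a₂ ha₂ u₂ h₂ hau₂).symm
  have hbd : ∀ a ∈ S \ R, ∀ b ∈ R, K.Adj a b → b = u₁ ∨ b = u₂ := by
    intro a ha b hb hab
    by_contra hno
    push Not at hno
    obtain ⟨c, hc, hcn⟩ := no_three_forced hn R.card K R rfl hRn hpR hsub u₁ h₁ u₂ h₂ b hb hne
      hno.1.symm hno.2.symm
    obtain ⟨j, hj⟩ := hconst c hc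
    exact hcn ⟨hsame c hc, (hj a₂ ha₂ u₂ h₂ hau₂).trans (hj a ha b hb hab).symm⟩
  have hnadj : ¬ K.Adj u₁ u₂ := fun e => hφ u₁ h₁ u₂ h₂ e (hsame φ hφ)
  have hnc : ¬ Col (K ⊔ SimpleGraph.edge u₁ u₂) R := by
    rintro ⟨c, hc⟩
    exact hc.addEdge_ne h₁ h₂ hne (hsame c hc.of_addEdge)
  have hcrit2 : Crit (K ⊔ SimpleGraph.edge u₁ u₂) R := by
    obtain ⟨S', hS', K', hK', hcrit'⟩ := exists_crit hnc
    have hS4 := hcrit'.four_le_card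
    have hle2 := (hn U K' S' ((Finset.card_le_card hS').trans_lt hRn) hcrit').le_two
    have hKF : pot K S' - 3 ≤ pot K' S' :=
      (pot_addEdge_ge u₁ u₂).trans (pot_mono fun a _ b _ hab => hK' hab)
    obtain rfl : S' = R := by
      by_contra hne'
      have := hsub S' (Finset.ssubset_iff_subset_ne.2 ⟨hS', hne'⟩) (by omega)
      omega
    refine hcrit'.congr fun a ha b hb => ⟨fun h => ?_, fun h => hK' h⟩
    by_contra hna
    have := pot_strict (K := K ⊔ SimpleGraph.edge u₁ u₂) (K' := K')
      (fun a _ b _ hab => hK' hab) ha hb h hna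
    rw [pot_addEdge h₁ h₂ hne hnadj] at this
    omega
  have hgood2 := hn _ _ _ hRn hcrit2
  have hpR2 : pot (K ⊔ SimpleGraph.edge u₁ u₂) R = 2 := by
    rw [pot_addEdge h₁ h₂ hne hnadj]; omega
  obtain ⟨-, hOre2, -, -⟩ := hgood2.resolve_left (by omega)
  obtain ⟨-, hOre1, -, hEm⟩ := hgood.resolve_left (by omega)
  right
  refine ⟨hpS, ?_, Or.inr ⟨R, hR, u₁, h₁, u₂, h₂, hne, hnadj, ?_, hpR, ?_⟩, ?_⟩
  · refine .ore _ _ _ _ _ _ (hOre1.fourOre SimpleGraph.Iso.refl)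
      (hOre2.fourOre SimpleGraph.Iso.refl) (isOreSum_of_sep hR.1 hcrit hcrit2 h₁ h₂ hne hnadj t2 hbd
      ?_ ?_ ⟨a₁, ha₁, hau₁⟩ ⟨a₂, ha₂, hau₂⟩)
    · rintro a ha ⟨e1, e2⟩
      exact hne ((const_of_tight hL t1 ha h₂ e2).2.2 u₁ h₁ e1)
    · intro a ha
      constructor
      · intro hai
        obtain ⟨r, hr, -, har⟩ := hL hai
        rcases hbd a ha r hr har with rfl | rfl
        · exact Or.inl har
        · exact Or.inr har
      · rintro (e | e)
        · exact (const_of_tight hL t1 ha h₁ e).2.1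
        · exact (const_of_tight hL t1 ha h₂ e).2.1
  · exact fun a ha b hb hab => hbd b hb a ha hab.symm
  · intro c hc hcu
    obtain ⟨σ, -, -, hσ⟩ := glue_pair (x := u₁) (y := u₂) hφ hc
      (fun u hu hu' => by
        simp only [Finset.mem_insert, Finset.mem_sdiff] at hu'
        tauto) (iff_of_true (hsame φ hφ) hcu)
      (fun a ha hna b hb hbR hab => by
        simp only [Finset.mem_insert, Finset.mem_sdiff] at hna hb
        have hbS : b ∈ S \ R := by
          rcases hb with rfl | rfl | hb
          · exact absurd h₁ hbR
          · exact absurd h₂ hbR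
          · exact Finset.mem_sdiff.2 hb
        have := hbd b hbS a ha hab.symm
        tauto)
    refine h.1 ⟨_, hσ.subset fun v hv => ?_⟩
    by_cases hvR : v ∈ R
    · exact Finset.mem_union_left _ hvR
    · exact Finset.mem_union_right _ (by simp [hv, hvR])
  · intro w hw
    by_cases hwR : w ∈ R
    · obtain ⟨T, hT, hT'⟩ := emerald_transfer hdisj hEm t1 t2
      rw [hun] at hT'
      exact ⟨T, hT.trans Finset.sdiff_subset, fun hwT => (Finset.mem_sdiff.1 (hT hwT)).2 hwR, hT'⟩
    · exact ⟨R, hR.1, hwR, Or.inl ⟨hR2, hR5⟩⟩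

end CaseA

/-! ### Critical graphs without sets of small potential -/

section CaseB

variable {U : Type} {K : SimpleGraph U} {L : SimpleGraph (U ⊕ Fin 3)} {S R A B T : Finset U}
  {X : Finset (Fin 3)} {φ : U → Fin 3} {n : ℕ}

lemma exists_other : ∀ i : Fin 3, ∃ j k : Fin 3, i ≠ j ∧ i ≠ k ∧ j ≠ k ∧
    ∀ l, l = i ∨ l = j ∨ l = k := by decide

lemma Decomp.cross (h : Decomp K S) : ∃ B ⊂ S, ∃ x ∈ B, ∃ y ∈ B, x ≠ y ∧
    (∀ a ∈ B, ∀ b ∈ S, b ∉ B → K.Adj a b → a = x ∨ a = y) ∧ pot K B = 5 := by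
  obtain ⟨B, hB, x, hx, y, hy, hxy, -, hcr, hp, -⟩ := h
  exact ⟨B, hB, x, hx, y, hy, hxy,
    fun a ha b hb hbn => hcr a ha b (Finset.mem_sdiff.2 ⟨hb, hbn⟩), hp⟩

lemma pot_eq_of_notMem {v : U} (hT : T ⊆ S) (hv : v ∈ S) (hvT : v ∉ T)
    (h : ∀ z ∈ S, z ≠ v → z ∈ T) : pot K S = pot K T + 5 - 3 * dg K v S := by
  have e : S.erase v = T := by
    ext z
    rw [Finset.mem_erase]
    exact ⟨fun hz => h z hz.2 hz.1, fun hz => ⟨fun e => hvT (e ▸ hz), hT hz⟩⟩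
  have e1 := pot_insert (K := K) v hvT
  have e2 := dg_insert (K := K) v v hvT
  have e3 : insert v T = S := by rw [← e, Finset.insert_erase hv]
  rw [e3] at e1 e2
  simp at e2
  omega

set_option maxHeartbeats 1000000 in
/-- If all proper subsets with at least two vertices of a critical graph have potential at least
`6`, then those of size at least `4` attaining this bound miss only one vertex. The induction is on
the number of missed vertices: the decomposition of the graph obtained by contracting `R` is
compared with larger sets containing `R`. -/
lemma card_sdiff_eq_one [Finite U] (hn : SmallGood n) (hSn : S.card = n) (h : Crit K S)
    (hC1 : ∀ T ⊂ S, 2 ≤ T.card → 6 ≤ pot K T) (hp : 2 ≤ pot K S) :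
    ∀ (m : ℕ) (R : Finset U), (S \ R).card = m → R ⊂ S → 4 ≤ R.card → pot K R ≤ 6 → m = 1 := by
  intro m
  induction m using Nat.strong_induction_on with
  | _ m ih =>
  intro R hm hR hR4 hR6
  have hRne : R.Nonempty := Finset.card_pos.1 (by omega)
  have hRn : R.card < n := hSn ▸ Finset.card_lt_card hR
  have hdisj : Disjoint (S \ R) R := Finset.sdiff_disjoint
  have hun : S \ R ∪ R = S := Finset.sdiff_union_of_subset hR.1
  have hpR : pot K R = 6 := le_antisymm hR6 (hC1 R hR (by omega))
  obtain ⟨u₁, h₁, u₂, h₂, hne, ⟨a₁, ha₁, hau₁⟩, a₂, ha₂, hau₂⟩ :=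
    h.two_boundary hR hRne (by omega)
  obtain ⟨φ, hφ'⟩ := col_addEdge (K := K) hn hRn
    (fun T hT h2 => hC1 T (hT.trans_ssubset hR) h2) u₁ u₂
  have hφ := hφ'.of_addEdge
  have hφne := hφ'.addEdge_ne h₁ h₂ hne
  obtain ⟨A, hA, X, L, hL, hcrit, hcard⟩ := exists_crit_contr hR.1 hφ
    (fun c hc _ => h.1 ⟨c, hc⟩)
  have hgood := hn _ L _ (by omega) hcrit
  have hle := hgood.le_two
  have hAS : A ⊂ S := by
    obtain ⟨r, hr⟩ := hRne
    exact Finset.ssubset_iff_subset_ne.2 ⟨hA.trans Finset.sdiff_subset,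
      fun e => (Finset.mem_sdiff.1 (hA (e ▸ hR.1 hr))).2 hr⟩
  have hX := X_nonempty hL hcrit (h.col_of_ssubset hAS)
  have h5 := five_le_pot_top hX
  have hAR : Disjoint A R := Finset.disjoint_of_subset_left hA hdisj
  have hpc := pot_contr (X := X) hL hAR
  have hARS : A ∪ R = S := by
    by_contra hne'
    have := hC1 (A ∪ R) (Finset.ssubset_iff_subset_ne.2
      ⟨Finset.union_subset hAS.1 hR.1, hne'⟩)
      (le_trans (by omega) (Finset.card_le_card Finset.subset_union_right))
    omega
  obtain rfl : A = S \ R := by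
    rw [← hARS, Finset.union_sdiff_cancel_right hAR]
  rw [hARS] at hpc
  obtain ⟨-, pt1, pt2, pt3⟩ := pot_top X
  have hXle := Finset.card_le_univ X
  have hXpos := hX.card_pos
  simp only [Fintype.card_fin] at hXle
  have hX3 : X.card = 3 := by
    by_contra hX3
    have hX1 : X.card = 1 := by
      by_contra hX1
      have := pt2 (by omega)
      omega
    obtain ⟨i, rfl⟩ := Finset.card_eq_one.1 hX1
    obtain ⟨t1, -, -⟩ := pot_contr_tight (X := {i}) hL hAR (by rw [hARS]; omega)
    exact hφne ((const_of_tight hL t1 ha₁ h₁ hau₁).1.trans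
      (const_of_tight hL t1 ha₂ h₂ hau₂).1.symm)
  have pt := pt3 hX3
  obtain ⟨t1, t2, t3⟩ := pot_contr_tight (X := X) hL hAR (by rw [hARS]; omega)
  have hXu : ∀ i, i ∈ X := by
    have : X = Finset.univ := Finset.eq_univ_of_card X (by simpa using hX3)
    intro i; rw [this]; exact Finset.mem_univ i
  obtain ⟨hpL, -, h4 | hdec, -⟩ :=
    hgood.resolve_left (by omega)
  · rw [Finset.card_disjSum] at h4
    omega
  obtain ⟨B', hB', x, hx, y, hy, hxy, hcr, hpB⟩ := hdec.cross
  obtain ⟨B₁, hB₁, XB, -, rfl⟩ := exists_disjSum hB'.1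
  have hB₁R : Disjoint B₁ R := Finset.disjoint_of_subset_left hB₁ hAR
  have hB₁S : B₁ ⊆ S := hB₁.trans Finset.sdiff_subset
  have hpcB := pot_contr (X := XB) hL hB₁R
  have hcardR : 4 ≤ (B₁ ∪ R).card := hR4.trans (Finset.card_le_card Finset.subset_union_right)
  have hsubS : B₁ ∪ R ⊆ S := Finset.union_subset hB₁S hR.1
  -- if `B₁` is everything, the decomposition misses a triangle vertex
  have hall : B₁ ∪ R = S → B₁ = S \ R := fun e => by
    rw [← e, Finset.union_sdiff_cancel_right hB₁R]
  obtain ⟨-, q1, q2, q3⟩ := pot_top XB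
  have hXBle := Finset.card_le_univ XB
  simp only [Fintype.card_fin] at hXBle
  obtain c0 | c1 | c2 | c3 : XB.card = 0 ∨ XB.card = 1 ∨ XB.card = 2 ∨ XB.card = 3 := by omega
  · obtain rfl := Finset.card_eq_zero.1 c0
    have e := pot_disjSum_empty (L := L) (K := K) (T := B₁)
      fun a ha b hb => t2 a (hB₁ ha) b (hB₁ hb)
    have hc2 : 2 ≤ (B₁.disjSum (∅ : Finset (Fin 3))).card :=
      Finset.one_lt_card.2 ⟨x, hx, y, hy, hxy⟩
    simp only [Finset.card_disjSum, Finset.card_empty, add_zero] at hc2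
    have := hC1 B₁ (hB₁.trans_ssubset hAS) hc2
    omega
  · obtain ⟨i, rfl⟩ := Finset.card_eq_one.1 c1
    obtain ⟨j, k, hij, hik, hjk, hl⟩ := exists_other i
    have hjS : Sum.inr j ∈ (S \ R).disjSum X := Finset.inr_mem_disjSum.2 (hXu j)
    have hjB : Sum.inr j ∉ B₁.disjSum ({i} : Finset (Fin 3)) := fun e => by
      have := Finset.inr_mem_disjSum.1 e
      exact hij (Finset.mem_singleton.1 this).symm
    have hiB : Sum.inr i ∈ B₁.disjSum ({i} : Finset (Fin 3)) := by simp
    have hadj := t3 i (hXu i) j (hXu j) hij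
    -- the two ends of the separation are the triangle vertex `i` and some `y₁`
    obtain ⟨y₁, hy₁, hcr'⟩ : ∃ y₁ ∈ B₁, ∀ a ∈ B₁.disjSum ({i} : Finset (Fin 3)),
        ∀ b ∈ (S \ R).disjSum X, b ∉ B₁.disjSum ({i} : Finset (Fin 3)) → L.Adj a b →
          a = Sum.inr i ∨ a = Sum.inl y₁ := by
      have aux : ∀ z ∈ B₁.disjSum ({i} : Finset (Fin 3)), Sum.inr i ≠ z →
          ∃ y₁ ∈ B₁, z = Sum.inl y₁ := by
        rintro (z | l) hz hne'
        · exact ⟨z, Finset.inl_mem_disjSum.1 hz, rfl⟩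
        · have : l = i := by simpa using hz
          subst this
          exact absurd rfl hne'
      rcases hcr _ hiB _ hjS hjB hadj with e | e
      · obtain ⟨y₁, hy₁, rfl⟩ := aux y hy (e ▸ hxy)
        exact ⟨y₁, hy₁, fun a ha b hb hbn hab => e ▸ hcr a ha b hb hbn hab⟩
      · obtain ⟨x₁, hx₁, rfl⟩ := aux x hx (e ▸ hxy.symm)
        exact ⟨x₁, hx₁, fun a ha b hb hbn hab => (e ▸ hcr a ha b hb hbn hab).symm⟩
    have hy₁S := hB₁S hy₁
    have hy₁R : y₁ ∉ R := Finset.disjoint_left.1 hB₁R hy₁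
    have hp6 : pot K (B₁ ∪ R) ≤ 6 := by
      have := q1 c1
      omega
    by_cases hR₂ : B₁ ∪ R = S
    · have hB₁A := hall hR₂
      have hnb : ∀ p q, i ≠ p → (∀ l, l = i ∨ l = p ∨ l = q) →
          L.Adj (Sum.inl y₁) (Sum.inr p) := by
        intro p q hip hl
        have hpS : Sum.inr p ∈ (S \ R).disjSum X := Finset.inr_mem_disjSum.2 (hXu p)
        have hpB : Sum.inr p ∉ B₁.disjSum ({i} : Finset (Fin 3)) := fun e => by
          have := Finset.inr_mem_disjSum.1 e
          exact hip (Finset.mem_singleton.1 this).symm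
        have h3 := hcrit.three_le_dg hpS
        refine (mem_of_le_dg (R := (S \ R).disjSum X)
          (T := {Sum.inl y₁, Sum.inr i, Sum.inr q}) ?_ ?_ (Sum.inl y₁)
          (by simp)).2.symm
        · rintro (b | l) hb hab
          · have hbB : Sum.inl b ∈ B₁.disjSum ({i} : Finset (Fin 3)) := by
              rw [hB₁A]; exact Finset.inl_mem_disjSum.2 (Finset.inl_mem_disjSum.1 hb)
            rcases hcr' _ hbB _ hpS hpB hab.symm with e | e
            · simp at e
            · simp [e]
          · rcases hl l with rfl | rfl | rfl
            · simp
            · exact absurd hab L.irrefl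
            · simp
        · have : ({Sum.inl y₁, Sum.inr i, Sum.inr q} : Finset (U ⊕ Fin 3)).card ≤ 3 :=
            Finset.card_le_three
          omega
      obtain ⟨r, hr, hφr, hyr⟩ := hL (hnb j k hij hl)
      obtain ⟨r', hr', hφr', hyr'⟩ := hL (hnb k j hik fun l => by
        rcases hl l with e | e | e
        exacts [Or.inl e, Or.inr (Or.inr e), Or.inr (Or.inl e)])
      have hd2 := two_le_dg hr hr' (fun e => hjk (by rw [← hφr, ← hφr', e])) hyr hyr'
      have hpi := pot_insert (K := K) y₁ hy₁R
      have hS : insert y₁ R = S := by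
        by_contra hne'
        have := hC1 (insert y₁ R) (Finset.ssubset_iff_subset_ne.2
          ⟨Finset.insert_subset hy₁S hR.1, hne'⟩)
          (le_trans (by omega) (Finset.card_le_card (Finset.subset_insert _ _)))
        omega
      rw [← hm, ← hS, Finset.insert_sdiff_of_notMem _ hy₁R]
      simp
    · have hss : B₁ ∪ R ⊂ S := Finset.ssubset_iff_subset_ne.2 ⟨hsubS, hR₂⟩
      have hlt : (S \ (B₁ ∪ R)).card < m := by
        rw [← hm]
        apply Finset.card_lt_card
        refine Finset.ssubset_iff_subset_ne.2
          ⟨Finset.sdiff_subset_sdiff subset_rfl Finset.subset_union_right, fun e => ?_⟩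
        have : y₁ ∈ S \ (B₁ ∪ R) := by rw [e]; exact Finset.mem_sdiff.2 ⟨hy₁S, hy₁R⟩
        simp [hy₁] at this
      have h1 := ih _ hlt (B₁ ∪ R) rfl hss hcardR hp6
      obtain ⟨v, hv⟩ := Finset.card_eq_one.1 h1
      have hv' : v ∈ S \ (B₁ ∪ R) := by rw [hv]; simp
      simp only [Finset.mem_sdiff, Finset.mem_union, not_or] at hv'
      obtain ⟨hvS, hvB, hvR⟩ := hv'
      have hvA : v ∈ S \ R := Finset.mem_sdiff.2 ⟨hvS, hvR⟩
      have h3 := hcrit.three_le_dg (Finset.inl_mem_disjSum.2 hvA)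
      rw [dg_disjSum, t1 v hvA] at h3
      have h4 : dg (L.comap Sum.inl) v (S \ R) ≤ (({y₁} : Finset U)).card := by
        apply dg_le_of
        intro b hb hab
        by_cases hbB : b ∈ B₁
        · rcases hcr' (Sum.inl b) (Finset.inl_mem_disjSum.2 hbB) (Sum.inl v)
            (Finset.inl_mem_disjSum.2 hvA)
            (fun e => hvB (Finset.inl_mem_disjSum.1 e)) hab.symm with e | e
          · simp at e
          · simp [Sum.inl.inj e]
        · have : b ∈ S \ (B₁ ∪ R) := by
            simp only [Finset.mem_sdiff, Finset.mem_union, not_or]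
            exact ⟨(Finset.mem_sdiff.1 hb).1, hbB, (Finset.mem_sdiff.1 hb).2⟩
          rw [hv, Finset.mem_singleton] at this
          subst this
          exact absurd hab L.irrefl
      rw [Finset.card_singleton] at h4
      have hpi := pot_insert (K := K) v hvR
      have := hC1 (insert v R) (Finset.ssubset_iff_subset_ne.2
        ⟨Finset.insert_subset hvS hR.1, fun e => by
          have : y₁ ∈ insert v R := by rw [e]; exact hy₁S
          rcases Finset.mem_insert.1 this with rfl | h'
          · exact hvB hy₁
          · exact hy₁R h'⟩)
        (le_trans (by omega) (Finset.card_le_card (Finset.subset_insert _ _)))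
      push_cast at h4
      omega
  · have hp4 := q2 c2
    have hB₁A := hall (by
      by_contra hne'
      have := hC1 (B₁ ∪ R) (Finset.ssubset_iff_subset_ne.2 ⟨hsubS, hne'⟩) (by omega)
      omega)
    subst hB₁A
    obtain ⟨k, hk⟩ : ∃ k, k ∉ XB := by
      by_contra hno
      push Not at hno
      rw [Finset.eq_univ_iff_forall.2 hno] at c2
      simp at c2
    have hXBk : ∀ l, l ∈ XB ↔ l ≠ k := by
      have : XB = Finset.univ.erase k := by
        apply Finset.eq_of_subset_of_card_le
        · intro l hl
          exact Finset.mem_erase.2 ⟨fun e => hk (e ▸ hl), Finset.mem_univ _⟩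
        · rw [Finset.card_erase_of_mem (Finset.mem_univ k)]
          simp [c2]
      intro l; rw [this]; simp
    have hkS : Sum.inr k ∈ (S \ R).disjSum X := by simp [hXu]
    have e1 := pot_eq_of_notMem (K := L) hB'.1 hkS
      (fun e => (hXBk k).1 (Finset.inr_mem_disjSum.1 e) rfl) (by
        rintro (b | l) hz hne'
        · exact Finset.inl_mem_disjSum.2 (Finset.inl_mem_disjSum.1 hz)
        · exact Finset.inr_mem_disjSum.2 ((hXBk l).2 fun e => hne' (e ▸ rfl)))
    have e2 := hcrit.three_le_dg hkS
    omega
  · have hp3 := q3 c3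
    have hB₁A := hall (by
      by_contra hne'
      have := hC1 (B₁ ∪ R) (Finset.ssubset_iff_subset_ne.2 ⟨hsubS, hne'⟩) (by omega)
      omega)
    subst hB₁A
    have : XB = X := (Finset.eq_univ_of_card XB (by simpa using c3)).trans
      (Finset.eq_univ_of_card X (by simpa using hX3)).symm
    rw [this] at hB'
    exact (hB'.ne rfl).elim

/-- The neighbourhood of a vertex of degree three. -/
lemma third_nbr {v p q : U} (hd : dg K v S = 3) (hpq : p ≠ q) (hpS : p ∈ S) (hqS : q ∈ S)
    (hp : K.Adj v p) (hq : K.Adj v q) :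
    ∃ a ∈ S, a ≠ p ∧ a ≠ q ∧ K.Adj v a ∧ ∀ b ∈ S, K.Adj v b → b = p ∨ b = q ∨ b = a := by
  rw [dg_eq_card] at hd
  have hc : (S.filter (fun b => K.Adj v b)).card = 3 := by exact_mod_cast hd
  have h2 : (({p, q} : Finset U)).card = 2 := Finset.card_pair hpq
  obtain ⟨a, ha, hna⟩ := Finset.exists_mem_notMem_of_card_lt_card
    (s := {p, q}) (t := S.filter (fun b => K.Adj v b)) (by omega)
  simp only [Finset.mem_insert, Finset.mem_singleton, not_or] at hna
  obtain ⟨haS, hva⟩ := Finset.mem_filter.1 ha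
  refine ⟨a, haS, hna.1, hna.2, hva, fun b hb hvb => ?_⟩
  have heq : ({p, q, a} : Finset U) = S.filter (fun b => K.Adj v b) := by
    apply Finset.eq_of_subset_of_card_le
    · intro z hz
      simp only [Finset.mem_insert, Finset.mem_singleton] at hz
      rw [Finset.mem_filter]
      rcases hz with rfl | rfl | rfl
      · exact ⟨hpS, hp⟩
      · exact ⟨hqS, hq⟩
      · exact ⟨haS, hva⟩
    · rw [hc, Finset.card_eq_three.2 ⟨p, q, a, hpq, Ne.symm hna.1, Ne.symm hna.2, rfl⟩]
  have : b ∈ ({p, q, a} : Finset U) := by rw [heq]; exact Finset.mem_filter.2 ⟨hb, hvb⟩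
  simpa using this

lemma exists_two_colors : ∀ p q r : Fin 3, q ≠ r →
    ∃ k₁ k₂ : Fin 3, k₁ ≠ k₂ ∧ p ≠ k₁ ∧ q ≠ k₁ ∧ p ≠ k₂ ∧ r ≠ k₂ := by decide

/-- If proper subsets with at least two vertices have potential at least `6`, then no triangle
contains two vertices of degree three. -/
lemma no_triangle [Finite U] (hn : SmallGood n) (hSn : S.card = n) (h5 : 5 ≤ n) (h : Crit K S)
    (hC1 : ∀ T ⊂ S, 2 ≤ T.card → 6 ≤ pot K T) {x₁ x₂ x₃ : U} (h₁ : x₁ ∈ S) (h₂ : x₂ ∈ S)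
    (h₃ : x₃ ∈ S) (h12 : K.Adj x₁ x₂) (h13 : K.Adj x₁ x₃) (h23 : K.Adj x₂ x₃)
    (hd₁ : dg K x₁ S = 3) (hd₂ : dg K x₂ S = 3) : False := by
  obtain ⟨a, haS, ha2, ha3, h1a, hN1⟩ := third_nbr hd₁ h23.ne h₂ h₃ h12 h13
  obtain ⟨b, hbS, hb1, hb3, h2b, hN2⟩ := third_nbr hd₂ h13.ne h₁ h₃ h12.symm h23
  by_cases hab : a = b
  · subst hab
    have p1 := pot_insert (K := K) x₃ (A := {a}) (by simpa using ha3.symm)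
    have p2 := pot_insert (K := K) x₂ (A := {x₃, a}) (by
      simp [h23.ne, ha2.symm])
    have p3 := pot_insert (K := K) x₁ (A := {x₂, x₃, a}) (by
      simp [h12.ne, h13.ne, hb1.symm])
    have d1 := dg_nonneg (K := K) (B := {a}) x₃
    have d2 : 2 ≤ dg K x₂ {x₃, a} :=
      two_le_dg (r := x₃) (s := a) (by simp) (by simp) ha3.symm h23 h2b
    have d3 : 2 ≤ dg K x₁ {x₃, a} :=
      two_le_dg (r := x₃) (s := a) (by simp) (by simp) ha3.symm h13 h1a
    rw [dg_insert x₁ x₂ (by simp [h23.ne, ha2.symm]), if_pos h12] at p3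
    rw [pot_singleton] at p1
    have hsub : ({x₁, x₂, x₃, a} : Finset U) ⊆ S := by
      intro z hz
      simp only [Finset.mem_insert, Finset.mem_singleton] at hz
      rcases hz with rfl | rfl | rfl | rfl <;> assumption
    have hc : ({x₁, x₂, x₃, a} : Finset U).card ≤ 4 := Finset.card_le_four
    have := hC1 {x₁, x₂, x₃, a} (Finset.ssubset_iff_subset_ne.2 ⟨hsub, fun e => by
      rw [e] at hc; omega⟩) (Finset.one_lt_card.2 ⟨x₁, by simp, x₂, by simp, h12.ne⟩)
    omega
  · have hR : ∀ z ∈ S, z ≠ x₁ → z ≠ x₂ → z ∈ (S.erase x₁).erase x₂ := fun z hz e1 e2 =>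
      Finset.mem_erase.2 ⟨e2, Finset.mem_erase.2 ⟨e1, hz⟩⟩
    have hRss : S.erase x₁ ⊂ S := Finset.erase_ssubset h₁
    have hRsub : (S.erase x₁).erase x₂ ⊂ S := (Finset.erase_subset _ _).trans_ssubset hRss
    obtain ⟨c, hc'⟩ := col_addEdge (K := K) (R := (S.erase x₁).erase x₂) hn
      (hSn ▸ Finset.card_lt_card hRsub)
      (fun T hT h2 => hC1 T (hT.trans_ssubset hRsub) h2) a b
    have hc := hc'.of_addEdge
    have hcab := hc'.addEdge_ne (hR a haS h1a.ne' ha2) (hR b hbS hb1 h2b.ne') hab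
    obtain ⟨k₁, k₂, q1, q2, q3, q4, q5⟩ := exists_two_colors (c x₃) (c a) (c b) hcab
    have hc2 := hc.extend (v := x₂) (Finset.notMem_erase _ _) k₂ (fun z hz hz' => by
      obtain ⟨-, hz2⟩ := Finset.mem_erase.1 hz
      obtain ⟨hz1, hzS⟩ := Finset.mem_erase.1 hz2
      rcases hN2 z hzS hz' with rfl | rfl | rfl
      · exact absurd rfl hz1
      · exact q4
      · exact q5)
    rw [Finset.insert_erase (Finset.mem_erase.2 ⟨h12.ne', h₂⟩)] at hc2
    have hc1 := hc2.extend (v := x₁) (Finset.notMem_erase _ _) k₁ (fun z hz hz' => by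
      obtain ⟨hz1, hzS⟩ := Finset.mem_erase.1 hz
      rcases hN1 z hzS hz' with rfl | rfl | rfl
      · rw [Function.update_self]; exact q1.symm
      · rw [Function.update_of_ne h23.ne']; exact q2
      · rw [Function.update_of_ne ha2]; exact q3)
    rw [Finset.insert_erase h₁] at hc1
    exact h.1 ⟨_, hc1⟩

end CaseB

/-! ### Adjacent vertices of degree three, and discharging -/

section Discharging

variable {U : Type} {K : SimpleGraph U} {S : Finset U} {n : ℕ}

lemma pot_triangle_le {p q r : U} (hpq : K.Adj p q) (hpr : K.Adj p r) (hqr : K.Adj q r) :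
    pot K {p, q, r} ≤ 6 := by
  have p1 := pot_insert (K := K) q (A := {r}) (by simpa using hqr.ne)
  have p2 := pot_insert (K := K) p (A := {q, r}) (by simp [hpq.ne, hpr.ne])
  have d1 : 1 ≤ dg K q {r} := one_le_dg (r := r) (by simp) hqr
  have d2 : 2 ≤ dg K p {q, r} := two_le_dg (r := q) (s := r) (by simp) (by simp) hqr.ne hpq hpr
  rw [pot_singleton] at p1
  omega

/-- If `x` and `y` are adjacent vertices of degree three, then the two other neighbours `u`, `v`
of `x` are adjacent. Otherwise, deleting `x`, `y` and identifying `u` with `v` gives a graph that is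
not `3`-colourable; its critical subgraph is an extremal one and its emerald is found in `K`. -/
lemma other_nbrs_adj [Finite U] (hn : SmallGood n) (hSn : S.card = n) (h5 : 5 ≤ n) (h : Crit K S)
    (hC1 : ∀ T ⊂ S, 2 ≤ T.card → 6 ≤ pot K T) (hp : 2 ≤ pot K S) {x y u v : U} (hx : x ∈ S)
    (hy : y ∈ S) (hu : u ∈ S) (hv : v ∈ S) (hdy : dg K y S = 3) (hxy : K.Adj x y)
    (hxu : K.Adj x u) (hxv : K.Adj x v) (huy : u ≠ y) (hvy : v ≠ y) (huv : u ≠ v)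
    (hN : ∀ b ∈ S, K.Adj x b → b = y ∨ b = u ∨ b = v) : K.Adj u v := by
  by_contra hna
  have hyx : y ∈ S.erase x := Finset.mem_erase.2 ⟨hxy.ne', hy⟩
  have hmem : ∀ {z}, z ∈ (S.erase x).erase y ↔ z ≠ y ∧ z ≠ x ∧ z ∈ S := by
    intro z; rw [Finset.mem_erase, Finset.mem_erase]
  have hdy2 : dg K y ((S.erase x).erase y) = 2 := by
    have e := dg_insert (K := K) y x (Finset.notMem_erase x S)
    rw [Finset.insert_erase hx, if_pos hxy.symm] at e
    rw [dg_erase_self]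
    omega
  have hR : ({u, v} : Finset U) ⊆ (S.erase x).erase y := by
    intro z hz
    rw [Finset.mem_insert, Finset.mem_singleton] at hz
    rcases hz with rfl | rfl
    · exact hmem.2 ⟨huy, hxu.ne', hu⟩
    · exact hmem.2 ⟨hvy, hxv.ne', hv⟩
  have hRc : ({u, v} : Finset U).card = 2 := Finset.card_pair huv
  have hφ : Proper K {u, v} (fun _ => (0 : Fin 3)) := by
    intro a ha b hb hab
    exfalso
    simp only [Finset.mem_insert, Finset.mem_singleton] at ha hb
    rcases ha with rfl | rfl <;> rcases hb with rfl | rfl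
    · exact K.irrefl hab
    · exact hna hab
    · exact hna hab.symm
    · exact K.irrefl hab
  have hpR : pot K {u, v} = 10 := by
    have e := pot_insert (K := K) u (A := {v}) (by simpa using huv)
    have d : dg K u {v} = 0 := by simp [dg, hna]
    rw [pot_singleton, d] at e
    exact e
  obtain ⟨A, hA, X, L, hL, hcrit, hcard⟩ := exists_crit_contr hR hφ (by
    intro c hc hc0
    have hcu := hc0 u (by simp)
    have hcv := hc0 v (by simp)
    obtain ⟨k, hk⟩ := Proper.exists_color (K := K) (A := (S.erase x).erase y) (v := y) c hdy2.le
    have hc2 := hc.extend (Finset.notMem_erase _ _) k hk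
    rw [Finset.insert_erase hyx] at hc2
    have hl : ∀ k : Fin 3, ∃ l : Fin 3, (0 : Fin 3) ≠ l ∧ k ≠ l := by decide
    obtain ⟨l, hl0, hlk⟩ := hl k
    have hc3 := hc2.extend (Finset.notMem_erase x S) l (fun z hz hxz => by
      rcases hN z (Finset.mem_of_mem_erase hz) hxz with rfl | rfl | rfl
      · rw [Function.update_self]; exact hlk
      · rw [Function.update_of_ne huy, hcu]; exact hl0
      · rw [Function.update_of_ne hvy, hcv]; exact hl0)
    rw [Finset.insert_erase hx] at hc3
    exact h.1 ⟨_, hc3⟩)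
  have hS0 : ((S.erase x).erase y).card + 2 = n := by
    have e1 := Finset.card_erase_add_one hyx
    have e2 := Finset.card_erase_add_one hx
    omega
  have hgood := hn _ L _ (by omega) hcrit
  have hle := hgood.le_two
  have hAmem : ∀ a ∈ A, a ∈ S ∧ a ≠ x ∧ a ≠ y ∧ a ≠ u ∧ a ≠ v := by
    intro a ha
    obtain ⟨h1, h2⟩ := Finset.mem_sdiff.1 (hA ha)
    obtain ⟨h3, h4, h5⟩ := hmem.1 h1
    simp only [Finset.mem_insert, Finset.mem_singleton, not_or] at h2
    exact ⟨h5, h4, h3, h2⟩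
  have hAS : A ⊂ S := Finset.ssubset_iff_subset_ne.2
    ⟨fun a ha => (hAmem a ha).1, fun e => (hAmem x (e ▸ hx)).2.1 rfl⟩
  have hX := X_nonempty hL hcrit (h.col_of_ssubset hAS)
  -- the triangle vertices of colours that are not used on `u`, `v` have too few neighbours
  have hX0 : ∀ j ∈ X, j = 0 := by
    intro j hj
    by_contra hj0
    have h3 := hcrit.three_le_dg (Finset.inr_mem_disjSum.2 hj)
    have h2 : dg L (Sum.inr j) (A.disjSum X) ≤
        (((Finset.univ.erase j).map Function.Embedding.inr : Finset (U ⊕ Fin 3)).card : ℤ) := by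
      apply dg_le_of
      rintro (b | l) hb hab
      · obtain ⟨r, hr, e, -⟩ := hL hab
        exact absurd e.symm hj0
      · rw [Finset.mem_map]
        refine ⟨l, Finset.mem_erase.2 ⟨fun e => ?_, Finset.mem_univ _⟩, rfl⟩
        subst e
        exact L.irrefl hab
    rw [Finset.card_map, Finset.card_erase_of_mem (Finset.mem_univ j)] at h2
    simp at h2
    omega
  obtain rfl : X = {0} := Finset.eq_singleton_iff_nonempty_unique_mem.2 ⟨hX, hX0⟩
  have hpt := (pot_top {0}).2.1 rfl
  have hA3 : 3 ≤ A.card := by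
    have := hcrit.four_le_card
    rw [Finset.card_disjSum, Finset.card_singleton] at this
    omega
  have hAR : Disjoint A {u, v} := Finset.disjoint_of_subset_left hA Finset.sdiff_disjoint
  have hpc := pot_contr (X := {0}) hL hAR
  have hxAR : x ∉ A ∪ {u, v} := by
    simp only [Finset.mem_union, Finset.mem_insert, Finset.mem_singleton, not_or]
    exact ⟨fun e => (hAmem x e).2.1 rfl, hxu.ne, hxv.ne⟩
  have hyT : y ∉ insert x (A ∪ {u, v}) := by
    simp only [Finset.mem_union, Finset.mem_insert, Finset.mem_singleton, not_or]
    exact ⟨hxy.ne', fun e => (hAmem y e).2.2.1 rfl, huy.symm, hvy.symm⟩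
  have hdx : 2 ≤ dg K x (A ∪ {u, v}) := two_le_dg (r := u) (s := v) (by simp) (by simp) huv hxu hxv
  have hpi := pot_insert (K := K) x hxAR
  have hT : insert x (A ∪ {u, v}) ⊂ S := by
    refine Finset.ssubset_iff_subset_ne.2 ⟨?_, fun e => hyT (e ▸ hy)⟩
    intro z hz
    simp only [Finset.mem_union, Finset.mem_insert, Finset.mem_singleton] at hz
    rcases hz with rfl | hz | rfl | rfl
    · exact hx
    · exact hAS.1 hz
    · exact hu
    · exact hv
  have hT4 : 4 ≤ (insert x (A ∪ {u, v})).card := by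
    rw [Finset.card_insert_of_notMem hxAR]
    have := Finset.card_le_card (Finset.subset_union_left (s₁ := A) (s₂ := {u, v}))
    omega
  have hT6 := hC1 _ hT (by omega)
  have h1 := card_sdiff_eq_one hn hSn h hC1 hp _ _ rfl hT hT4 (by omega)
  have hSeq : insert y (insert x (A ∪ {u, v})) = S := by
    obtain ⟨w, hw⟩ := Finset.card_eq_one.1 h1
    have hyw : y ∈ S \ insert x (A ∪ {u, v}) := Finset.mem_sdiff.2 ⟨hy, hyT⟩
    rw [hw, Finset.mem_singleton] at hyw
    subst hyw
    rw [Finset.insert_eq, ← hw, Finset.sdiff_union_of_subset hT.1]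
  obtain ⟨t1, t2, -⟩ := pot_contr_tight (X := {0}) hL hAR (by omega)
  obtain ⟨-, -, -, hE⟩ := hgood.resolve_left (by omega)
  obtain ⟨T₁, hT₁, ⟨hc2, hp5⟩ | ⟨hc3, hcl, hdeg⟩⟩ := emerald_transfer hAR hE t1 t2
  · have := hC1 T₁ (hT₁.trans_ssubset hAS) hc2
    omega
  -- the emerald is a triangle of `K`, and only `y` can be a further neighbour of its vertices
  have hdS : ∀ a ∈ T₁, ¬ K.Adj y a → dg K a S = 3 := by
    intro a ha hya
    obtain ⟨haS, hax, hay, hau, hav⟩ := hAmem a (hT₁ ha)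
    have hax' : ¬ K.Adj a x := fun e => by
      rcases hN a haS e.symm with e | e | e
      exacts [hay e, hau e, hav e]
    rw [← hSeq, dg_insert a y hyT, dg_insert a x hxAR, if_neg (fun e => hya e.symm),
      if_neg hax', hdeg a ha]
    rfl
  have hT₁S : ∀ a ∈ T₁, a ∈ S := fun a ha => hAS.1 (hT₁ ha)
  obtain ⟨p, q, r, hpq, hpr, hqr, rfl⟩ := Finset.card_eq_three.1 hc3
  have hpm : p ∈ ({p, q, r} : Finset U) := by simp
  have hqm : q ∈ ({p, q, r} : Finset U) := by simp
  have hrm : r ∈ ({p, q, r} : Finset U) := by simp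
  have apq := hcl p hpm q hqm hpq
  have apr := hcl p hpm r hrm hpr
  have aqr := hcl q hqm r hrm hqr
  have htwo : ∀ a ∈ ({p, q, r} : Finset U), ∀ b ∈ ({p, q, r} : Finset U), a ≠ b →
      K.Adj y a → K.Adj y b → False := by
    intro a ha b hb hab hya hyb
    have hyn : y ∉ ({p, q, r} : Finset U) := fun e => (hAmem y (hT₁ e)).2.2.1 rfl
    have e1 := pot_insert (K := K) y hyn
    have e2 := two_le_dg ha hb hab hya hyb
    have e3 := pot_triangle_le apq apr aqr
    have := hC1 (insert y {p, q, r}) (Finset.ssubset_iff_subset_ne.2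
      ⟨Finset.insert_subset hy hT₁S, fun e => by
        have hx' : x ∈ insert y ({p, q, r} : Finset U) := by rw [e]; exact hx
        rcases Finset.mem_insert.1 hx' with e | e
        · exact hxy.ne e
        · exact (hAmem x (hT₁ e)).2.1 rfl⟩)
      (by rw [Finset.card_insert_of_notMem hyn, hc3]; norm_num)
    omega
  have hnt : ∀ a ∈ ({p, q, r} : Finset U), ∀ b ∈ ({p, q, r} : Finset U),
      ∀ c ∈ ({p, q, r} : Finset U), a ≠ b → a ≠ c → b ≠ c →
      ¬ K.Adj y a → ¬ K.Adj y b → False :=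
    fun a ha b hb c hc hab hac hbc hya hyb =>
      no_triangle hn hSn h5 h hC1 (hT₁S a ha) (hT₁S b hb) (hT₁S c hc) (hcl a ha b hb hab)
        (hcl a ha c hc hac) (hcl b hb c hc hbc) (hdS a ha hya) (hdS b hb hyb)
  by_cases yp : K.Adj y p <;> by_cases yq : K.Adj y q
  · exact htwo p hpm q hqm hpq yp yq
  · by_cases yr : K.Adj y r
    · exact htwo p hpm r hrm hpr yp yr
    · exact hnt q hqm r hrm p hpm hqr hpq.symm hpr.symm yq yr
  · by_cases yr : K.Adj y r
    · exact htwo q hqm r hrm hqr yq yr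
    · exact hnt p hpm r hrm q hqm hpr hpq hqr.symm yp yr
  · exact hnt p hpm q hqm r hrm hpq hpr hqr yp yq

/-- Every vertex of degree three has at most one neighbour of degree three. -/
lemma no_two_cubic_nbrs [Finite U] (hn : SmallGood n) (hSn : S.card = n) (h5 : 5 ≤ n)
    (h : Crit K S) (hC1 : ∀ T ⊂ S, 2 ≤ T.card → 6 ≤ pot K T) (hp : 2 ≤ pot K S) {x y z : U}
    (hx : x ∈ S) (hy : y ∈ S) (hz : z ∈ S) (hdx : dg K x S = 3) (hdy : dg K y S = 3)
    (hdz : dg K z S = 3) (hyz : y ≠ z) (hxy : K.Adj x y) (hxz : K.Adj x z) : False := by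
  obtain ⟨w, hw, hwy, hwz, hxw, hN⟩ := third_nbr hdx hyz hy hz hxy hxz
  have hzw := other_nbrs_adj hn hSn h5 h hC1 hp hx hy hz hw hdy hxy hxz hxw hyz.symm hwy
    hwz.symm hN
  exact no_triangle hn hSn h5 h hC1 hx hz hw hxz hxw hzw hdx hdz

/-- A critical graph on at least five vertices whose proper subsets with at least two vertices all
have potential at least `6` has potential at most `1`: otherwise every vertex of degree three has two neighbours of degree
at least four, which forces average degree at least `10 / 3` and hence potential at most `0`. -/
lemma pot_le_one [Finite U] (hn : SmallGood n) (hSn : S.card = n) (h5 : 5 ≤ n)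
    (h : Crit K S) (hC1 : ∀ T ⊂ S, 2 ≤ T.card → 6 ≤ pot K T) : pot K S ≤ 1 := by
  by_contra hp
  have hp2 : 2 ≤ pot K S := by omega
  set C := S.filter (fun v => dg K v S = 3) with hC
  set D := S.filter (fun v => ¬ dg K v S = 3) with hD
  have hdisj : Disjoint C D := Finset.disjoint_filter_filter_not _ _ _
  have hun : C ∪ D = S := Finset.filter_union_filter_not_eq _ _
  have hC1' : ∀ x ∈ C, dg K x C ≤ 1 := by
    intro x hx
    obtain ⟨hxS, hdx⟩ := Finset.mem_filter.1 hx
    by_contra hc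
    rw [dg_eq_card] at hc
    have hc' : 1 < (C.filter (fun b => K.Adj x b)).card := by omega
    obtain ⟨y, hy, z, hz, hyz⟩ := Finset.one_lt_card.1 hc'
    obtain ⟨hy1, hxy⟩ := Finset.mem_filter.1 hy
    obtain ⟨hz1, hxz⟩ := Finset.mem_filter.1 hz
    obtain ⟨hyS, hdy⟩ := Finset.mem_filter.1 hy1
    obtain ⟨hzS, hdz⟩ := Finset.mem_filter.1 hz1
    exact no_two_cubic_nbrs hn hSn h5 h hC1 hp2 hxS hyS hzS hdx hdy hdz hyz hxy hxz
  have hCD : ∀ x ∈ C, 2 ≤ dg K x D := by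
    intro x hx
    have e := dg_union (K := K) x hdisj
    rw [hun, (Finset.mem_filter.1 hx).2] at e
    have := hC1' x hx
    omega
  have hD4 : ∀ x ∈ D, 4 ≤ dg K x S := by
    intro x hx
    obtain ⟨hxS, hdx⟩ := Finset.mem_filter.1 hx
    have := h.three_le_dg hxS
    omega
  have b1 : (C.card : ℤ) * 2 ≤ bip K C D := by
    rw [bip_eq_sum_dg, ← nsmul_eq_mul]
    exact Finset.card_nsmul_le_sum _ _ _ hCD
  have b2 : bip K D C ≤ bip K D S := by
    rw [bip_eq_sum_dg, bip_eq_sum_dg]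
    exact Finset.sum_le_sum fun a _ => dg_mono a (Finset.filter_subset _ _) fun _ _ h => h
  have b3 : (D.card : ℤ) * 4 ≤ bip K D S := by
    rw [bip_eq_sum_dg, ← nsmul_eq_mul]
    exact Finset.card_nsmul_le_sum _ _ _ hD4
  have b4 : bip K C S = C.card * 3 := by
    rw [bip_eq_sum_dg, Finset.sum_congr rfl fun x hx => (Finset.mem_filter.1 hx).2,
      Finset.sum_const, nsmul_eq_mul]
  have b5 : bip K S S = bip K C S + bip K D S := by
    conv_lhs => rw [← hun]
    rw [bip_union_left hdisj, hun]
  have b6 := bip_self K S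
  rw [bip_comm] at b1
  have b7 : (S.card : ℤ) = C.card + D.card := by
    rw [← hun, Finset.card_union_of_disjoint hdisj]; push_cast; rfl
  unfold pot at hp2
  omega

/-- Every critical graph is `Good`, by induction on the number of its vertices. -/
theorem smallGood : ∀ n, SmallGood n := by
  intro n
  induction n with
  | zero => intro U _ K S hS; omega
  | succ n ih =>
    intro U _ K S hS h
    by_cases hlt : S.card < n
    · exact ih U K S hlt h
    have hSn : S.card = n := by omega
    have h4 := h.four_le_card
    by_cases h4' : S.card = 4
    · exact h.good_of_card_four h4'
    by_cases hp : pot K S ≤ 1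
    · exact Or.inl hp
    by_cases hex : ∃ R ⊂ S, 2 ≤ R.card ∧ pot K R ≤ 5
    · exact good_of_small_subset ih hSn h hex (by omega)
    · push Not at hex
      exact Or.inl (pot_le_one ih hSn (by omega) h fun T hT h2 => by
        have := hex T hT h2
        omega)

end Discharging

/-! ### From critical vertex sets to 4-critical graphs -/

lemma FourCritical.crit {V : Type} [Fintype V] {H : SimpleGraph V} (h : FourCritical H) :
    Crit H Finset.univ := by
  obtain ⟨hchi, hsub⟩ := h
  refine ⟨?_, ?_, ?_⟩
  · rintro ⟨c, hc⟩
    have : H.Colorable 3 := ⟨SimpleGraph.Coloring.mk c fun {a b} hab =>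
      hc a (Finset.mem_univ a) b (Finset.mem_univ b) hab⟩
    have h1 := this.chromaticNumber_le
    rw [hchi] at h1
    exact absurd h1 (by decide)
  · intro v _
    obtain ⟨c⟩ := hsub ((⊤ : H.Subgraph).deleteVerts {v}) (fun e => by
      have : v ∈ ((⊤ : H.Subgraph).deleteVerts {v}).verts := by rw [e]; trivial
      simp at this)
    refine ⟨fun a => if ha : a ≠ v then c ⟨a, by simpa using ha⟩ else 0, ?_⟩
    intro a ha b hb hab
    have ha' := Finset.ne_of_mem_erase ha
    have hb' := Finset.ne_of_mem_erase hb
    simp only [dif_pos ha', dif_pos hb']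
    apply c.valid
    simp [ha', hb', hab]
  · intro a _ b _ hab
    obtain ⟨c⟩ := hsub ((⊤ : H.Subgraph).deleteEdges {s(a, b)}) (fun e => by
      have : ¬ ((⊤ : H.Subgraph).deleteEdges {s(a, b)}).Adj a b := by simp
      rw [e] at this
      exact this hab)
    refine ⟨fun x => c ⟨x, by simp⟩, fun x _ y _ hxy => c.valid ?_⟩
    rw [SimpleGraph.deleteEdges_adj] at hxy
    rw [SimpleGraph.Subgraph.coe_adj, SimpleGraph.Subgraph.deleteEdges_adj]
    exact hxy

lemma card_edgeSet_eq_ed {V : Type} [Fintype V] (H : SimpleGraph V) :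
    (Nat.card H.edgeSet : ℤ) = ed H Finset.univ := by
  have h1 := H.sum_degrees_eq_twice_card_edges
  have h2 : bip H Finset.univ Finset.univ = 2 * (H.edgeFinset.card : ℤ) := by
    rw [bip_eq_sum_dg]
    have : ∀ v ∈ (Finset.univ : Finset V), dg H v Finset.univ = (H.degree v : ℤ) := by
      intro v _
      rw [dg_eq_card, ← SimpleGraph.card_neighborFinset_eq_degree,
        SimpleGraph.neighborFinset_eq_filter]
    rw [Finset.sum_congr rfl this]
    exact_mod_cast h1
  rw [bip_self] at h2
  rw [Nat.card_eq_fintype_card, ← SimpleGraph.edgeFinset_card]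
  omega

/-- Kostochka–Yancey: every 4-critical graph `H` satisfies `3|E(H)| ≥ 5|V(H)| − 2`, and
moreover `3|E(H)| ≥ 5|V(H)| − 1` if `H` is not 4-Ore. -/
theorem four_critical_density (V : Type) [Fintype V] [DecidableEq V]
    (H : SimpleGraph V) (hcrit : FourCritical H) :
    (5 * Fintype.card V - 2 : ℤ) ≤ 3 * Nat.card H.edgeSet ∧
    (¬ IsFourOre V H → (5 * Fintype.card V - 1 : ℤ) ≤ 3 * Nat.card H.edgeSet) := by
  have hg := smallGood _ V H Finset.univ (Nat.lt_succ_self _) hcrit.crit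
  have hle := hg.le_two
  have he := card_edgeSet_eq_ed H
  have hpot : pot H Finset.univ = 5 * (Fintype.card V : ℤ) - 3 * ed H Finset.univ := by
    rw [pot, Finset.card_univ]
  refine ⟨by omega, fun hno => ?_⟩
  rcases hg with h1 | ⟨-, hO, -, -⟩
  · omega
  · exact absurd (hO.fourOre (G := H)
      ⟨Equiv.subtypeUnivEquiv fun v => Finset.mem_univ v, by simp⟩) hno
end

section
/- Let G be a graph with the smallest number of vertices such that there exists a ℤ₃-boundary β for which (G, β) is flow-critical and |E(G)| > 3|V(G)| − 5. Then G is triangle-free, G is 5-edge-connected, and every edge-cut of G of size exactly 5 consists of the five edges incident with a single vertex of degree 5. -/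
/-!
The graph `G` is dense but minimal, so every flow-critical quotient with fewer vertices satisfies
`e ≤ 3k - 5`. The argument plays this bound against the edge count of `G`.

* Quotients (`exists_critical`). If a connected bordered graph has no nowhere-zero flow over some
  partition, take a coarsest such partition. Its quotient is flow-critical, and it is simple
  (`no_parallel`): two parallel edges can carry any total value in `ℤ₃`, so a flow on the partition
  merging their ends would extend to them.

* Sparsity (`sparse`). A proper vertex set `X` with at least two vertices spans at most `3|X| - 5`
  edges. If `G[X]` is disconnected, apply induction to the two sides. If it is connected, a flow of
  `G / X`, which exists by criticality, prescribes a boundary on `G[X]` that admits no nowhere-zero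
  flow. This gives a flow-critical quotient of `G[X]`, and induction bounds the edges in its parts.

* Cuts (`cut_bound`). Adding the sparsity bounds for the two sides of a cut to the cut size shows
  that a cut has at least `4` edges, and at least `6` if both sides have two or more vertices.

* Merging (`flow_after_merge`). After deleting two edges of `G` and identifying two vertices `x`,
  `y`, a nowhere-zero flow exists for every boundary with sum zero: otherwise a flow-critical
  quotient has a part of size at least two, and sparsity forces `|E(G)| ≤ 3|V| - 5`.

If `xyz` is a triangle, delete `xz`, `yz` and identify `x` with `y`. The resulting flow leaves
demands `(a, -a, 0)` at `x`, `y`, `z`, and every such demand is met by a nowhere-zero flow on the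
triangle. If `v` has exactly four neighbours `a, b, c, d`, choose nonzero values on `vc` and `vd`
with sum `β v`, delete these edges, and identify `v` with `a`. The nonzero value on `vb` then
continues along `va`. In both cases `G` would have a nowhere-zero flow, so `G` is triangle-free and
has no vertex of degree `4`. The cut bounds give the remaining claims.
-/

open scoped Classical

section FlowDefs

variable {V : Type} [Fintype V] [DecidableEq V] {A : Type} [AddCommGroup A]

/-- `β` is an `A`-boundary for `G`: its values sum to zero on every connected component. -/
def IsBoundary (G : SimpleGraph V) (β : V → A) : Prop :=
  ∀ x : V, ∑ v ∈ Finset.univ.filter (fun v => G.Reachable v x), β v = 0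

/-- `(G, β)` has a nowhere-zero flow: an antisymmetric function on ordered adjacent pairs,
never zero on edges, whose out-sum at each vertex `u` is `β u`. -/
def HasNZFlow (G : SimpleGraph V) (β : V → A) : Prop :=
  ∃ f : V → V → A,
    (∀ u v, G.Adj u v → f u v = - f v u) ∧
    (∀ u v, G.Adj u v → f u v ≠ 0) ∧
    (∀ u : V, ∑ v ∈ Finset.univ.filter (fun v => G.Adj u v), f u v = β u)

/-- `(G, β)/P` has a nowhere-zero flow, where the partition `P` of `V(G)` is given as a setoid:
an antisymmetric, nowhere-zero function on the ordered adjacent pairs lying in distinct parts,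
such that for every part, the sum of the values leaving the part is the sum of `β` on it. -/
def HasNZFlowQuot (G : SimpleGraph V) (β : V → A) (P : Setoid V) : Prop :=
  ∃ f : V → V → A,
    (∀ u v, G.Adj u v → ¬ P.r u v → f u v = - f v u) ∧
    (∀ u v, G.Adj u v → ¬ P.r u v → f u v ≠ 0) ∧
    (∀ x : V,
      ∑ u ∈ Finset.univ.filter (fun u => P.r u x),
        ∑ v ∈ Finset.univ.filter (fun v => G.Adj u v ∧ ¬ P.r u v), f u v
      = ∑ v ∈ Finset.univ.filter (fun v => P.r v x), β v)

/-- The partition `P` is `G`-connected: every part induces a connected subgraph of `G`. -/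
def PartsConnected (G : SimpleGraph V) (P : Setoid V) : Prop :=
  ∀ x : V, (G.induce {v | P.r v x}).Connected

/-- `(G, β)` is a flow-critical `A`-bordered graph: `β` is an `A`-boundary, `G` is connected,
`(G, β)` has no nowhere-zero flow, but `(G, β)/P` has one for every `G`-connected partition `P`
with at least one part of size at least two. -/
def FlowCritical (G : SimpleGraph V) (β : V → A) : Prop :=
  IsBoundary G β ∧ G.Connected ∧ ¬ HasNZFlow G β ∧
  ∀ P : Setoid V, PartsConnected G P → (∃ x y : V, x ≠ y ∧ P.r x y) →
    HasNZFlowQuot G β P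

end FlowDefs

/-- The number of edges of `G` with exactly one end in `X` (each such edge counted once,
as the ordered pair oriented from `X` outwards). -/
noncomputable def cutSize {V : Type} [Fintype V] (G : SimpleGraph V) (X : Finset V) : ℕ :=
  (Finset.univ.filter (fun p : V × V => G.Adj p.1 p.2 ∧ p.1 ∈ X ∧ p.2 ∉ X)).card

/-- `G` is `k`-edge-connected: at least two vertices, and every edge-cut has at least `k` edges. -/
def EdgeConnected {V : Type} [Fintype V] (G : SimpleGraph V) (k : ℕ) : Prop :=
  2 ≤ Fintype.card V ∧ ∀ X : Finset V, X.Nonempty → X ≠ Finset.univ → k ≤ cutSize G X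

open Finset

section FlowLemmas

set_option linter.unusedSectionVars false

variable {V : Type} [Fintype V] [DecidableEq V]

/-! ### Flows extended by zero, and elementary flow extensions -/

/-- Flows over a partition may be taken antisymmetric on all pairs, with support exactly the pairs
adjacent across parts; this turns the sums over neighbours into sums over all vertices. -/
lemma hasNZFlowQuot_iff (G : SimpleGraph V) (β : V → ZMod 3) (P : Setoid V) :
    HasNZFlowQuot G β P ↔ ∃ f : V → V → ZMod 3,
      (∀ u v, f u v = - f v u) ∧ (∀ u v, f u v ≠ 0 ↔ G.Adj u v ∧ ¬ P.r u v) ∧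
      ∀ x, ∑ u with P.r u x, ∑ v, f u v = ∑ u with P.r u x, β u := by
  constructor
  · rintro ⟨f, h1, h2, h3⟩
    refine ⟨fun u v => if G.Adj u v ∧ ¬ P.r u v then f u v else 0, ?_, ?_, ?_⟩
    · intro u v
      have hs : (G.Adj v u ∧ ¬ P.r v u) ↔ (G.Adj u v ∧ ¬ P.r u v) := by
        rw [G.adj_comm, show P.r v u ↔ P.r u v from ⟨P.symm, P.symm⟩]
      by_cases h : G.Adj u v ∧ ¬ P.r u v
      · simp only [hs, h, not_false_eq_true, and_self, if_true]
        exact h1 u v h.1 h.2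
      · simp only [hs, h, if_false, neg_zero]
    · intro u v
      by_cases h : G.Adj u v ∧ ¬ P.r u v
      · simp only [h, not_false_eq_true, and_self, if_true, iff_true]
        exact h2 u v h.1 h.2
      · simp only [h, if_false, ne_eq, not_true_eq_false]
    · intro x
      rw [← h3 x]
      refine sum_congr rfl fun u _ => ?_
      rw [sum_filter]
  · rintro ⟨f, h1, h2, h3⟩
    refine ⟨f, fun u v _ _ => h1 u v, fun u v h h' => (h2 u v).2 ⟨h, h'⟩, fun x => ?_⟩
    rw [← h3 x]
    refine sum_congr rfl fun u _ => ?_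
    exact sum_filter_of_ne fun v _ h => (h2 u v).1 h

lemma hasNZFlow_iff (G : SimpleGraph V) (β : V → ZMod 3) :
    HasNZFlow G β ↔ ∃ f : V → V → ZMod 3,
      (∀ u v, f u v = - f v u) ∧ (∀ u v, f u v ≠ 0 ↔ G.Adj u v) ∧
      ∀ x, ∑ v, f x v = β x := by
  constructor
  · rintro ⟨f, h1, h2, h3⟩
    refine ⟨fun u v => if G.Adj u v then f u v else 0, ?_, ?_, ?_⟩
    · intro u v
      have hs := G.adj_comm v u
      by_cases h : G.Adj u v
      · simp only [hs, h, if_true]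
        exact h1 u v h
      · simp only [hs, h, if_false, neg_zero]
    · intro u v
      by_cases h : G.Adj u v
      · simp only [h, if_true, iff_true]
        exact h2 u v h
      · simp only [h, if_false, ne_eq, not_true_eq_false]
    · intro x
      rw [← h3 x, sum_filter]
  · rintro ⟨f, h1, h2, h3⟩
    refine ⟨f, fun u v _ => h1 u v, fun u v h => (h2 u v).2 h, fun x => ?_⟩
    rw [← h3 x]
    exact sum_filter_of_ne fun v _ h => (h2 x v).1 h

lemma hasNZFlowQuot_bot (G : SimpleGraph V) (β : V → ZMod 3) (h : HasNZFlowQuot G β ⊥) :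
    HasNZFlow G β := by
  rw [hasNZFlowQuot_iff] at h
  rw [hasNZFlow_iff]
  obtain ⟨f, h1, h2, h3⟩ := h
  refine ⟨f, h1, fun u v => (h2 u v).trans ⟨fun h => h.1, fun h => ⟨h, ?_⟩⟩, fun x => ?_⟩
  · exact h.ne
  · have := h3 x
    have e : ∀ u, (⊥ : Setoid V).r u x ↔ u = x := fun u => Iff.rfl
    simp only [e] at this
    simpa [filter_eq'] using this

/-- The partition whose only part that may have more than one element is `X`. -/
def blockSetoid (X : Finset V) : Setoid V where
  r u v := u = v ∨ (u ∈ X ∧ v ∈ X)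
  iseqv := ⟨fun _ => Or.inl rfl, by rintro u v (h | h) <;> tauto,
    by rintro u v w (rfl | h) (rfl | h') <;> tauto⟩

lemma blockSetoid_r (X : Finset V) (u v : V) :
    (blockSetoid X).r u v ↔ u = v ∨ (u ∈ X ∧ v ∈ X) := Iff.rfl

/-- A nowhere-zero flow of `G - uv` extends to `G` by sending `s ≠ 0` along `uv`, once the boundary
is corrected at `u` and `v`. -/
lemma add_edge (G : SimpleGraph V) (β : V → ZMod 3) (u v : V) (huv : G.Adj u v) (s : ZMod 3)
    (hs : s ≠ 0)
    (h : HasNZFlow (G.deleteEdges {s(u, v)})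
      (fun p => β p - (if p = u then s else 0) + (if p = v then s else 0))) :
    HasNZFlow G β := by
  rw [hasNZFlow_iff] at h ⊢
  obtain ⟨f, h1, h2, h3⟩ := h
  have hne := huv.ne
  refine ⟨fun p q => f p q + (if p = u ∧ q = v then s else 0)
    - (if p = v ∧ q = u then s else 0), ?_, ?_, ?_⟩
  · intro p q
    dsimp only
    simp only [h1 p q, and_comm (a := q = u), and_comm (a := q = v)]
    ring
  · intro p q
    have h4 := h2 p q
    simp only [SimpleGraph.deleteEdges_adj, Set.mem_singleton_iff, Sym2.eq_iff] at h4
    by_cases c1 : p = u ∧ q = v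
    · obtain ⟨rfl, rfl⟩ := c1
      have : f p q = 0 := by
        by_contra h0
        exact (h4.1 h0).2 (Or.inl ⟨rfl, rfl⟩)
      simp [this, hne, hs, huv]
    · by_cases c2 : p = v ∧ q = u
      · obtain ⟨rfl, rfl⟩ := c2
        have : f p q = 0 := by
          by_contra h0
          exact (h4.1 h0).2 (Or.inr ⟨rfl, rfl⟩)
        simp [this, hne.symm, hs, huv.symm]
      · simp only [c1, c2, if_false, add_zero, sub_zero, h4, or_self, not_false_eq_true, and_true]
  · intro p
    rw [sum_sub_distrib, sum_add_distrib, h3 p]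
    simp only [ite_and]
    by_cases c1 : p = u
    · have : p ≠ v := c1 ▸ hne
      simp [c1, hne]
    · simp [c1]

/-- A flow with `x` and `y` identified is a flow of `H - xy` with some amount `a`, possibly `0`, left
to be sent from `x` to `y`. -/
lemma split_pair (H : SimpleGraph V) (β : V → ZMod 3) (x y : V) (hxy : x ≠ y)
    (h : HasNZFlowQuot H β (blockSetoid {x, y})) :
    ∃ a : ZMod 3, HasNZFlow (H.deleteEdges {s(x, y)})
      (fun p => β p - (if p = x then a else 0) + (if p = y then a else 0)) := by
  rw [hasNZFlowQuot_iff] at h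
  obtain ⟨f, h1, h2, h3⟩ := h
  refine ⟨β x - ∑ v, f x v, ?_⟩
  rw [hasNZFlow_iff]
  refine ⟨f, h1, fun u v => ?_, fun p => ?_⟩
  · rw [h2]
    simp only [SimpleGraph.deleteEdges_adj, Set.mem_singleton_iff, Sym2.eq_iff, blockSetoid_r,
      mem_insert, mem_singleton]
    refine and_congr_right fun h => not_congr ?_
    have hn := h.ne
    constructor
    · rintro (h0 | ⟨h0 | h0, h0' | h0'⟩)
      · exact absurd h0 hn
      · exact absurd (h0.trans h0'.symm) hn
      · exact Or.inl ⟨h0, h0'⟩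
      · exact Or.inr ⟨h0, h0'⟩
      · exact absurd (h0.trans h0'.symm) hn
    · rintro (⟨rfl, rfl⟩ | ⟨rfl, rfl⟩) <;> simp
  · have h4 := h3 p
    by_cases c1 : p = x
    · subst c1
      simp [hxy]
    · by_cases c2 : p = y
      · subst c2
        have e : (univ.filter fun u => (blockSetoid {x, p}).r u p) = {x, p} := by
          ext u; simp [blockSetoid_r]; tauto
        rw [e, sum_pair hxy, sum_pair hxy] at h4
        simp only [c1, if_true, if_false]
        linear_combination h4
      · have e : (univ.filter fun u => (blockSetoid {x, y}).r u p) = {p} := by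
          ext u; simp [blockSetoid_r, c1, c2]
        rw [e] at h4
        simpa [c1, c2] using h4

/-! ### Counting edges inside and across vertex sets -/

/-- The number of ordered pairs of adjacent vertices of `X`, that is, twice the number of edges
of `G` with both ends in `X`. -/
noncomputable def arcsIn (G : SimpleGraph V) (X : Finset V) : ℕ :=
  (univ.filter fun p : V × V => G.Adj p.1 p.2 ∧ p.1 ∈ X ∧ p.2 ∈ X).card

lemma arcsIn_univ (G : SimpleGraph V) : arcsIn G univ = 2 * Nat.card G.edgeSet := by
  rw [Nat.card_eq_fintype_card, ← SimpleGraph.edgeFinset_card, SimpleGraph.two_mul_card_edgeFinset]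
  simp [arcsIn]

lemma cutSize_compl (G : SimpleGraph V) (X : Finset V) : cutSize G Xᶜ = cutSize G X := by
  unfold cutSize
  refine card_bij (fun p _ => (p.2, p.1)) ?_ ?_ ?_
  · simp only [mem_filter, mem_univ, true_and, mem_compl, not_not]
    rintro p ⟨h1, h2, h3⟩
    exact ⟨h1.symm, h3, h2⟩
  · rintro p _ q _ h
    simp only [Prod.mk.injEq] at h
    exact Prod.ext h.2 h.1
  · simp only [mem_filter, mem_univ, true_and, mem_compl, not_not]
    rintro p ⟨h1, h2, h3⟩
    exact ⟨(p.2, p.1), ⟨h1.symm, h3, h2⟩, rfl⟩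

lemma arcsIn_split (G : SimpleGraph V) (X : Finset V) :
    arcsIn G univ = arcsIn G X + arcsIn G Xᶜ + 2 * cutSize G X := by
  have h : arcsIn G univ = arcsIn G X + arcsIn G Xᶜ + (cutSize G X + cutSize G Xᶜ) := by
    unfold arcsIn cutSize
    simp only [card_filter, ← sum_add_distrib]
    refine sum_congr rfl fun p _ => ?_
    by_cases h0 : G.Adj p.1 p.2 <;> by_cases h1 : p.1 ∈ X <;> by_cases h2 : p.2 ∈ X <;>
      simp [h0, h1, h2]
  rw [h, cutSize_compl]; ring

lemma exists_closed_set (H : SimpleGraph V) [Nonempty V] (h : ¬ H.Connected) :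
    ∃ X : Finset V, X.Nonempty ∧ Xᶜ.Nonempty ∧ ∀ u ∈ X, ∀ v ∉ X, ¬ H.Adj u v := by
  rw [SimpleGraph.connected_iff, not_and_or] at h
  rcases h with h | h
  · simp only [SimpleGraph.Preconnected, not_forall] at h
    obtain ⟨a, b, hab⟩ := h
    refine ⟨univ.filter fun v => H.Reachable a v, ⟨a, by simp⟩, ⟨b, by simpa using hab⟩, ?_⟩
    intro u hu v hv huv
    simp only [mem_filter, mem_univ, true_and] at hu hv
    exact hv (hu.trans huv.reachable)
  · exact absurd ‹Nonempty V› h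

/-! ### Flow-critical quotients -/

/-- On two or more edges, nowhere-zero `ℤ₃`-values can be chosen with any prescribed sum. -/
lemma exists_nz_sum {α : Type} (S : Finset α) (a b : α) (hab : a ≠ b) (ha : a ∈ S) (hb : b ∈ S)
    (r : ZMod 3) : ∃ k : α → ZMod 3, (∀ x, k x ≠ 0 ↔ x ∈ S) ∧ ∑ x ∈ S, k x = r := by
  classical
  -- all values are `1`, except that the values at `a` and `b` may be raised to `2`
  have key : ∀ c : ZMod 3, ∃ s t : ZMod 3, 1 + s ≠ 0 ∧ 1 + t ≠ 0 ∧ c + s + t = r := by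
    revert r; decide
  obtain ⟨s, t, hs, ht, hst⟩ := key (∑ x ∈ S, 1)
  refine ⟨fun x => if x ∈ S then 1 + (if x = a then s else 0) + (if x = b then t else 0) else 0,
    fun x => ?_, ?_⟩
  · by_cases hx : x ∈ S
    · simp only [hx, if_true, iff_true]
      by_cases h1 : x = a
      · simp [h1, hab, hs]
      · by_cases h2 : x = b
        · simp [h2, hab.symm, ht]
        · simp [h1, h2]
    · simp [hx]
  · rw [← hst, sum_congr rfl (g := fun x => 1 + (if x = a then s else 0) + (if x = b then t else 0))]
    · rw [sum_add_distrib, sum_add_distrib]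
      simp [ha, hb]
    · intro x hx; simp [hx]


/-- The partition obtained from `P` by merging the parts of `u` and `w`. -/
def mergeSetoid (P : Setoid V) (u w : V) : Setoid V where
  r p q := P.r p q ∨ ((P.r p u ∨ P.r p w) ∧ (P.r q u ∨ P.r q w))
  iseqv := by
    refine ⟨fun p => Or.inl (P.refl p), ?_, ?_⟩
    · rintro p q (h | ⟨h, h'⟩)
      · exact Or.inl (P.symm h)
      · exact Or.inr ⟨h', h⟩
    · have tr : ∀ p q, P.r p q → (P.r q u ∨ P.r q w) → (P.r p u ∨ P.r p w) :=
        fun p q h h' => h'.imp (P.trans h) (P.trans h)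
      rintro p q r (h | ⟨h, h'⟩) (k | ⟨k, k'⟩)
      · exact Or.inl (P.trans h k)
      · exact Or.inr ⟨tr _ _ h k, k'⟩
      · exact Or.inr ⟨h, tr _ _ (P.symm k) h'⟩
      · exact Or.inr ⟨h, k'⟩

lemma mergeSetoid_r (P : Setoid V) (u w p q : V) : (mergeSetoid P u w).r p q ↔
    P.r p q ∨ ((P.r p u ∨ P.r p w) ∧ (P.r q u ∨ P.r q w)) := Iff.rfl

/-- In a coarsest partition without a nowhere-zero flow, two distinct parts are joined by at most
one edge: two parallel edges can carry any total value, so a flow on the partition merging the two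
parts would extend to them. -/
lemma no_parallel (H : SimpleGraph V) (β : V → ZMod 3) (P : Setoid V)
    (hP : ¬ HasNZFlowQuot H β P) (hmax : ∀ Q, P < Q → HasNZFlowQuot H β Q)
    (u w u' w' : V) (h : H.Adj u w) (h' : H.Adj u' w') (hu : P.r u' u) (hw : P.r w' w)
    (huw : ¬ P.r u w) : u' = u ∧ w' = w := by
  by_contra hne
  apply hP
  have hlt : P < mergeSetoid P u w := by
    refine lt_of_le_of_ne (fun p q hpq => Or.inl hpq) fun he => huw ?_
    rw [he]
    exact Or.inr ⟨Or.inl (P.refl u), Or.inr (P.refl w)⟩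
  have hfl := hmax _ hlt
  rw [hasNZFlowQuot_iff] at hfl ⊢
  obtain ⟨f, h1, h2, h3⟩ := hfl
  have hab : (u', w') ≠ (u, w) := by simpa [Prod.ext_iff] using hne
  obtain ⟨k, hk, hks⟩ := exists_nz_sum
    (univ.filter fun p : V × V => H.Adj p.1 p.2 ∧ P.r p.1 u ∧ P.r p.2 w) (u', w') (u, w) hab
    (by simp only [mem_filter, mem_univ, true_and]; exact ⟨h', hu, hw⟩)
    (by simp only [mem_filter, mem_univ, true_and]; exact ⟨h, P.refl u, P.refl w⟩)
    (∑ p with P.r p u, β p - ∑ p with P.r p u, ∑ q, f p q)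
  set T := ∑ p with P.r p u, β p - ∑ p with P.r p u, ∑ q, f p q with hT
  simp only [mem_filter, mem_univ, true_and] at hk
  have hk0 : ∀ p q, ¬ (H.Adj p q ∧ P.r p u ∧ P.r q w) → k (p, q) = 0 := fun p q hpq => by
    by_contra h0
    exact hpq ((hk _).1 h0)
  have hnot : ∀ p, P.r p u → P.r p w → False := fun p a b => huw (P.trans (P.symm a) b)
  have htot : ∑ p, ∑ q, k (p, q) = T := by
    rw [← hks, ← Fintype.sum_prod_type (f := k)]
    symm
    refine sum_subset (subset_univ _) fun p _ hp => ?_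
    simp only [mem_filter, mem_univ, true_and] at hp
    exact hk0 _ _ hp
  have hK1 : ∀ x, ∑ p with P.r p x, ∑ q, k (p, q) = if P.r x u then T else 0 := by
    intro x
    split_ifs with hx
    · rw [← htot]
      refine sum_subset (subset_univ _) fun p _ hp => sum_eq_zero fun q _ => hk0 _ _ fun hh => ?_
      simp only [mem_filter, mem_univ, true_and] at hp
      exact hp (P.trans hh.2.1 (P.symm hx))
    · refine sum_eq_zero fun p hp => sum_eq_zero fun q _ => hk0 _ _ fun hh => ?_
      simp only [mem_filter, mem_univ, true_and] at hp
      exact hx (P.trans (P.symm hp) hh.2.1)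
  have hK2 : ∀ x, ∑ p with P.r p x, ∑ q, k (q, p) = if P.r x w then T else 0 := by
    intro x
    split_ifs with hx
    · rw [← htot, sum_comm (f := fun p q => k (p, q))]
      refine sum_subset (subset_univ _) fun p _ hp => sum_eq_zero fun q _ => hk0 _ _ fun hh => ?_
      simp only [mem_filter, mem_univ, true_and] at hp
      exact hp (P.trans hh.2.2 (P.symm hx))
    · refine sum_eq_zero fun p hp => sum_eq_zero fun q _ => hk0 _ _ fun hh => ?_
      simp only [mem_filter, mem_univ, true_and] at hp
      exact hx (P.trans (P.symm hp) hh.2.2)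
  refine ⟨fun p q => f p q + k (p, q) - k (q, p), ?_, ?_, ?_⟩
  · intro p q
    dsimp only
    rw [h1 p q]; ring
  · intro p q
    dsimp only
    by_cases c1 : P.r p u ∧ P.r q w
    · have e1 : f p q = 0 := by
        by_contra h0
        exact ((h2 p q).1 h0).2 (Or.inr ⟨Or.inl c1.1, Or.inr c1.2⟩)
      have e2 : k (q, p) = 0 := hk0 _ _ fun hh => hnot p c1.1 hh.2.2
      have e3 : ¬ P.r p q := fun hh => hnot q (P.trans (P.symm hh) c1.1) c1.2
      rw [e1, e2, zero_add, sub_zero, hk]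
      tauto
    · have e1 : k (p, q) = 0 := hk0 _ _ fun hh => c1 hh.2
      by_cases c2 : P.r q u ∧ P.r p w
      · have e2 : f p q = 0 := by
          by_contra h0
          exact ((h2 p q).1 h0).2 (Or.inr ⟨Or.inr c2.2, Or.inl c2.1⟩)
        have e3 : ¬ P.r p q := fun hh => hnot q c2.1 (P.trans (P.symm hh) c2.2)
        rw [e1, e2, zero_add, zero_sub, neg_ne_zero, hk, H.adj_comm q p]
        tauto
      · have e2 : k (q, p) = 0 := hk0 _ _ fun hh => c2 hh.2
        rw [e1, e2, add_zero, sub_zero, h2]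
        refine and_congr_right fun _ => not_congr ?_
        rw [mergeSetoid_r]
        constructor
        · rintro (hh | ⟨hp | hp, hq | hq⟩)
          · exact hh
          · exact P.trans hp (P.symm hq)
          · exact absurd ⟨hp, hq⟩ c1
          · exact absurd ⟨hq, hp⟩ c2
          · exact P.trans hp (P.symm hq)
        · exact Or.inl
  · intro x
    simp only [sum_sub_distrib, sum_add_distrib]
    rw [hK1, hK2]
    have hcl : ∀ x y, P.r x y → ∀ p, P.r p x ↔ P.r p y := fun x y hxy p =>
      ⟨fun hh => P.trans hh hxy, fun hh => P.trans hh (P.symm hxy)⟩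
    by_cases cu : P.r x u
    · have cw : ¬ P.r x w := fun hh => hnot x cu hh
      simp only [cu, cw, if_true, if_false, hcl x u cu, hT]
      ring
    · by_cases cw : P.r x w
      · simp only [cu, cw, if_true, if_false, hcl x w cw]
        have h4 := h3 u
        have hsp : ∀ F : V → ZMod 3, ∑ p with (mergeSetoid P u w).r p u, F p =
            ∑ p with P.r p u, F p + ∑ p with P.r p w, F p := by
          intro F
          simp only [sum_filter, ← sum_add_distrib]
          refine sum_congr rfl fun p _ => ?_
          by_cases a : P.r p u
          · have b : ¬ P.r p w := fun hh => hnot p a hh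
            have c : (mergeSetoid P u w).r p u := Or.inl a
            simp only [a, b, c, if_true, if_false, add_zero]
          · by_cases b : P.r p w
            · have c : (mergeSetoid P u w).r p u := Or.inr ⟨Or.inr b, Or.inl (P.refl u)⟩
              simp only [a, b, c, if_true, if_false, zero_add]
            · have c : ¬ (mergeSetoid P u w).r p u := by
                rw [mergeSetoid_r]; tauto
              simp only [a, b, c, if_false, zero_add]
        rw [hsp, hsp] at h4
        rw [hT]
        linear_combination h4
      · simp only [cu, cw, if_false, add_zero, sub_zero]
        have h4 := h3 x
        have hcx : ∀ p, (mergeSetoid P u w).r p x ↔ P.r p x := fun p => by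
          rw [mergeSetoid_r]; tauto
        simpa only [hcx] using h4

/-- A connected bordered graph with no nowhere-zero flow over a partition `P₀` has a flow-critical
quotient `K` over a coarser partition, given here by a surjection `π`, and `K` has as many edges as
`H` has between distinct parts. -/
lemma exists_critical (H : SimpleGraph V) (hc : H.Connected) (β : V → ZMod 3) (hβ : ∑ v, β v = 0)
    (P₀ : Setoid V) (h₀ : ¬ HasNZFlowQuot H β P₀) :
    ∃ (W : Type) (_ : Fintype W) (_ : DecidableEq W) (π : V → W) (K : SimpleGraph W)
      (β' : W → ZMod 3), Function.Surjective π ∧ (∀ u v, P₀.r u v → π u = π v) ∧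
      FlowCritical K β' ∧ arcsIn H univ = arcsIn K univ +
        (univ.filter fun p : V × V => H.Adj p.1 p.2 ∧ π p.1 = π p.2).card := by
  obtain ⟨P, hP0, hP, hmax⟩ : ∃ P, P₀ ≤ P ∧ ¬ HasNZFlowQuot H β P ∧
      ∀ Q, P < Q → HasNZFlowQuot H β Q := by
    have : Finite (Setoid V) := Finite.of_injective (fun P : Setoid V => P.r)
      fun P Q h => Setoid.ext fun a b => by
        have := congrFun (congrFun h a) b
        exact iff_of_eq this
    obtain ⟨P, hle, hP⟩ := (Set.toFinite {P | ¬ HasNZFlowQuot H β P}).exists_le_maximal h₀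
    refine ⟨P, hle, hP.prop, fun Q hQ => ?_⟩
    by_contra hQ'
    exact hP.not_gt hQ' hQ
  have hpar := no_parallel H β P hP hmax
  let W := Quotient P
  let π : V → W := Quotient.mk P
  have hπ : ∀ u v, π u = π v ↔ P.r u v := fun u v => Quotient.eq
  have hsurj : Function.Surjective π := Quotient.mk_surjective
  let : DecidableEq W := Classical.decEq W
  let : Fintype W := Fintype.ofSurjective π hsurj
  clear_value π
  let K : SimpleGraph W :=
    { Adj := fun a b => a ≠ b ∧ ∃ u v, π u = a ∧ π v = b ∧ H.Adj u v
      symm := ⟨fun a b ⟨h, u, v, hu, hv, huv⟩ => ⟨h.symm, v, u, hv, hu, huv.symm⟩⟩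
      loopless := ⟨fun a h => h.1 rfl⟩ }
  have hK : ∀ a b, K.Adj a b ↔ a ≠ b ∧ ∃ u v, π u = a ∧ π v = b ∧ H.Adj u v := fun a b => Iff.rfl
  clear_value K W
  let β' : W → ZMod 3 := fun a => ∑ u with π u = a, β u
  -- a sum over the pairs between two adjacent parts has a single term
  have hsingle : ∀ a b, K.Adj a b → ∃ u₀ v₀, π u₀ = a ∧ π v₀ = b ∧ H.Adj u₀ v₀ ∧
      (∀ F : V → V → ZMod 3, (∀ u v, F u v ≠ 0 → H.Adj u v) →
        ∑ u with π u = a, ∑ v with π v = b, F u v = F u₀ v₀) := by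
    intro a b hab
    obtain ⟨hne, u₀, v₀, hu, hv, huv⟩ := (hK a b).1 hab
    refine ⟨u₀, v₀, hu, hv, huv, fun F hF => ?_⟩
    have hn : ¬ P.r u₀ v₀ := by rw [← hπ, hu, hv]; exact hne
    have huniq : ∀ u v, π u = a → π v = b → F u v ≠ 0 → u = u₀ ∧ v = v₀ := fun u v hu' hv' h' =>
      hpar u₀ v₀ u v huv (hF _ _ h') ((hπ _ _).1 (hu'.trans hu.symm))
        ((hπ _ _).1 (hv'.trans hv.symm)) hn
    rw [sum_eq_single u₀, sum_eq_single v₀]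
    · intro v hv' hne'
      by_contra h0
      exact hne' (huniq u₀ v hu (mem_filter.1 hv').2 h0).2
    · intro h'; simp [hv] at h'
    · intro u hu' hne'
      refine sum_eq_zero fun v hv' => ?_
      by_contra h0
      exact hne' (huniq u v (mem_filter.1 hu').2 (mem_filter.1 hv').2 h0).1
    · intro h'; simp [hu] at h'
  have hfib : ∀ (F : V → V → ZMod 3) (a : W), ∑ b, ∑ u with π u = a, ∑ v with π v = b, F u v
      = ∑ u with π u = a, ∑ v, F u v := by
    intro F a
    rw [sum_comm]
    refine sum_congr rfl fun u _ => ?_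
    rw [sum_fiberwise]
  have hKc : K.Connected := by
    have := hc.nonempty
    have hne : Nonempty W := this.map π
    refine ⟨fun a b => ?_⟩
    obtain ⟨u, rfl⟩ := hsurj a
    obtain ⟨v, rfl⟩ := hsurj b
    obtain ⟨p⟩ := hc.preconnected u v
    induction p with
    | nil => exact SimpleGraph.Reachable.refl _
    | cons hadj _ ih =>
      rename_i x y z p
      refine SimpleGraph.Reachable.trans ?_ ih
      by_cases he : π x = π y
      · rw [he]
      · exact ((hK _ _).2 ⟨he, x, y, rfl, rfl, hadj⟩).reachable
  refine ⟨W, inferInstance, inferInstance, π, K, β', hsurj, fun u v h => (hπ _ _).2 (hP0 h),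
    ⟨?_, hKc, ?_, ?_⟩, ?_⟩
  · intro x
    have : ∀ v, K.Reachable v x := fun v => hKc.preconnected v x
    simp only [this, filter_true]
    show ∑ a, ∑ u with π u = a, β u = 0
    rw [sum_fiberwise, hβ]
  · intro hfl
    rw [hasNZFlow_iff] at hfl
    apply hP
    rw [hasNZFlowQuot_iff]
    obtain ⟨g, h1, h2, h3⟩ := hfl
    have hg0 : ∀ a, g a a = 0 := fun a => by
      by_contra h0
      exact ((h2 a a).1 h0).ne rfl
    refine ⟨fun u v => if H.Adj u v then g (π u) (π v) else 0, ?_, ?_, ?_⟩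
    · intro u v
      have := H.adj_comm v u
      by_cases hh : H.Adj u v
      · simp only [this, hh, if_true]; exact h1 _ _
      · simp only [this, hh, if_false, neg_zero]
    · intro u v
      by_cases hh : H.Adj u v
      · simp only [hh, if_true, true_and]
        rw [h2, hK, ← hπ]
        exact ⟨fun h => h.1, fun h => ⟨h, u, v, rfl, rfl, hh⟩⟩
      · simp only [hh, if_false, ne_eq, not_true_eq_false, false_and]
    · intro x
      simp only [← hπ]
      rw [← hfib]
      refine Eq.trans ?_ (h3 (π x))
      refine sum_congr rfl fun b _ => ?_
      by_cases hab : K.Adj (π x) b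
      · obtain ⟨u₀, v₀, hu, hv, huv, hF⟩ := hsingle _ _ hab
        rw [hF _ (fun u v h => by by_contra h'; simp [h'] at h), if_pos huv, hu, hv]
      · have : g (π x) b = 0 := by
          by_contra h0
          exact hab ((h2 _ _).1 h0)
        rw [this]
        refine sum_eq_zero fun u hu => sum_eq_zero fun v hv => ?_
        rw [(mem_filter.1 hu).2, (mem_filter.1 hv).2, this, ite_self]
  · rintro Q - ⟨a, b, hab, hQ⟩
    have hlt : P < Q.comap π := by
      refine lt_of_le_of_ne (fun u v huv => ?_) fun he => ?_
      · show Q.r (π u) (π v)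
        rw [(hπ u v).2 huv]
      · obtain ⟨u, rfl⟩ := hsurj a
        obtain ⟨v, rfl⟩ := hsurj b
        apply hab
        rw [hπ, he]
        exact hQ
    have hR : ∀ u v, (Q.comap π).r u v ↔ Q.r (π u) (π v) := fun u v => Iff.rfl
    have hfl := hmax _ hlt
    rw [hasNZFlowQuot_iff] at hfl ⊢
    obtain ⟨f, h1, h2, h3⟩ := hfl
    simp only [hR] at h2 h3
    refine ⟨fun a b => ∑ u with π u = a, ∑ v with π v = b, f u v, ?_, ?_, ?_⟩
    · intro a b
      dsimp only
      rw [sum_comm, ← sum_neg_distrib]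
      refine sum_congr rfl fun u _ => ?_
      rw [← sum_neg_distrib]
      exact sum_congr rfl fun v _ => h1 _ _
    · intro a b
      dsimp only
      by_cases hab : K.Adj a b
      · obtain ⟨u₀, v₀, hu, hv, huv, hF⟩ := hsingle _ _ hab
        rw [hF f (fun u v h => ((h2 u v).1 h).1), h2, hu, hv]
        simp only [hab, huv]
      · have : ∑ u with π u = a, ∑ v with π v = b, f u v = 0 := by
          refine sum_eq_zero fun u hu => sum_eq_zero fun v hv => ?_
          by_contra h0
          have h4 := (h2 u v).1 h0
          rw [(mem_filter.1 hu).2, (mem_filter.1 hv).2] at h4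
          refine hab ((hK a b).2 ⟨?_, u, v, (mem_filter.1 hu).2, (mem_filter.1 hv).2, h4.1⟩)
          rintro rfl
          exact h4.2 (Q.refl a)
        simp only [this, ne_eq, not_true_eq_false, hab, false_and]
    · intro x
      obtain ⟨x, rfl⟩ := hsurj x
      simp only [hfib]
      show _ = ∑ a with Q.r a (π x), ∑ u with π u = a, β u
      rw [sum_fiberwise_eq_sum_filter, sum_fiberwise_eq_sum_filter]
      simpa only [mem_filter, mem_univ, true_and] using h3 x
  · unfold arcsIn
    simp only [mem_univ, and_true]
    rw [← card_filter_add_card_filter_not (s := univ.filter fun p : V × V => H.Adj p.1 p.2)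
      (fun p => π p.1 = π p.2), add_comm, filter_filter, filter_filter]
    congr 1
    refine card_bij (fun p _ => (π p.1, π p.2)) ?_ ?_ ?_
    · simp only [mem_filter, mem_univ, true_and]
      rintro p ⟨hp, hp'⟩
      exact (hK _ _).2 ⟨hp', p.1, p.2, rfl, rfl, hp⟩
    · simp only [mem_filter, mem_univ, true_and, Prod.mk.injEq]
      rintro p ⟨hp, hp'⟩ q ⟨hq, hq'⟩ ⟨e1, e2⟩
      have := hpar q.1 q.2 p.1 p.2 hq hp ((hπ _ _).1 e1) ((hπ _ _).1 e2)
        (fun h => hq' ((hπ _ _).2 h))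
      exact Prod.ext this.1 this.2
    · simp only [mem_filter, mem_univ, true_and]
      rintro ⟨a, b⟩ hab
      obtain ⟨hne, u, v, rfl, rfl, huv⟩ := (hK a b).1 hab
      exact ⟨(u, v), ⟨huv, hne⟩, rfl⟩

/-! ### Sparsity of proper vertex sets -/

lemma cutSize_eq_zero (H : SimpleGraph V) (Y : Finset V) (h0 : ∀ u ∈ Y, ∀ v ∉ Y, ¬ H.Adj u v) :
    cutSize H Y = 0 := by
  unfold cutSize
  rw [card_eq_zero, eq_empty_iff_forall_notMem]
  intro p hp
  simp only [mem_filter, mem_univ, true_and] at hp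
  exact h0 _ hp.2.1 _ hp.2.2 hp.1

lemma arcsIn_mono {H G : SimpleGraph V} (h : H ≤ G) (X : Finset V) : arcsIn H X ≤ arcsIn G X := by
  refine card_le_card fun p hp => ?_
  simp only [mem_filter, mem_univ, true_and] at hp ⊢
  exact ⟨h hp.1, hp.2⟩

lemma arcsIn_singleton (G : SimpleGraph V) (x : V) : arcsIn G {x} = 0 := by
  refine card_eq_zero.2 (filter_eq_empty_iff.2 ?_)
  rintro ⟨a, b⟩ - ⟨h, ha, hb⟩
  rw [mem_singleton] at ha hb
  dsimp only at ha hb h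
  subst ha; subst hb
  exact h.ne rfl

lemma arcsIn_comap (G : SimpleGraph V) (X : Finset V) (A : Finset {v // v ∈ X}) :
    arcsIn (G.comap (Subtype.val : {v // v ∈ X} → V)) A
      = arcsIn G (A.map (Function.Embedding.subtype _)) := by
  unfold arcsIn
  refine card_bij (fun p _ => (p.1.1, p.2.1)) ?_ ?_ ?_
  · simp only [mem_filter, mem_univ, true_and, SimpleGraph.comap_adj]
    rintro p ⟨h, h1, h2⟩
    exact ⟨h, mem_map_of_mem _ h1, mem_map_of_mem _ h2⟩
  · rintro p _ q _ h
    simp only [Prod.mk.injEq] at h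
    exact Prod.ext (Subtype.ext h.1) (Subtype.ext h.2)
  · simp only [mem_filter, mem_univ, true_and, mem_map]
    rintro ⟨a, b⟩ ⟨h, ⟨u, hu, rfl⟩, ⟨v, hv, rfl⟩⟩
    exact ⟨(u, v), ⟨h, hu, hv⟩, rfl⟩

/-- Edge bounds for the fibres of `π` add up: if the fibre over `w` spans at most
`6 |fibre| - c w` arcs, there are at most `6 |V| - ∑ c` arcs inside fibres. -/
lemma count_parts {W : Type} [Fintype W] [DecidableEq W] (H : SimpleGraph V) (π : V → W)
    (c : W → ℕ)
    (hb : ∀ w, arcsIn H (univ.filter fun v => π v = w) + c w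
      ≤ 6 * (univ.filter fun v => π v = w).card) :
    (univ.filter fun p : V × V => H.Adj p.1 p.2 ∧ π p.1 = π p.2).card + ∑ w, c w
      ≤ 6 * Fintype.card V := by
  have e1 : (univ.filter fun p : V × V => H.Adj p.1 p.2 ∧ π p.1 = π p.2).card
      = ∑ w, arcsIn H (univ.filter fun v => π v = w) := by
    rw [card_eq_sum_card_fiberwise (f := fun p => π p.1) (t := univ) (fun _ _ => mem_univ _)]
    refine sum_congr rfl fun w _ => ?_
    unfold arcsIn
    rw [filter_filter]
    congr 1
    ext p
    simp only [mem_filter, mem_univ, true_and]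
    constructor
    · rintro ⟨⟨h1, h2⟩, h3⟩
      exact ⟨h1, h3, h2 ▸ h3⟩
    · rintro ⟨h1, h2, h3⟩
      exact ⟨⟨h1, h2.trans h3.symm⟩, h2⟩
  have e2 : Fintype.card V = ∑ w, (univ.filter fun v => π v = w).card :=
    card_eq_sum_card_fiberwise (fun _ _ => mem_univ _)
  rw [e1, e2, ← sum_add_distrib, mul_sum]
  exact sum_le_sum fun w _ => hb w

/-- Proper vertex sets `X` of a flow-critical graph span at most `3|X| - 5` edges (`3|X| - 3` if
`|X| = 1`), provided that smaller flow-critical graphs satisfy this bound. -/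
lemma sparse (G : SimpleGraph V) (β : V → ZMod 3) (hcrit : FlowCritical G β)
    (hsmall : ∀ (W : Type) [Fintype W] [DecidableEq W] (K : SimpleGraph W) (β' : W → ZMod 3),
      FlowCritical K β' → Fintype.card W < Fintype.card V →
      arcsIn K univ + 10 ≤ 6 * Fintype.card W) (X : Finset V) :
    X.Nonempty → X ≠ univ → arcsIn G X + 6 ≤ 6 * X.card ∧
      (2 ≤ X.card → arcsIn G X + 10 ≤ 6 * X.card) := by
  induction X using Finset.strongInduction with
  | H X ih =>
  intro hne hX
  have hpos := hne.card_pos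
  by_cases h2 : 2 ≤ X.card
  swap
  · have h1 : X.card = 1 := by omega
    obtain ⟨x, rfl⟩ := card_eq_one.1 h1
    rw [arcsIn_singleton]
    simp
  suffices hs : arcsIn G X + 10 ≤ 6 * X.card from ⟨by omega, fun _ => hs⟩
  have hlt : X.card < Fintype.card V := card_lt_univ_of_notMem
    (x := (not_forall.1 fun h => hX (eq_univ_iff_forall.2 h)).choose)
    (not_forall.1 fun h => hX (eq_univ_iff_forall.2 h)).choose_spec
  let ι : {v // v ∈ X} ↪ V := Function.Embedding.subtype _
  set H : SimpleGraph {v // v ∈ X} := G.comap (Subtype.val : {v // v ∈ X} → V) with hH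
  have hcardX : Fintype.card {v // v ∈ X} = X.card := Fintype.card_coe X
  have huniv : arcsIn H univ = arcsIn G X := by
    rw [hH, arcsIn_comap]
    congr 1
    ext v; simp
  have hpart : ∀ A : Finset {v // v ∈ X}, A.Nonempty → A ≠ univ →
      arcsIn H A + 6 ≤ 6 * A.card := by
    intro A hA hA'
    have hc : (A.map ι).card = A.card := card_map _
    have hss : A.map ι ⊂ X := by
      refine ssubset_of_subset_of_ne ?_ fun he => hA' ?_
      · intro v hv
        obtain ⟨u, _, rfl⟩ := mem_map.1 hv
        exact u.2
      · rw [← card_eq_iff_eq_univ, hcardX, ← hc, he]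
    have := (ih _ hss (hA.map) (fun he => hX (univ_subset_iff.1 (he ▸ hss.1)))).1
    rw [hc] at this
    rwa [hH, arcsIn_comap]
  have : Nonempty {v // v ∈ X} := hne.to_subtype
  by_cases hcon : H.Connected
  swap
  · obtain ⟨Y, hY, hYc, hY0⟩ := exists_closed_set H hcon
    have hcut : cutSize H Y = 0 := cutSize_eq_zero H Y hY0
    have e := arcsIn_split H Y
    have b1 := hpart Y hY fun he => by
      subst he
      rw [compl_univ] at hYc
      exact not_nonempty_empty hYc
    have b2 := hpart Yᶜ hYc fun he => by
      rw [compl_eq_univ_iff] at he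
      simp [he] at hY
    have hc := card_add_card_compl Y
    omega
  -- a flow of `G / X` prescribes the boundary `γ` that `G[X]` cannot satisfy
  obtain ⟨x₀, hx₀, x₁, hx₁, hx⟩ := one_lt_card.1 h2
  have hcr := hcrit.2.2.2 (blockSetoid X) (fun x => by
    by_cases hxX : x ∈ X
    · have e : {v | (blockSetoid X).r v x} = {v | v ∈ X} := by
        ext v
        simp only [Set.mem_ofPred_eq, blockSetoid_r]
        constructor
        · rintro (rfl | h)
          · exact hxX
          · exact h.1
        · exact fun h => Or.inr ⟨h, hxX⟩
      rw [e]
      exact hcon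
    · have e : {v | (blockSetoid X).r v x} = {x} := by
        ext v
        simp only [Set.mem_ofPred_eq, blockSetoid_r, Set.mem_singleton_iff]
        tauto
      rw [e]
      simp) ⟨x₀, x₁, hx, Or.inr ⟨hx₀, hx₁⟩⟩
  rw [hasNZFlowQuot_iff] at hcr
  obtain ⟨f, f1, f2, f3⟩ := hcr
  let γ : {v // v ∈ X} → ZMod 3 := fun v => β v - ∑ q, f v q
  have hγ : ∑ v, γ v = 0 := by
    have h4 := f3 x₀
    have e : (univ.filter fun v => (blockSetoid X).r v x₀) = X := by
      ext v
      simp only [mem_filter, mem_univ, true_and, blockSetoid_r]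
      constructor
      · rintro (rfl | h)
        · exact hx₀
        · exact h.1
      · exact fun h => Or.inr ⟨h, hx₀⟩
    rw [e] at h4
    show ∑ v : {v // v ∈ X}, (β v - ∑ q, f v q) = 0
    rw [sum_sub_distrib, univ_eq_attach, sum_attach X (fun v => β v),
      sum_attach X (fun v => ∑ q, f v q), h4, sub_self]
  have hno : ¬ HasNZFlow H γ := by
    intro hfl
    apply hcrit.2.2.1
    rw [hasNZFlow_iff] at hfl ⊢
    obtain ⟨g, g1, g2, g3⟩ := hfl
    let g' : V → V → ZMod 3 := fun u v =>
      if hu : u ∈ X then if hv : v ∈ X then g ⟨u, hu⟩ ⟨v, hv⟩ else 0 else 0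
    have hg' : ∀ u v (hu : u ∈ X) (hv : v ∈ X), g' u v = g ⟨u, hu⟩ ⟨v, hv⟩ := fun u v hu hv => by
      simp only [g', hu, hv, dif_pos]
    have hg0 : ∀ u v, ¬ (u ∈ X ∧ v ∈ X) → g' u v = 0 := fun u v h => by
      by_cases hu : u ∈ X
      · have hv : v ∉ X := fun hv => h ⟨hu, hv⟩
        simp only [g', hv, dif_neg, not_false_eq_true, dite_eq_ite, ite_self]
      · simp only [g', hu, dif_neg, not_false_eq_true]
    refine ⟨fun u v => f u v + g' u v, ?_, ?_, ?_⟩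
    · intro u v
      dsimp only
      by_cases h : u ∈ X ∧ v ∈ X
      · rw [hg' u v h.1 h.2, hg' v u h.2 h.1, f1 u v, g1]; ring
      · rw [hg0 u v h, hg0 v u (fun h' => h h'.symm), f1 u v]; ring
    · intro u v
      dsimp only
      by_cases h : u ∈ X ∧ v ∈ X
      · have : f u v = 0 := by
          by_contra h0
          exact ((f2 u v).1 h0).2 (Or.inr h)
        rw [hg' u v h.1 h.2, this, zero_add, g2]
        rfl
      · rw [hg0 u v h, add_zero, f2, blockSetoid_r]
        refine ⟨fun h => h.1, fun h' => ⟨h', ?_⟩⟩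
        rintro (rfl | h'')
        · exact h'.ne rfl
        · exact h h''
    · intro u
      rw [sum_add_distrib]
      by_cases hu : u ∈ X
      · have e : ∑ v, g' u v = γ ⟨u, hu⟩ := by
          rw [← g3 ⟨u, hu⟩, ← sum_subset (subset_univ X) (fun v _ hv => hg0 u v fun h => hv h.2),
            ← sum_attach X, univ_eq_attach]
          exact sum_congr rfl fun v _ => hg' u v hu v.2
        rw [e]
        show _ + (β u - ∑ q, f u q) = _
        ring
      · rw [sum_eq_zero fun v _ => hg0 u v fun h => hu h.1, add_zero]
        have h4 := f3 u
        have e : ∀ v, (blockSetoid X).r v u ↔ v = u := fun v => by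
          rw [blockSetoid_r]; tauto
        simpa [e, filter_eq'] using h4
  obtain ⟨W, _, _, π, K, β', hsurj, -, hKc, hcount⟩ :=
    exists_critical H hcon γ hγ ⊥ (fun h => hno (hasNZFlowQuot_bot H γ h))
  have hWle : Fintype.card W ≤ X.card := hcardX ▸ Fintype.card_le_of_surjective π hsurj
  have hKs := hsmall W K β' hKc (by omega)
  have hcp := count_parts H π (fun _ => 6) (fun w => by
    refine hpart _ ?_ fun he => ?_
    · obtain ⟨v, hv⟩ := hsurj w
      exact ⟨v, by simp [hv]⟩
    · have : ∀ w', w' = w := fun w' => by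
        obtain ⟨v, rfl⟩ := hsurj w'
        have hv := mem_univ v
        rw [← he] at hv
        exact (mem_filter.1 hv).2
      have : Fintype.card W ≤ 1 := Fintype.card_le_one_iff.2 fun a b => by rw [this a, this b]
      omega)
  rw [sum_const, card_univ, smul_eq_mul] at hcp
  omega

/-! ### Cuts and merging in a dense graph -/

lemma arcsIn_deleteEdges (G : SimpleGraph V) (a b c d : V) :
    arcsIn G univ ≤ arcsIn (G.deleteEdges {s(a, b), s(c, d)}) univ + 4 := by
  have h : (univ.filter fun p : V × V => G.Adj p.1 p.2 ∧ p.1 ∈ univ ∧ p.2 ∈ univ) ⊆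
      (univ.filter fun p : V × V => (G.deleteEdges {s(a, b), s(c, d)}).Adj p.1 p.2 ∧
        p.1 ∈ univ ∧ p.2 ∈ univ) ∪ {(a, b), (b, a), (c, d), (d, c)} := by
    rintro ⟨p, q⟩ hp
    simp only [mem_filter, mem_univ, and_true, true_and, mem_union, SimpleGraph.deleteEdges_adj,
      Set.mem_insert_iff, Set.mem_singleton_iff, Sym2.eq_iff, mem_insert, mem_singleton,
      Prod.mk.injEq] at hp ⊢
    tauto
  have h4 : ({(a, b), (b, a), (c, d), (d, c)} : Finset (V × V)).card ≤ 4 := card_le_four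
  have h5 := (card_le_card h).trans ((card_union_le _ _).trans (Nat.add_le_add_left h4 _))
  refine le_trans (le_of_eq ?_) (h5.trans (le_of_eq ?_))
  · unfold arcsIn
    congr
  · unfold arcsIn
    congr

/-- Cuts in a dense graph whose proper vertex sets are sparse have size at least `4`, and at least `6` if
both sides have two or more vertices. -/
lemma cut_bound (G : SimpleGraph V) (hdense : 6 * Fintype.card V ≤ arcsIn G univ + 8)
    (hn : 3 ≤ Fintype.card V)
    (hsp : ∀ X : Finset V, X.Nonempty → X ≠ univ → arcsIn G X + 6 ≤ 6 * X.card ∧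
      (2 ≤ X.card → arcsIn G X + 10 ≤ 6 * X.card))
    (X : Finset V) (hX : X.Nonempty) (hX' : X ≠ univ) :
    4 ≤ cutSize G X ∧ (2 ≤ X.card → 2 ≤ Xᶜ.card → 6 ≤ cutSize G X) := by
  have hXc : Xᶜ.Nonempty := by rwa [nonempty_iff_ne_empty, ne_eq, compl_eq_empty_iff]
  have hXc' : Xᶜ ≠ univ := by
    rw [ne_eq, compl_eq_univ_iff]; exact hX.ne_empty
  have b1 := hsp X hX hX'
  have b2 := hsp Xᶜ hXc hXc'
  have hs := arcsIn_split G X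
  have hc := card_add_card_compl X
  have p1 := hX.card_pos
  have p2 := hXc.card_pos
  omega

/-- Deleting two edges and identifying two vertices destroys every obstruction to a nowhere-zero
flow: a flow-critical quotient would be too small to account for the edges of `G`. -/
lemma flow_after_merge (G : SimpleGraph V) (hdense : 6 * Fintype.card V ≤ arcsIn G univ + 8)
    (hn : 3 ≤ Fintype.card V)
    (hsmall : ∀ (W : Type) [Fintype W] [DecidableEq W] (K : SimpleGraph W) (β' : W → ZMod 3),
      FlowCritical K β' → Fintype.card W < Fintype.card V →
      arcsIn K univ + 10 ≤ 6 * Fintype.card W)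
    (hsp : ∀ X : Finset V, X.Nonempty → X ≠ univ → arcsIn G X + 6 ≤ 6 * X.card ∧
      (2 ≤ X.card → arcsIn G X + 10 ≤ 6 * X.card))
    (x y : V) (hxy : x ≠ y) (H : SimpleGraph V) (hH : H ≤ G)
    (hHG : arcsIn G univ ≤ arcsIn H univ + 4) (β' : V → ZMod 3) (hβ' : ∑ v, β' v = 0) :
    HasNZFlowQuot H β' (blockSetoid {x, y}) := by
  by_contra hno
  have : Nonempty V := ⟨x⟩
  have hcon : H.Connected := by
    by_contra hcon
    obtain ⟨Y, hY, hYc, hY0⟩ := exists_closed_set H hcon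
    have hcut := cutSize_eq_zero H Y hY0
    have e := arcsIn_split H Y
    have e' := arcsIn_split G Y
    have m1 := arcsIn_mono hH Y
    have m2 := arcsIn_mono hH Yᶜ
    have := (cut_bound G hdense hn hsp Y hY fun he => by
      subst he
      rw [compl_univ] at hYc
      exact not_nonempty_empty hYc).1
    omega
  obtain ⟨W, _, _, π, K, γ, hsurj, hπ, hKc, hcount⟩ := exists_critical H hcon β' hβ' _ hno
  have hxyπ : π x = π y := hπ x y (Or.inr ⟨by simp, by simp⟩)
  have hWlt : Fintype.card W < Fintype.card V := by
    refine lt_of_le_of_ne (Fintype.card_le_of_surjective π hsurj) fun he => hxy ?_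
    have hb := (Fintype.bijective_iff_surjective_and_card π).2 ⟨hsurj, he.symm⟩
    exact hb.1 hxyπ
  have hKs := hsmall W K γ hKc hWlt
  have hcp := count_parts H π (fun w => 6 + if w = π x then 4 else 0) (fun w => by
    have hne : (univ.filter fun v => π v = w).Nonempty := by
      obtain ⟨v, hv⟩ := hsurj w
      exact ⟨v, by simp [hv]⟩
    have hnu : (univ.filter fun v => π v = w) ≠ univ := fun he => by
      have : ∀ w', w' = w := fun w' => by
        obtain ⟨v, rfl⟩ := hsurj w'
        have hv := mem_univ v
        rw [← he] at hv
        exact (mem_filter.1 hv).2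
      have : Fintype.card W ≤ 1 := Fintype.card_le_one_iff.2 fun a b => by rw [this a, this b]
      omega
    have b := hsp _ hne hnu
    have m := arcsIn_mono hH (univ.filter fun v => π v = w)
    by_cases hw : w = π x
    · have h2 : 2 ≤ (univ.filter fun v => π v = w).card :=
        one_lt_card.2 ⟨x, by simp [hw], y, by simp [hw, hxyπ], hxy⟩
      have := b.2 h2
      rw [if_pos hw]
      omega
    · rw [if_neg hw]
      omega)
  rw [sum_add_distrib, sum_const, card_univ, smul_eq_mul, sum_ite_eq' univ (π x) (fun _ => 4),
    if_pos (mem_univ _)] at hcp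
  omega

end FlowLemmas

/-! ### The smallest counterexample -/

/-- A vertex-minimal graph `G` admitting a `ℤ₃`-boundary `β` with `(G, β)` flow-critical and
`|E(G)| > 3|V(G)| − 5` is triangle-free, 5-edge-connected, and its only edge-cuts of size
exactly `5` are the sets of edges incident with a single vertex of degree `5`. -/
theorem smallest_counterexample_properties (V : Type) [Fintype V] [DecidableEq V]
    (G : SimpleGraph V) (β : V → ZMod 3)
    (hcrit : FlowCritical G β)
    (hdense : (3 * Fintype.card V - 5 : ℤ) < Nat.card G.edgeSet)
    (hmin : ∀ (V' : Type) [Fintype V'] [DecidableEq V'] (G' : SimpleGraph V') (β' : V' → ZMod 3),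
        FlowCritical G' β' → (3 * Fintype.card V' - 5 : ℤ) < Nat.card G'.edgeSet →
        Fintype.card V ≤ Fintype.card V') :
    G.CliqueFree 3 ∧ EdgeConnected G 5 ∧
    (∀ X : Finset V, X.Nonempty → X ≠ Finset.univ → cutSize G X = 5 →
      ∃ v : V, Nat.card (G.neighborSet v) = 5 ∧ (X = {v} ∨ X = Finset.univ \ {v})) := by
  have htot : ∑ v, β v = 0 := by
    obtain ⟨hb, hc, -, -⟩ := hcrit
    obtain ⟨x⟩ := hc.nonempty
    have h := hb x
    have : ∀ v, G.Reachable v x := fun v => hc.preconnected v x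
    simpa only [this, filter_true] using h
  have hsmall : ∀ (W : Type) [Fintype W] [DecidableEq W] (K : SimpleGraph W) (β' : W → ZMod 3),
      FlowCritical K β' → Fintype.card W < Fintype.card V →
      arcsIn K univ + 10 ≤ 6 * Fintype.card W := by
    intro W _ _ K β' hK hlt
    by_contra hcon
    rw [arcsIn_univ] at hcon
    have := hmin W K β' hK (by omega)
    omega
  have hd : 6 * Fintype.card V ≤ arcsIn G univ + 8 := by
    rw [arcsIn_univ]; omega
  have hn : 3 ≤ Fintype.card V := by
    have hle : arcsIn G univ ≤ Fintype.card V * Fintype.card V - Fintype.card V := by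
      rw [← card_univ, ← offDiag_card]
      refine card_le_card fun p hp => ?_
      simp only [mem_filter, mem_univ, true_and, and_true, mem_offDiag] at hp ⊢
      exact hp.ne
    have hpos : 0 < Fintype.card V := Fintype.card_pos_iff.2 hcrit.2.1.nonempty
    by_contra hlt
    have h12 : Fintype.card V = 1 ∨ Fintype.card V = 2 := by omega
    rcases h12 with h1 | h1
    · have hsub : Subsingleton V := Fintype.card_le_one_iff_subsingleton.1 h1.le
      have hna : ∀ u v, ¬ G.Adj u v := fun u v h => h.ne (Subsingleton.elim u v)
      refine hcrit.2.2.1 ⟨fun _ _ => 0, fun u v h => absurd h (hna u v),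
        fun u v h => absurd h (hna u v), fun u => ?_⟩
      rw [sum_const_zero, ← htot, Fintype.sum_subsingleton β u]
    · rw [h1] at hle hd
      omega
  have hsp := sparse G β hcrit hsmall
  have hmerge := flow_after_merge G hd hn hsmall hsp
  have hcutb := cut_bound G hd hn hsp
  have htri : G.CliqueFree 3 := by
    intro S hS
    obtain ⟨x, y, z, hxy, hxz, hyz, -⟩ := SimpleGraph.is3Clique_iff.1 hS
    have hfl := hmerge x y hxy.ne (G.deleteEdges {s(x, z), s(y, z)})
      (SimpleGraph.deleteEdges_le _) (arcsIn_deleteEdges G x z y z) β htot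
    obtain ⟨a, ha⟩ := split_pair _ _ _ _ hxy.ne hfl
    obtain ⟨s, t, hs, ht, hst⟩ : ∃ s t : ZMod 3, s ≠ 0 ∧ t ≠ 0 ∧ s + t = a := by
      clear ha; revert a; decide
    -- `s`, `t`, `-s` are the values on `xz`, `xy` and `yz`
    apply hcrit.2.2.1
    apply add_edge G β x z hxz s hs
    apply add_edge _ _ y z (by simp [hyz, hxy.ne', hyz.ne]) (-s) (neg_ne_zero.2 hs)
    apply add_edge _ _ x y (by simp [hxy, hxz.ne, hyz.ne, hxy.ne]) t ht
    rw [SimpleGraph.deleteEdges_deleteEdges, SimpleGraph.deleteEdges_deleteEdges]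
    rw [SimpleGraph.deleteEdges_deleteEdges, Set.insert_eq, Set.union_assoc] at ha
    convert ha using 1
    funext p
    have n1 := hxy.ne
    have n2 := hxz.ne
    have n3 := hyz.ne
    by_cases c1 : p = x
    · subst c1
      simp only [n1, n2, if_true, if_false, ← hst]
      ring
    · by_cases c2 : p = y
      · subst c2
        simp only [n3, c1, if_true, if_false, ← hst]
        ring
      · by_cases c3 : p = z
        · subst c3
          simp only [c1, c2, if_true, if_false]
          ring
        · simp only [c1, c2, c3, if_false]
          ring
  have hdeg : ∀ v, cutSize G {v} = (univ.filter fun q => G.Adj v q).card := by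
    intro v
    unfold cutSize
    refine card_bij (fun p _ => p.2) ?_ ?_ ?_
    · simp only [mem_filter, mem_univ, true_and, mem_singleton]
      rintro p ⟨h1, h2, h3⟩
      exact h2 ▸ h1
    · simp only [mem_filter, mem_univ, true_and, mem_singleton]
      rintro p ⟨h1, h2, h3⟩ q ⟨h1', h2', h3'⟩ h
      exact Prod.ext (h2.trans h2'.symm) h
    · simp only [mem_filter, mem_univ, true_and, mem_singleton]
      intro q hq
      exact ⟨(v, q), ⟨hq, rfl, hq.ne'⟩, rfl⟩
  have hno4 : ∀ v, cutSize G {v} ≠ 4 := by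
    intro v hv
    rw [hdeg] at hv
    obtain ⟨a, b, c, d, hab, hac, had, hbc, hbd, hcd, hN⟩ := card_eq_four.1 hv
    have hadj : ∀ q, G.Adj v q ↔ q = a ∨ q = b ∨ q = c ∨ q = d := by
      intro q
      have : q ∈ (univ.filter fun q => G.Adj v q) ↔ q ∈ ({a, b, c, d} : Finset V) := by rw [hN]
      simpa using this
    have va : G.Adj v a := (hadj a).2 (by simp)
    have vc : G.Adj v c := (hadj c).2 (by simp)
    have vd : G.Adj v d := (hadj d).2 (by simp)
    obtain ⟨s, t, hs, ht, hst⟩ : ∃ s t : ZMod 3, s ≠ 0 ∧ t ≠ 0 ∧ s + t = β v := by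
      generalize β v = r
      revert r; decide
    -- the values `s` on `vc` and `t` on `vd` absorb the boundary at `v`
    have hfl := hmerge v a va.ne (G.deleteEdges {s(v, c), s(v, d)})
      (SimpleGraph.deleteEdges_le _) (arcsIn_deleteEdges G v c v d)
      (fun p => (β p - (if p = v then s else 0) + (if p = c then s else 0))
        - (if p = v then t else 0) + (if p = d then t else 0)) (by
          simp [sum_add_distrib, sum_sub_distrib, htot])
    obtain ⟨r, hr⟩ := split_pair _ _ _ _ va.ne hfl
    have hr0 : r ≠ 0 := by
      -- `vb` is the only remaining edge at `v`, and its value is `-r`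
      rw [hasNZFlow_iff] at hr
      obtain ⟨f, f1, f2, f3⟩ := hr
      have f4 : ∀ q, f v q ≠ 0 ↔ q = b := by
        intro q
        rw [f2]
        simp only [SimpleGraph.deleteEdges_adj, Set.mem_insert_iff, Set.mem_singleton_iff,
          Sym2.eq_iff, true_and, hadj]
        constructor
        · rintro ⟨⟨h1, h2⟩, h3⟩
          tauto
        · rintro rfl
          have hvb : v ≠ q := ((hadj q).2 (by simp)).ne
          refine ⟨⟨by simp, ?_⟩, ?_⟩
          · rintro ((h | h) | (h | h))
            · exact hbc h
            · exact vc.ne h.1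
            · exact hbd h
            · exact vd.ne h.1
          · rintro (h | h)
            · exact hab h.symm
            · exact va.ne h.1
      have f5 := f3 v
      rw [sum_eq_single b (fun q _ hq => by by_contra h0; exact hq ((f4 q).1 h0))
        (fun h => absurd (mem_univ _) h)] at f5
      simp only [va.ne, vc.ne, vd.ne, if_true, if_false, ← hst] at f5
      have f6 := (f4 b).2 rfl
      rw [f5] at f6
      rintro rfl
      apply f6
      ring
    apply hcrit.2.2.1
    apply add_edge G β v c vc s hs
    apply add_edge _ _ v d (by simp [vd, hcd.symm, vc.ne]) t ht
    apply add_edge _ _ v a (by simp [va, hac, had, vc.ne, vd.ne]) r hr0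
    rw [SimpleGraph.deleteEdges_deleteEdges, SimpleGraph.deleteEdges_deleteEdges]
    rw [SimpleGraph.deleteEdges_deleteEdges, Set.insert_eq, Set.union_assoc] at hr
    exact hr
  have hsing : ∀ X : Finset V, X.Nonempty → X ≠ univ → cutSize G X ≤ 5 →
      ∃ v, (X = {v} ∨ X = univ \ {v}) ∧ cutSize G {v} = cutSize G X := by
    intro X hX hX' h5
    have hb := hcutb X hX hX'
    have hXc : Xᶜ.Nonempty := by rwa [nonempty_iff_ne_empty, ne_eq, compl_eq_empty_iff]
    have p1 := hX.card_pos
    have p2 := hXc.card_pos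
    by_cases h1 : X.card = 1
    · obtain ⟨v, rfl⟩ := card_eq_one.1 h1
      exact ⟨v, Or.inl rfl, rfl⟩
    · have h1' : Xᶜ.card = 1 := by omega
      obtain ⟨v, hv⟩ := card_eq_one.1 h1'
      refine ⟨v, Or.inr ?_, ?_⟩
      · rw [← compl_eq_univ_sdiff, ← hv, compl_compl]
      · rw [← hv, cutSize_compl]
  refine ⟨htri, ⟨by omega, fun X hX hX' => ?_⟩, fun X hX hX' h5 => ?_⟩
  · by_contra hlt
    have hb := (hcutb X hX hX').1
    obtain ⟨v, -, hv⟩ := hsing X hX hX' (by omega)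
    exact hno4 v (by omega)
  · obtain ⟨v, hv, hv5⟩ := hsing X hX hX' h5.le
    refine ⟨v, ?_, hv⟩
    rw [← h5, ← hv5, hdeg, Nat.card_eq_fintype_card, ← Set.toFinset_card]
    congr 1
    ext q
    simp
end
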